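/- arXiv:2406.06206 — 5 statements merged into one kernel-verified Lean document; each statement's English description precedes it below -/
import Mathlib

section
/- Let f : ℝ → ℝ be the function f(x) = arctan(eˣ). There exist absolute constants c, c′ > 0 such that for any finite nonempty sets X, Y ⊂ ℝ, writing S = f(X − Y) = { arctan(e^(x − y)) : x ∈ X, y ∈ Y } and n = min{|X|, |Y|}, one has |4S − 3S| ≥ c · n^(5/2) / (log n)^(c′) (for n ≥ 2), where 4S − 3S denotes the iterated sumset-difference { s₁ + s₂ + s₃ + s₄ − s₅ − s₆ − s₇ : sᵢ ∈ S }. -/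
open Pointwise

namespace GAE

noncomputable def f (x : ℝ) : ℝ := Real.arctan (Real.exp x)
noncomputable def g1 (x : ℝ) : ℝ := Real.exp x / (1 + Real.exp x ^ 2)
noncomputable def g2 (x : ℝ) : ℝ := Real.exp x * (1 - Real.exp x ^ 2) / (1 + Real.exp x ^ 2) ^ 2
noncomputable def g3 (x : ℝ) : ℝ :=
  Real.exp x * (1 - 6 * Real.exp x ^ 2 + Real.exp x ^ 4) / (1 + Real.exp x ^ 2) ^ 3

lemma hf (x : ℝ) : HasDerivAt f (g1 x) x := by
  have h := (Real.hasDerivAt_exp x).arctan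
  unfold f g1
  convert h using 1
  ring

lemma hg1 (x : ℝ) : HasDerivAt g1 (g2 x) x := by
  have h0 := Real.hasDerivAt_exp x
  have hne : (1 + Real.exp x ^ 2) ≠ 0 := by positivity
  have h := h0.div ((h0.pow 2).const_add 1) hne
  unfold g2
  refine HasDerivAt.congr_deriv (f := g1) h ?_
  simp
  field_simp
  ring

lemma hg2 (x : ℝ) : HasDerivAt g2 (g3 x) x := by
  have h0 := Real.hasDerivAt_exp x
  have hne : (1 + Real.exp x ^ 2) ^ 2 ≠ 0 := by positivity
  have h := (h0.mul ((h0.pow 2).const_sub 1)).div (((h0.pow 2).const_add 1).pow 2) hne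
  unfold g3
  refine HasDerivAt.congr_deriv (f := g2) h ?_
  simp
  field_simp
  ring

lemma g2_pos {x : ℝ} (hx : x < 0) : 0 < g2 x := by
  have h1 : Real.exp x < 1 := Real.exp_lt_one_iff.2 hx
  have h2 := Real.exp_pos x
  have : 0 < 1 - Real.exp x ^ 2 := by nlinarith
  unfold g2
  positivity

lemma ratio_anti {x y : ℝ} (hxy : x < y) (hy : y < 0) : g3 y / g2 y < g3 x / g2 x := by
  have key : ∀ z : ℝ, z < 0 → g3 z / g2 z =
      (1 - 6 * Real.exp z ^ 2 + (Real.exp z ^ 2) ^ 2) / (1 - (Real.exp z ^ 2) ^ 2) := by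
    intro z hz
    have h1 : Real.exp z < 1 := Real.exp_lt_one_iff.2 hz
    have h2 := Real.exp_pos z
    have h3 : 0 < 1 - Real.exp z ^ 2 := by nlinarith
    have h5 : 1 - (Real.exp z ^ 2) ^ 2 = (1 - Real.exp z ^ 2) * (1 + Real.exp z ^ 2) := by ring
    rw [h5]
    unfold g3 g2
    have h6 := h3.ne'
    field_simp
  rw [key x (hxy.trans hy), key y hy]
  have hex := Real.exp_pos x
  have hl := Real.exp_lt_exp.2 hxy
  have hl1 := Real.exp_lt_one_iff.2 hy
  have hp : 0 < Real.exp x ^ 2 := by positivity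
  have hpq : Real.exp x ^ 2 < Real.exp y ^ 2 := by nlinarith
  have hq1 : Real.exp y ^ 2 < 1 := by nlinarith
  generalize Real.exp x ^ 2 = p at *
  generalize Real.exp y ^ 2 = q at *
  have e1 : 0 < 1 - p ^ 2 := by nlinarith
  have e2 : 0 < 1 - q ^ 2 := by nlinarith
  rw [div_lt_div_iff₀ e2 e1]
  have : (1 - 6 * p + p ^ 2) * (1 - q ^ 2) - (1 - 6 * q + q ^ 2) * (1 - p ^ 2)
      = (q - p) * (6 - 2 * (p + q) + 6 * p * q) := by ring
  have h2 : 0 < (q - p) * (6 - 2 * (p + q) + 6 * p * q) := by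
    apply mul_pos (by linarith)
    nlinarith [mul_pos hp (hp.trans hpq)]
  linarith

lemma f_strictMono : StrictMono f := fun _ _ h => Real.arctan_strictMono (Real.exp_lt_exp.2 h)

lemma g1_lt {b a : ℝ} (hba : b < a) (ha : a ≤ 0) : g1 b < g1 a := by
  obtain ⟨c, hc, he⟩ := exists_hasDerivAt_eq_slope g1 g2 hba
    (fun x _ => (hg1 x).continuousAt.continuousWithinAt) (fun x _ => hg1 x)
  have := g2_pos (lt_of_lt_of_le hc.2 ha)
  rw [he] at this
  have := (div_pos_iff_of_pos_right (by linarith : 0 < a - b)).1 this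
  linarith

/-- first difference -/
noncomputable def D (b a x : ℝ) : ℝ := f (x + a) - f (x + b)
noncomputable def D1 (b a x : ℝ) : ℝ := g1 (x + a) - g1 (x + b)
noncomputable def D2 (b a x : ℝ) : ℝ := g2 (x + a) - g2 (x + b)

lemma hD (b a x : ℝ) : HasDerivAt (D b a) (D1 b a x) x :=
  ((hf (x + a)).comp_add_const x a).sub ((hf (x + b)).comp_add_const x b)
lemma hD1 (b a x : ℝ) : HasDerivAt (D1 b a) (D2 b a x) x :=
  ((hg1 (x + a)).comp_add_const x a).sub ((hg1 (x + b)).comp_add_const x b)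

lemma D1_pos {b a x : ℝ} (hba : b < a) (h : x + a ≤ 0) : 0 < D1 b a x :=
  sub_pos.2 (g1_lt (by linarith) h)

lemma D_lt {b a x y : ℝ} (hba : b < a) (hxy : x < y) (h : y + a ≤ 0) : D b a x < D b a y := by
  obtain ⟨c, hc, he⟩ := exists_hasDerivAt_eq_slope (D b a) (D1 b a) hxy
    (fun x _ => (hD b a x).continuousAt.continuousWithinAt) (fun x _ => hD b a x)
  have := D1_pos hba (by linarith [hc.2] : c + a ≤ 0)
  rw [he] at this
  have := (div_pos_iff_of_pos_right (by linarith : 0 < y - x)).1 this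
  linarith

lemma D2_eq {b a x : ℝ} (hba : b < a) (h : x + a ≤ 0) :
    ∃ η, x + b < η ∧ η < x + a ∧ D2 b a x = D1 b a x * (g3 η / g2 η) := by
  obtain ⟨c, hc, he⟩ := exists_ratio_hasDerivAt_eq_ratio_slope g1 g2
    (by linarith : x + b < x + a)
    (fun x _ => (hg1 x).continuousAt.continuousWithinAt) (fun x _ => hg1 x) g2 g3
    (fun x _ => (hg2 x).continuousAt.continuousWithinAt) (fun x _ => hg2 x)
  refine ⟨c, hc.1, hc.2, ?_⟩
  have := g2_pos (lt_of_lt_of_le hc.2 h)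
  unfold D2 D1
  field_simp
  linarith

lemma h_mono {b a b' a' : ℝ} (h1 : b < a) (h2 : a ≤ b') (h3 : b' < a') {x y : ℝ} (hxy : x < y)
    (hy : y + a' ≤ 0) : D1 b a x / D1 b' a' x < D1 b a y / D1 b' a' y := by
  obtain ⟨c, hc, he⟩ := exists_hasDerivAt_eq_slope (fun x => D1 b a x / D1 b' a' x)
    (fun x => (D2 b a x * D1 b' a' x - D1 b a x * D2 b' a' x) / D1 b' a' x ^ 2) hxy
    (fun z hz => ((hD1 b a z).div (hD1 b' a' z)
      (D1_pos h3 (by linarith [hz.2])).ne').continuousAt.continuousWithinAt)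
    (fun z hz => (hD1 b a z).div (hD1 b' a' z) (D1_pos h3 (by linarith [hz.2])).ne')
  have hc' := hc.2
  obtain ⟨η, e1, e2, e3⟩ := D2_eq h1 (by linarith : c + a ≤ 0)
  obtain ⟨η', e1', e2', e3'⟩ := D2_eq h3 (by linarith : c + a' ≤ 0)
  have hr := ratio_anti (by linarith : η < η') (by linarith)
  have p1 := D1_pos h1 (by linarith : c + a ≤ 0)
  have p2 := D1_pos h3 (by linarith : c + a' ≤ 0)
  have : 0 < (D2 b a c * D1 b' a' c - D1 b a c * D2 b' a' c) / D1 b' a' c ^ 2 := by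
    apply div_pos _ (by positivity)
    rw [e3, e3']
    have := mul_pos (mul_pos p1 p2) (sub_pos.2 hr)
    nlinarith
  rw [he] at this
  have := (div_pos_iff_of_pos_right (by linarith : 0 < y - x)).1 this
  linarith

lemma W_eq {b a b' a' x y : ℝ} (h2 : a ≤ b') (h3 : b' < a') (hxy : x < y)
    (hy : y + a' ≤ 0) : ∃ ξ, x < ξ ∧ ξ < y ∧
    D b a y - D b a x = (D b' a' y - D b' a' x) * (D1 b a ξ / D1 b' a' ξ) := by
  obtain ⟨c, hc, he⟩ := exists_ratio_hasDerivAt_eq_ratio_slope (D b a) (D1 b a) hxy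
    (fun x _ => (hD b a x).continuousAt.continuousWithinAt) (fun x _ => hD b a x)
    (D b' a') (D1 b' a')
    (fun x _ => (hD b' a' x).continuousAt.continuousWithinAt) (fun x _ => hD b' a' x)
  refine ⟨c, hc.1, hc.2, ?_⟩
  have := D1_pos h3 (by linarith [hc.2] : c + a' ≤ 0)
  field_simp
  linarith

lemma W_lt {b a b' a' x1 x2 x3 x4 : ℝ} (h1 : b < a) (h2 : a ≤ b') (h3 : b' < a')
    (h12 : x1 < x2) (h23 : x2 ≤ x3) (h34 : x3 < x4) (h : x4 + a' ≤ 0) :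
    (D b a x2 - D b a x1) * (D b' a' x4 - D b' a' x3) <
    (D b' a' x2 - D b' a' x1) * (D b a x4 - D b a x3) := by
  obtain ⟨ξ, e1, e2, e3⟩ := W_eq (b := b) h2 h3 h12 (by linarith)
  obtain ⟨ξ', e1', e2', e3'⟩ := W_eq (b := b) h2 h3 h34 h
  have hm := h_mono h1 h2 h3 (by linarith : ξ < ξ') (by linarith)
  have p1 := D_lt h3 h12 (by linarith)
  have p2 := D_lt h3 h34 h
  rw [e3, e3']
  have := mul_pos (mul_pos (sub_pos.2 p1) (sub_pos.2 p2)) (sub_pos.2 hm)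
  nlinarith

lemma kst (m q : ℕ) (hm : 16 ≤ m) (hq : 16 * q ^ 2 ≤ m) (w : ℕ → ℕ → ℝ)
    (hw : ∀ i i' j j', i < m → i' < m → j < m → j' < m → i ≠ i' → j ≠ j' →
      w i j * w i' j' ≠ w i j' * w i' j)
    (P : Finset (ℕ × ℕ)) (hP : P ⊆ Finset.range m ×ˢ Finset.range m) (V : Finset ℝ)
    (hV : V.card ≤ q) (hPV : ∀ p ∈ P, w p.1 p.2 ∈ V) : 2 * P.card ≤ m ^ 2 := by
  classical
  set R := Finset.range m with hR
  set d : ℕ → Finset ℕ := fun j => R.filter (fun i => (i, j) ∈ P) with hd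
  have hcardP : P.card = ∑ j ∈ R, (d j).card := by
    rw [Finset.card_eq_sum_card_fiberwise (f := Prod.snd) (t := R)]
    · refine Finset.sum_congr rfl fun j hj => ?_
      refine Finset.card_bij (fun p _ => p.1) ?_ ?_ ?_
      · rintro ⟨a, b⟩ hp
        have hp := Finset.mem_filter.1 hp
        have := Finset.mem_product.1 (hP hp.1)
        simp only at hp this
        simp only [hd, Finset.mem_filter]
        exact ⟨this.1, hp.2 ▸ hp.1⟩
      · rintro ⟨a, b⟩ hp ⟨a', b'⟩ hp' h
        have hp := (Finset.mem_filter.1 hp).2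
        have hp' := (Finset.mem_filter.1 hp').2
        simp_all
      · intro i hi
        simp only [hd, Finset.mem_filter] at hi
        exact ⟨(i, j), by simp [hi.2], rfl⟩
    · intro p hp
      exact (Finset.mem_product.1 (hP hp)).2
  set Q := (R ×ˢ R ×ˢ R).filter (fun t => t.1 ≠ t.2.1 ∧ (t.1, t.2.2) ∈ P ∧ (t.2.1, t.2.2) ∈ P)
    with hQ
  have hQcard : Q.card ≤ m ^ 2 * q ^ 2 := by
    have : Q.card ≤ ((R ×ˢ R) ×ˢ (V ×ˢ V)).card := by
      refine Finset.card_le_card_of_injOn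
        (fun t => ((t.1, t.2.1), (w t.1 t.2.2, w t.2.1 t.2.2))) ?_ ?_
      · rintro ⟨i, i', j⟩ ht
        simp only [hQ, Finset.coe_filter, Set.mem_ofPred_eq, Finset.mem_product] at ht
        obtain ⟨⟨h1, h2, h3⟩, h4, h5, h6⟩ := ht
        simp only [Finset.coe_product, Set.mem_prod, Finset.mem_coe]
        exact ⟨⟨h1, h2⟩, hPV _ h5, hPV _ h6⟩
      · rintro ⟨i, i', j⟩ ht ⟨k, k', l⟩ ht' h
        simp only [hQ, Finset.coe_filter, Set.mem_ofPred_eq, Finset.mem_product, hR,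
          Finset.mem_range] at ht ht'
        simp only [Prod.mk.injEq] at h
        obtain ⟨⟨rfl, rfl⟩, h1, h2⟩ := h
        by_cases hjl : j = l
        · rw [hjl]
        · exfalso
          apply hw i i' j l ht.1.1 ht.1.2.1 ht.1.2.2 ht'.1.2.2 ht.2.1 hjl
          rw [h1, h2]
    refine this.trans ?_
    simp only [Finset.card_product, hR, Finset.card_range]
    have : V.card * V.card ≤ q ^ 2 := by nlinarith
    nlinarith [Nat.mul_le_mul_left (m * m) this]
  have hsq : ∑ j ∈ R, (d j).card ^ 2 ≤ Q.card + P.card := by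
    have hsum : Q.card = ∑ j ∈ R, ((d j).offDiag).card := by
      rw [Finset.card_eq_sum_card_fiberwise (f := fun t : ℕ × ℕ × ℕ => t.2.2) (t := R)]
      · refine Finset.sum_congr rfl fun j hj => ?_
        refine Finset.card_bij (fun p _ => (p.1, p.2.1)) ?_ ?_ ?_
        · rintro ⟨i, i', j'⟩ hp
          simp only [hQ, Finset.mem_filter, Finset.mem_product] at hp
          obtain ⟨⟨⟨h1, h2, h3⟩, h4, h5, h6⟩, rfl⟩ := hp
          simp only [Finset.mem_offDiag, hd, Finset.mem_filter]
          exact ⟨⟨h1, h5⟩, ⟨h2, h6⟩, h4⟩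
        · rintro ⟨i, i', j'⟩ hp ⟨k, k', l⟩ hp' h
          have hp := (Finset.mem_filter.1 hp).2
          have hp' := (Finset.mem_filter.1 hp').2
          simp_all
        · rintro ⟨i, i'⟩ hi
          simp only [Finset.mem_offDiag, hd, Finset.mem_filter] at hi
          refine ⟨(i, i', j), ?_, rfl⟩
          simp only [hQ, Finset.mem_filter, Finset.mem_product]
          exact ⟨⟨⟨hi.1.1, hi.2.1.1, hj⟩, hi.2.2, hi.1.2, hi.2.1.2⟩, trivial⟩
      · intro p hp
        have hp : p ∈ Q := hp
        simp only [hQ, Finset.mem_filter, Finset.mem_product] at hp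
        exact hp.1.2.2
    rw [hsum, hcardP, ← Finset.sum_add_distrib]
    refine Finset.sum_le_sum fun j _ => ?_
    rw [Finset.offDiag_card]
    have : (d j).card ≤ (d j).card * (d j).card := Nat.le_mul_self _
    rw [pow_two]
    omega
  have hcs : P.card ^ 2 ≤ m * ∑ j ∈ R, (d j).card ^ 2 := by
    rw [hcardP]
    have := sq_sum_le_card_mul_sum_sq (s := R) (f := fun j => (d j).card)
    simpa [hR] using this
  by_contra hcon
  push Not at hcon
  have hfin : P.card ^ 2 ≤ m * (m ^ 2 * q ^ 2 + P.card) :=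
    hcs.trans (Nat.mul_le_mul_left _ (hsq.trans (by omega)))
  have h4 : 16 * P.card ^ 2 ≤ m ^ 4 + 16 * m * P.card := by
    have := Nat.mul_le_mul_left (m ^ 3) hq
    nlinarith
  have h5 : m ^ 4 ≤ 2 * m ^ 2 * P.card := by
    have := Nat.mul_le_mul_left (m ^ 2) hcon.le
    nlinarith
  have h6 : 16 * P.card ^ 2 ≤ (2 * m ^ 2 + 16 * m) * P.card := by nlinarith
  have hpos : 0 < P.card := by
    rcases Nat.eq_zero_or_pos P.card with h | h
    · rw [h] at hcon; omega
    · exact h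
  have h7 : 16 * P.card ≤ 2 * m ^ 2 + 16 * m := by
    apply Nat.le_of_mul_le_mul_right _ hpos
    nlinarith
  nlinarith

lemma squeeze (m q : ℕ) (hm : 16 ≤ m) (hq : 16 * q ^ 2 ≤ m) (F : ℕ → ℕ → ℝ) (w : ℕ → ℕ → ℝ)
    (hwF : ∀ i j, w i j = F (i + 1) (j + 1) + F i j - F i (j + 1) - F (i + 1) j)
    (hpos : ∀ i j, i < m → j < m → 0 < w i j)
    (hF : ∀ i j, i ≤ m → j < m → F i j < F i (j + 1))
    (hw : ∀ i i' j j', i < m → i' < m → j < m → j' < m → i ≠ i' → j ≠ j' →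
      w i j * w i' j' ≠ w i j' * w i' j)
    (S : Set ℝ) (hS : ∀ i j, i ≤ m → j ≤ m → F i j ∈ S)
    (hfin : (S + S + S + S - S - S - S).Finite) :
    q * m ^ 2 ≤ 2 * (S + S + S + S - S - S - S).ncard := by
  classical
  set R := Finset.range m ×ˢ Finset.range m with hR
  set W := R.image (fun p => w p.1 p.2) with hW
  set G := R.filter (fun p => q ≤ (W.filter (· ≤ w p.1 p.2)).card) with hG
  set P := R.filter (fun p => ¬ q ≤ (W.filter (· ≤ w p.1 p.2)).card) with hPdef
  have hRc : G.card + P.card = m ^ 2 := by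
    rw [hG, hPdef, Finset.card_filter_add_card_filter_not]
    simp [hR, pow_two]
  have hP : 2 * P.card ≤ m ^ 2 := by
    refine kst m q hm hq w hw P (Finset.filter_subset _ _) (P.image (fun p => w p.1 p.2)) ?_
      (fun p hp => Finset.mem_image_of_mem (fun p : ℕ × ℕ => w p.1 p.2) hp)
    rcases P.eq_empty_or_nonempty with h | h
    · simp [h]
    · obtain ⟨p, hp, hmax⟩ := Finset.exists_max_image P (fun p => w p.1 p.2) h
      have hp' := (Finset.mem_filter.1 hp).2
      push Not at hp'
      refine le_trans (Finset.card_le_card ?_) hp'.le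
      intro t ht
      obtain ⟨r, hr, rfl⟩ := Finset.mem_image.1 ht
      refine Finset.mem_filter.2 ⟨Finset.mem_image_of_mem (fun p : ℕ × ℕ => w p.1 p.2)
        (Finset.mem_filter.1 hr).1, hmax r hr⟩
  -- monotonicity
  have hDm : ∀ j, j < m → ∀ i i', i ≤ i' → i' ≤ m →
      F i (j + 1) - F i j ≤ F i' (j + 1) - F i' j := by
    intro j hj i i' hii
    induction i', hii using Nat.le_induction with
    | base => intro _; exact le_rfl
    | succ k hk ih =>
      intro hkm
      have h1 := ih (by omega)
      have h2 := hpos k j (by omega) hj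
      rw [hwF] at h2
      linarith
  have hFm : ∀ j j', j ≤ j' → j' ≤ m → F m j ≤ F m j' := by
    intro j j' hjj
    induction j', hjj using Nat.le_induction with
    | base => intro _; exact le_rfl
    | succ k hk ih =>
      intro hkm
      exact (ih (by omega)).trans (hF m k le_rfl (by omega)).le
  set Z := G.sigma (fun p => W.filter (· ≤ w p.1 p.2)) with hZ
  have hZc : G.card * q ≤ Z.card := by
    rw [hZ, Finset.card_sigma, ← smul_eq_mul]
    exact Finset.card_nsmul_le_sum _ _ _ (fun p hp => (Finset.mem_filter.1 hp).2)
  have hWpos : ∀ t ∈ W, 0 < t := by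
    intro t ht
    obtain ⟨r, hr, rfl⟩ := Finset.mem_image.1 ht
    have := Finset.mem_product.1 hr
    exact hpos _ _ (Finset.mem_range.1 this.1) (Finset.mem_range.1 this.2)
  have hmemZ : ∀ i j t, (⟨(i, j), t⟩ : (_ : ℕ × ℕ) × ℝ) ∈ Z →
      i < m ∧ j < m ∧ t ∈ W ∧ 0 < t ∧ t ≤ w i j := by
    intro i j t h
    obtain ⟨h1, h2⟩ := Finset.mem_sigma.1 h
    obtain ⟨h3, h4⟩ := Finset.mem_filter.1 h2
    have := Finset.mem_product.1 (Finset.mem_filter.1 h1).1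
    exact ⟨Finset.mem_range.1 this.1, Finset.mem_range.1 this.2, h3, hWpos _ h3, h4⟩
  have hle : Z.card ≤ (S + S + S + S - S - S - S).ncard := by
    rw [← Set.ncard_coe_finset]
    refine Set.ncard_le_ncard_of_injOn
      (fun z : (_ : ℕ × ℕ) × ℝ => F m z.1.2 + (F z.1.1 (z.1.2 + 1) - F z.1.1 z.1.2) + z.2)
      ?_ ?_ hfin
    · rintro ⟨⟨i, j⟩, t⟩ hz
      obtain ⟨hi, hj, ht, -, -⟩ := hmemZ i j t hz
      obtain ⟨⟨a, b⟩, hr, rfl⟩ := Finset.mem_image.1 ht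
      have hab := Finset.mem_product.1 hr
      have ha := Finset.mem_range.1 hab.1
      have hb := Finset.mem_range.1 hab.2
      simp only at ha hb
      have : F m j + (F i (j + 1) - F i j) + w a b =
        F m j + F i (j + 1) + F (a + 1) (b + 1) + F a b - F i j - F a (b + 1) - F (a + 1) b := by
        rw [hwF]; ring
      simp only [this]
      refine Set.sub_mem_sub (Set.sub_mem_sub (Set.sub_mem_sub (Set.add_mem_add (Set.add_mem_add
        (Set.add_mem_add ?_ ?_) ?_) ?_) ?_) ?_) ?_ <;> apply hS <;> omega
    · have hlow : ∀ i j t, (⟨(i, j), t⟩ : (_ : ℕ × ℕ) × ℝ) ∈ Z →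
          F m j < F m j + (F i (j + 1) - F i j) + t := by
        intro i j t h
        obtain ⟨hi, hj, -, ht, -⟩ := hmemZ i j t h
        have := hF i j hi.le hj
        linarith
      have hupp : ∀ i j t, (⟨(i, j), t⟩ : (_ : ℕ × ℕ) × ℝ) ∈ Z →
          F m j + (F i (j + 1) - F i j) + t ≤ F m j + (F (i + 1) (j + 1) - F (i + 1) j) := by
        intro i j t h
        obtain ⟨hi, hj, -, -, ht⟩ := hmemZ i j t h
        rw [hwF] at ht
        linarith
      have hj_ne : ∀ i j t i' j' t', (⟨(i, j), t⟩ : (_ : ℕ × ℕ) × ℝ) ∈ Z →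
          (⟨(i', j'), t'⟩ : (_ : ℕ × ℕ) × ℝ) ∈ Z → j < j' →
          F m j + (F i (j + 1) - F i j) + t < F m j' + (F i' (j' + 1) - F i' j') + t' := by
        intro i j t i' j' t' h h' hjj
        obtain ⟨hi, hj, -, -, -⟩ := hmemZ i j t h
        obtain ⟨hi', hj', -, -, -⟩ := hmemZ i' j' t' h'
        have h1 := hlow _ _ _ h'
        have h2 := hupp _ _ _ h
        have h3 := hDm j hj (i + 1) m (by omega) le_rfl
        have h4 := hFm (j + 1) j' hjj hj'.le
        linarith
      have hi_ne : ∀ i j t i' t', (⟨(i, j), t⟩ : (_ : ℕ × ℕ) × ℝ) ∈ Z →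
          (⟨(i', j), t'⟩ : (_ : ℕ × ℕ) × ℝ) ∈ Z → i < i' →
          F m j + (F i (j + 1) - F i j) + t < F m j + (F i' (j + 1) - F i' j) + t' := by
        intro i j t i' t' h h' hii
        obtain ⟨hi, hj, -, -, -⟩ := hmemZ i j t h
        obtain ⟨hi', -, -, ht', -⟩ := hmemZ i' j t' h'
        have h2 := hupp _ _ _ h
        have h3 := hDm j hj (i + 1) i' hii hi'.le
        linarith
      rintro ⟨⟨i, j⟩, t⟩ hz ⟨⟨i', j'⟩, t'⟩ hz' heq
      simp only at heq
      rcases lt_trichotomy j j' with hj | rfl | hj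
      · exact absurd heq (hj_ne _ _ _ _ _ _ hz hz' hj).ne
      · rcases lt_trichotomy i i' with hi | rfl | hi
        · exact absurd heq (hi_ne _ _ _ _ _ hz hz' hi).ne
        · have : t = t' := by linarith
          rw [this]
        · exact absurd heq (hi_ne _ _ _ _ _ hz' hz hi).ne'
      · exact absurd heq (hj_ne _ _ _ _ _ _ hz' hz hj).ne'
  have hG2 : m ^ 2 ≤ 2 * G.card := by omega
  calc q * m ^ 2 ≤ q * (2 * G.card) := Nat.mul_le_mul_left _ hG2
    _ = 2 * (G.card * q) := by ring
    _ ≤ _ := by omega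

/-- The main estimate when all sums are nonpositive. -/
lemma neg_case (m q : ℕ) (hm : 16 ≤ m) (hq : 16 * q ^ 2 ≤ m) (x v : ℕ → ℝ)
    (hx : ∀ i j, i < j → j ≤ m → x i < x j) (hv : ∀ i j, i < j → j ≤ m → v i < v j)
    (hneg : x m + v m ≤ 0)
    (S : Set ℝ) (hS : ∀ i j, i ≤ m → j ≤ m → f (x i + v j) ∈ S)
    (hfin : (S + S + S + S - S - S - S).Finite) :
    q * m ^ 2 ≤ 2 * (S + S + S + S - S - S - S).ncard := by
  have hxle : ∀ i j, i ≤ j → j ≤ m → x i ≤ x j := by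
    intro i j h hj
    rcases h.eq_or_lt with rfl | h
    · exact le_rfl
    · exact (hx i j h hj).le
  have hvle : ∀ i j, i ≤ j → j ≤ m → v i ≤ v j := by
    intro i j h hj
    rcases h.eq_or_lt with rfl | h
    · exact le_rfl
    · exact (hv i j h hj).le
  have hn : ∀ i j, i ≤ m → j ≤ m → x i + v j ≤ 0 := by
    intro i j hi hj
    linarith [hxle i m hi le_rfl, hvle j m hj le_rfl]
  have key : ∀ i i' j j', i < m → i' < m → j < m → j' < m → i < i' → j < j' →
      (D (v j) (v (j+1)) (x (i+1)) - D (v j) (v (j+1)) (x i)) *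
      (D (v j') (v (j'+1)) (x (i'+1)) - D (v j') (v (j'+1)) (x i')) <
      (D (v j') (v (j'+1)) (x (i+1)) - D (v j') (v (j'+1)) (x i)) *
      (D (v j) (v (j+1)) (x (i'+1)) - D (v j) (v (j+1)) (x i')) := by
    intro i i' j j' hi hi' hj hj' hii hjj
    exact W_lt (hv _ _ (by omega) (by omega)) (hvle _ _ (by omega) (by omega))
      (hv _ _ (by omega) (by omega)) (hx _ _ (by omega) (by omega))
      (hxle _ _ (by omega) (by omega)) (hx _ _ (by omega) (by omega)) (hn _ _ hi' hj')
  refine squeeze m q hm hq (fun i j => f (x i + v j))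
    (fun i j => D (v j) (v (j+1)) (x (i+1)) - D (v j) (v (j+1)) (x i)) ?_ ?_ ?_ ?_ S hS hfin
  · intro i j
    simp only [D]
    ring
  · intro i j hi hj
    exact sub_pos.2 (D_lt (hv _ _ (by omega) (by omega)) (hx _ _ (by omega) (by omega))
      (hn _ _ hi hj))
  · intro i j hi hj
    apply f_strictMono
    have := hv j (j + 1) (by omega) (by omega)
    linarith
  · intro i i' j j' hi hi' hj hj' hii hjj
    rcases lt_or_gt_of_ne hii with h1 | h1 <;> rcases lt_or_gt_of_ne hjj with h2 | h2
    · have := key i i' j j' hi hi' hj hj' h1 h2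
      exact this.ne
    · have := key i i' j' j hi hi' hj' hj h1 h2
      exact this.ne'
    · have := key i' i j j' hi' hi hj hj' h1 h2
      intro h; linarith
    · have := key i' i j' j hi' hi hj' hj h1 h2
      intro h; linarith

lemma f_neg (x : ℝ) : f (-x) = Real.pi / 2 - f x := by
  unfold f
  rw [Real.exp_neg, Real.arctan_inv_of_pos (Real.exp_pos x)]

/-- Both signs. -/
lemma seq_case (m q : ℕ) (hm : 16 ≤ m) (hq : 16 * q ^ 2 ≤ m) (x v : ℕ → ℝ)
    (hx : ∀ i j, i < j → j ≤ 2 * m → x i < x j) (hv : ∀ i j, i < j → j ≤ 2 * m → v i < v j)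
    (S : Set ℝ) (hS : ∀ i j, i ≤ 2 * m → j ≤ 2 * m → f (x i + v j) ∈ S)
    (hfin : (S + S + S + S - S - S - S).Finite) :
    q * m ^ 2 ≤ 2 * (S + S + S + S - S - S - S).ncard := by
  rcases le_total (x m + v m) 0 with h | h
  · exact neg_case m q hm hq x v (fun i j hij hj => hx i j hij (by omega))
      (fun i j hij hj => hv i j hij (by omega)) h S
      (fun i j hi hj => hS i j (by omega) (by omega)) hfin
  · set S' : Set ℝ := (fun s => Real.pi / 2 - s) '' S with hS'
    have himg : S' + S' + S' + S' - S' - S' - S' =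
        (fun s => Real.pi / 2 - s) '' (S + S + S + S - S - S - S) := by
      ext z
      simp only [hS', Set.mem_sub, Set.mem_add, Set.mem_image]
      constructor
      · rintro ⟨_, ⟨_, ⟨_, ⟨_, ⟨_, ⟨_, ⟨a, ha, rfl⟩, _, ⟨b, hb, rfl⟩, rfl⟩, _, ⟨c, hc, rfl⟩, rfl⟩,
          _, ⟨d, hd, rfl⟩, rfl⟩, _, ⟨e, he, rfl⟩, rfl⟩, _, ⟨g, hg, rfl⟩, rfl⟩, _, ⟨k, hk, rfl⟩, rfl⟩
        exact ⟨_, ⟨_, ⟨_, ⟨_, ⟨_, ⟨_, ⟨a, ha, b, hb, rfl⟩, c, hc, rfl⟩, d, hd, rfl⟩, e, he, rfl⟩,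
          g, hg, rfl⟩, k, hk, rfl⟩, by ring⟩
      · rintro ⟨_, ⟨_, ⟨_, ⟨_, ⟨_, ⟨_, ⟨a, ha, b, hb, rfl⟩, c, hc, rfl⟩, d, hd, rfl⟩, e, he, rfl⟩,
          g, hg, rfl⟩, k, hk, rfl⟩, rfl⟩
        exact ⟨_, ⟨_, ⟨_, ⟨_, ⟨_, ⟨_, ⟨a, ha, rfl⟩, _, ⟨b, hb, rfl⟩, rfl⟩, _, ⟨c, hc, rfl⟩, rfl⟩,
          _, ⟨d, hd, rfl⟩, rfl⟩, _, ⟨e, he, rfl⟩, rfl⟩, _, ⟨g, hg, rfl⟩, rfl⟩, _, ⟨k, hk, rfl⟩,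
          by ring⟩
    have hinj : Function.Injective (fun s : ℝ => Real.pi / 2 - s) := fun a b h => by
      simpa using h
    have hcard : (S' + S' + S' + S' - S' - S' - S').ncard =
        (S + S + S + S - S - S - S).ncard := by
      rw [himg, Set.ncard_image_of_injective _ hinj]
    rw [← hcard]
    have e2 : 2 * m - m = m := by omega
    refine neg_case m q hm hq (fun i => - x (2 * m - i)) (fun i => - v (2 * m - i))
      (fun i j hij hj => neg_lt_neg (hx _ _ (by omega) (by omega)))
      (fun i j hij hj => neg_lt_neg (hv _ _ (by omega) (by omega))) ?_ S' ?_ ?_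
    · simp only [e2]; linarith
    · intro i j hi hj
      refine ⟨f (x (2 * m - i) + v (2 * m - j)), hS _ _ (by omega) (by omega), ?_⟩
      simp only
      rw [← f_neg]
      congr 1
      ring
    · rw [himg]; exact hfin.image _

lemma exists_seq (X : Finset ℝ) (m : ℕ) (h : 2 * m + 1 ≤ X.card) :
    ∃ x : ℕ → ℝ, (∀ i j, i < j → j ≤ 2 * m → x i < x j) ∧ ∀ i, i ≤ 2 * m → x i ∈ X := by
  refine ⟨fun i => if hi : i < X.card then X.orderEmbOfFin rfl ⟨i, hi⟩ else 0, ?_, ?_⟩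
  · intro i j hij hj
    simp only
    rw [dif_pos (by omega), dif_pos (by omega)]
    exact (X.orderEmbOfFin rfl).strictMono hij
  · intro i hi
    simp only
    rw [dif_pos (by omega)]
    exact X.orderEmbOfFin_mem rfl _

lemma nat_bound (X Y : Finset ℝ) (m q : ℕ) (hX : 2 * m + 1 ≤ X.card) (hY : 2 * m + 1 ≤ Y.card)
    (hm : 16 ≤ m) (hq : 16 * q ^ 2 ≤ m) (S : Set ℝ) (hS : S = f '' ((X : Set ℝ) - (Y : Set ℝ)))
    (hfin : (S + S + S + S - S - S - S).Finite) :
    q * m ^ 2 ≤ 2 * (S + S + S + S - S - S - S).ncard := by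
  obtain ⟨x, hx, hxX⟩ := exists_seq X m hX
  obtain ⟨y, hy, hyY⟩ := exists_seq Y m hY
  refine seq_case m q hm hq x (fun j => - y (2 * m - j)) hx ?_ S ?_ hfin
  · intro i j hij hj
    exact neg_lt_neg (hy _ _ (by omega) (by omega))
  · intro i j hi hj
    rw [hS]
    refine ⟨x i - y (2 * m - j), Set.sub_mem_sub (hxX i hi) (hyY _ (by omega)), ?_⟩
    congr 1

end GAE

/-- For `f(x) = arctan(eˣ)` and finite nonempty `X, Y ⊆ ℝ`, writing `S = f(X - Y)` and
`n = min(|X|, |Y|)`, one has `|4S - 3S| ≥ c · n^(5/2) / (log n)^(c')` for `n ≥ 2`. -/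
theorem growth_arctan_exp :
    ∃ c : ℝ, 0 < c ∧ ∃ c' : ℝ, 0 < c' ∧
      ∀ X Y : Finset ℝ, X.Nonempty → Y.Nonempty → 2 ≤ min X.card Y.card →
        ∀ S : Set ℝ,
          S = (fun x => Real.arctan (Real.exp x)) '' ((X : Set ℝ) - (Y : Set ℝ)) →
          c * (min X.card Y.card : ℝ) ^ ((5 : ℝ) / 2) /
              Real.log (min X.card Y.card : ℝ) ^ c' ≤
            ((S + S + S + S - S - S - S).ncard : ℝ) := by
  refine ⟨1 / 200000, by norm_num, 1, one_pos, ?_⟩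
  intro X Y hX hY hn S hS
  have hSfin : S.Finite := by
    rw [hS]
    exact (X.finite_toSet.sub Y.finite_toSet).image _
  have hSne : S.Nonempty := by
    rw [hS]
    exact (Set.Nonempty.sub hX hY).image _
  have hfin : (S + S + S + S - S - S - S).Finite :=
    ((((((hSfin.add hSfin).add hSfin).add hSfin).sub hSfin).sub hSfin).sub hSfin)
  have hne : (S + S + S + S - S - S - S).Nonempty :=
    ((((((hSne.add hSne).add hSne).add hSne).sub hSne).sub hSne).sub hSne)
  have hone : 1 ≤ (S + S + S + S - S - S - S).ncard := (Set.ncard_pos hfin).2 hne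
  have hnb := fun m q a b c d => GAE.nat_bound X Y m q a b c d S hS hfin
  generalize (S + S + S + S - S - S - S).ncard = Z at *
  rw [← Nat.cast_min, Real.rpow_one]
  have hnX : min X.card Y.card ≤ X.card := min_le_left _ _
  have hnY : min X.card Y.card ≤ Y.card := min_le_right _ _
  generalize min X.card Y.card = n at *
  have hn2 : (2 : ℝ) ≤ n := by exact_mod_cast hn
  have hlog : (1 / 2 : ℝ) ≤ Real.log n := by
    have := Real.log_le_log (by norm_num) hn2
    linarith [Real.log_two_gt_d9]
  have hpow : (n : ℝ) ^ ((5 : ℝ) / 2) = (n : ℝ) ^ 2 * Real.sqrt n := by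
    rw [Real.sqrt_eq_rpow, ← Real.rpow_natCast, ← Real.rpow_add (by linarith)]
    norm_num
  have hmain : (n : ℝ) ^ 2 * Real.sqrt n ≤ 100000 * Z := by
    have hZ1 : (1 : ℝ) ≤ Z := by exact_mod_cast hone
    by_cases hsmall : n ≤ 40
    · have h40 : (n : ℝ) ≤ 40 := by exact_mod_cast hsmall
      have hs : Real.sqrt n ≤ 7 := by
        rw [Real.sqrt_le_left (by norm_num)]
        linarith
      have : (n : ℝ) ^ 2 ≤ 1600 := by nlinarith
      have := mul_le_mul this hs (Real.sqrt_nonneg _) (by norm_num)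
      linarith
    · push Not at hsmall
      obtain ⟨m, hm⟩ : ∃ m, m = (n - 1) / 2 := ⟨_, rfl⟩
      obtain ⟨q, hq⟩ : ∃ q, q = Nat.sqrt (m / 16) := ⟨_, rfl⟩
      have hq1 : q * q ≤ m / 16 := hq ▸ Nat.sqrt_le _
      have hq2 : m / 16 < (q + 1) * (q + 1) := hq ▸ Nat.lt_succ_sqrt _
      have hm16 : 16 ≤ m := by omega
      have hb := hnb m q (by omega) (by omega) hm16 (by rw [pow_two]; omega)
      have hqpos : 1 ≤ q := by
        by_contra h
        have : q = 0 := by omega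
        subst this
        omega
      have hn4 : n ≤ 4 * m := by omega
      have hm64 : m ≤ 64 * (q * q) := by
        have h1 : (q + 1) * (q + 1) ≤ 4 * (q * q) := by nlinarith
        omega
      have hs : Real.sqrt n ≤ 16 * q := by
        rw [Real.sqrt_le_left (by positivity)]
        have : n ≤ 256 * (q * q) := by omega
        have : (n : ℝ) ≤ 256 * (q * q) := by exact_mod_cast this
        nlinarith
      have hn4' : (n : ℝ) ≤ 4 * m := by exact_mod_cast hn4
      have hsq : (n : ℝ) ^ 2 ≤ 16 * m ^ 2 := by nlinarith
      have hb' : (q : ℝ) * m ^ 2 ≤ 2 * Z := by exact_mod_cast hb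
      have := mul_le_mul hsq hs (Real.sqrt_nonneg _) (by positivity)
      nlinarith
  rw [hpow, div_le_iff₀ (by linarith)]
  have hZ0 : (0 : ℝ) ≤ Z := by positivity
  nlinarith
end

section
/- Let f : ℝ → ℝ be continuous, strictly increasing and strictly convex, and let h₁ < h₂ < h₃ be real numbers. Suppose the parametric curve Γ = { (f(t + h₂) − f(t + h₁), f(t + h₃) − f(t + h₂)) : t ∈ ℝ } is the graph of a strictly convex or strictly concave function. Let A = {a₁ < a₂ < … < a_N} be a finite set of positive real numbers with N ≥ 2 satisfying the spacing condition min{ a_{i+1} − a_i : 1 ≤ i ≤ N−1 } ≥ max{ h₂ − h₁, h₃ − h₂ }. Then, writing S₁ = f(A + h₁), S₂ = f(A + h₂), S₃ = f(A + h₃), there is an absolute constant c > 0 such that |2S₁ − 2S₁ + 2S₂ − S₂| · |2S₃ − 2S₃ + 2S₂ − S₂| ≥ c · N⁵ / (log N)³. -/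
open Pointwise

namespace Squeeze

/-- number of distinct values among `d 0, …, d (m-1)` that are at most `d j` -/
noncomputable def rk (m : ℕ) (d : ℕ → ℝ) (j : ℕ) : ℕ :=
  (((Finset.range m).image d).filter (fun v => v ≤ d j)).card

lemma rk_pos {m : ℕ} {d : ℕ → ℝ} {j : ℕ} (hj : j < m) : 1 ≤ rk m d j := by
  unfold rk
  apply Finset.card_pos.mpr
  refine ⟨d j, ?_⟩
  rw [Finset.mem_filter]
  exact ⟨Finset.mem_image_of_mem d (Finset.mem_range.mpr hj), le_rfl⟩

lemma rk_le {m : ℕ} {d : ℕ → ℝ} {j : ℕ} : rk m d j ≤ m := by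
  unfold rk
  calc _ ≤ ((Finset.range m).image d).card := Finset.card_filter_le _ _
    _ ≤ (Finset.range m).card := Finset.card_image_le
    _ = m := Finset.card_range m

lemma rk_lt {m : ℕ} {d : ℕ → ℝ} {i j : ℕ} (hj : j < m) (h : d i < d j) :
    rk m d i < rk m d j := by
  unfold rk
  apply Finset.card_lt_card
  rw [Finset.ssubset_iff_of_subset]
  · refine ⟨d j, ?_, ?_⟩
    · rw [Finset.mem_filter]
      exact ⟨Finset.mem_image_of_mem d (Finset.mem_range.mpr hj), le_rfl⟩
    · rw [Finset.mem_filter]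
      rintro ⟨_, h2⟩
      linarith
  · intro v hv
    rw [Finset.mem_filter] at hv ⊢
    exact ⟨hv.1, by linarith [hv.2]⟩

lemma rk_inj {m : ℕ} {d : ℕ → ℝ} {i j : ℕ} (hi : i < m) (hj : j < m)
    (h : rk m d i = rk m d j) : d i = d j := by
  rcases lt_trichotomy (d i) (d j) with h1 | h1 | h1
  · have := rk_lt hj h1
    omega
  · exact h1
  · have := rk_lt hi h1
    omega

lemma count (N m : ℕ) (hmN : m ≤ N) (u D : ℕ → ℝ) (ε : ℝ) (hε : ε ≠ 0)
    (hpos : ∀ i, i < N → 0 < D i)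
    (hmono : ∀ i j, i < j → j < N → D i < D j)
    (hdisj : ∀ i j, i < j → j < N → ∀ x y, 0 < x → x ≤ D i → 0 < y → y ≤ D j →
      u i + ε * x ≠ u j + ε * y)
    (T : Finset ℝ)
    (hT : ∀ k < N, ∀ j < N, ∀ i < N, ∀ l < N, u k + ε * (D j + (D i - D l)) ∈ T) :
    (N - m) * ∑ j ∈ Finset.range m, rk m (fun i => D (i + 1) - D i) j ≤ T.card := by
  classical
  have hmono' : ∀ i j, i ≤ j → j < N → D i ≤ D j := by
    intro i j h1 h2
    rcases h1.lt_or_eq with h | h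
    · exact (hmono i j h h2).le
    · rw [h]
  set d : ℕ → ℝ := fun i => D (i + 1) - D i with hd
  have hcard : ((Finset.Ico m N) ×ˢ ((Finset.range m).sigma
      (fun j => ((Finset.range m).image d).filter (fun v => v ≤ d j)))).card
      = (N - m) * ∑ j ∈ Finset.range m, rk m d j := by
    rw [Finset.card_product, Finset.card_sigma, Nat.card_Ico]
    rfl
  rw [← hcard]
  have key : ∀ p ∈ ((Finset.Ico m N) ×ˢ ((Finset.range m).sigma
      (fun j => ((Finset.range m).image d).filter (fun v => v ≤ d j)))),
      m ≤ p.1 ∧ p.1 < N ∧ p.2.1 < m ∧ 0 < p.2.2 ∧ p.2.2 ≤ d p.2.1 ∧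
        ∃ i < m, d i = p.2.2 := by
    rintro ⟨k, j, v⟩ hp
    simp only [Finset.mem_product, Finset.mem_Ico, Finset.mem_sigma, Finset.mem_range,
      Finset.mem_filter, Finset.mem_image] at hp
    obtain ⟨⟨h1, h2⟩, h3, ⟨i, hi, rfl⟩, h5⟩ := hp
    refine ⟨h1, h2, h3, ?_, h5, i, hi, rfl⟩
    have := hmono i (i + 1) (by omega) (by omega)
    simp only [hd]
    linarith
  apply Finset.card_le_card_of_injOn (fun p => u p.1 + ε * (D p.2.1 + p.2.2))
  · intro p hp
    obtain ⟨h1, h2, h3, h4, h5, i, hi, h6⟩ := key p hp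
    have := hT p.1 h2 p.2.1 (by omega) (i + 1) (by omega) i (by omega)
    simp only [hd] at h6
    rw [h6] at this
    exact this
  · intro p hp q hq hpq
    obtain ⟨h1, h2, h3, h4, h5, -⟩ := key p hp
    obtain ⟨g1, g2, g3, g4, g5, -⟩ := key q hq
    obtain ⟨k, j, v⟩ := p
    obtain ⟨k', j', v'⟩ := q
    simp only [hd] at *
    have a1 := hpos j (by omega)
    have a2 := hpos j' (by omega)
    have b1 := hmono' (j + 1) k (by omega) h2
    have b2 := hmono' (j' + 1) k' (by omega) g2
    have hk : k = k' := by
      rcases lt_trichotomy k k' with h | h | h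
      · exact absurd hpq (hdisj k k' h g2 _ _ (by linarith) (by linarith) (by linarith)
          (by linarith))
      · exact h
      · exact absurd hpq.symm (hdisj k' k h h2 _ _ (by linarith) (by linarith) (by linarith)
          (by linarith))
    subst hk
    have hs : D j + v = D j' + v' := by
      have := add_left_cancel hpq
      exact mul_left_cancel₀ hε this
    have hj : j = j' := by
      rcases lt_trichotomy j j' with h | h | h
      · have := hmono' (j + 1) j' (by omega) (by omega)
        linarith
      · exact h
      · have := hmono' (j' + 1) j (by omega) (by omega)
        linarith
    subst hj
    have : v = v' := by linarith
    subst this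
    rfl

lemma amgm3 (x y z t : ℝ) (hx : 0 ≤ x) (hy : 0 ≤ y) (hz : 0 ≤ z) (ht : 0 ≤ t)
    (h : x * y * z = t ^ 3) : 3 * t ≤ x + y + z := by
  by_contra hc
  push Not at hc
  have h1 : (x + y + z) ^ 3 < (3 * t) ^ 3 := by
    apply pow_lt_pow_left₀ hc (by positivity) (by norm_num)
  nlinarith [mul_nonneg hx (sq_nonneg (y - z)), mul_nonneg hy (sq_nonneg (x - z)),
    mul_nonneg hz (sq_nonneg (x - y)),
    mul_nonneg hx (sq_nonneg (x - y)), mul_nonneg hx (sq_nonneg (x - z)),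
    mul_nonneg hy (sq_nonneg (x - y)), mul_nonneg hy (sq_nonneg (y - z)),
    mul_nonneg hz (sq_nonneg (z - y)), mul_nonneg hz (sq_nonneg (x - z))]

lemma holder3 (m : ℕ) (hm : 1 ≤ m) (r s : ℕ → ℝ) (hr : ∀ j < m, 0 < r j)
    (hs : ∀ j < m, 0 < s j) :
    (m : ℝ) ^ 3 ≤ (∑ j ∈ Finset.range m, r j) * (∑ j ∈ Finset.range m, s j) *
      ∑ j ∈ Finset.range m, ((r j)⁻¹ * (s j)⁻¹) := by
  have hne : (Finset.range m).Nonempty := ⟨0, Finset.mem_range.mpr hm⟩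
  set P := ∑ j ∈ Finset.range m, r j with hP
  set Q := ∑ j ∈ Finset.range m, s j with hQ
  set L := ∑ j ∈ Finset.range m, ((r j)⁻¹ * (s j)⁻¹) with hL
  have hP0 : 0 < P := Finset.sum_pos (fun j hj => hr j (Finset.mem_range.mp hj)) hne
  have hQ0 : 0 < Q := Finset.sum_pos (fun j hj => hs j (Finset.mem_range.mp hj)) hne
  have hL0 : 0 < L := Finset.sum_pos (fun j hj => by
    have := hr j (Finset.mem_range.mp hj)
    have := hs j (Finset.mem_range.mp hj)
    positivity) hne
  obtain ⟨t, ht0, ht⟩ : ∃ t : ℝ, 0 < t ∧ t ^ 3 = P * Q * L := by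
    refine ⟨(P * Q * L) ^ ((1 : ℝ) / 3), by positivity, ?_⟩
    rw [← Real.rpow_natCast, ← Real.rpow_mul (by positivity)]
    norm_num
  have hsum : ∑ j ∈ Finset.range m, 3 * t⁻¹ ≤
      ∑ j ∈ Finset.range m, (r j / P + s j / Q + ((r j)⁻¹ * (s j)⁻¹) / L) := by
    apply Finset.sum_le_sum
    intro j hj
    have h1 := hr j (Finset.mem_range.mp hj)
    have h2 := hs j (Finset.mem_range.mp hj)
    apply amgm3 _ _ _ _ (by positivity) (by positivity) (by positivity) (by positivity)
    rw [inv_pow, ht]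
    field_simp
  rw [Finset.sum_add_distrib, Finset.sum_add_distrib, ← Finset.sum_div, ← Finset.sum_div,
    ← Finset.sum_div, ← hP, ← hQ, ← hL, div_self hP0.ne', div_self hQ0.ne', div_self hL0.ne',
    Finset.sum_const, Finset.card_range, nsmul_eq_mul] at hsum
  have : (m : ℝ) ≤ t := by
    have h3 : (m : ℝ) * t⁻¹ ≤ 1 := by linarith
    rwa [← div_eq_mul_inv, div_le_one ht0] at h3
  rw [← ht]
  gcongr

lemma ranks (m : ℕ) (hm : 1 ≤ m) (d e : ℕ → ℝ)
    (hinj : ∀ i j, i < j → j < m → d i = d j → e i ≠ e j) :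
    (m : ℝ) ^ 3 ≤ (∑ j ∈ Finset.range m, (rk m d j : ℝ)) *
      (∑ j ∈ Finset.range m, (rk m e j : ℝ)) * (1 + Real.log m) ^ 2 := by
  classical
  have h0 := holder3 m hm (fun j => (rk m d j : ℝ)) (fun j => (rk m e j : ℝ))
    (fun j hj => by exact_mod_cast rk_pos hj) (fun j hj => by exact_mod_cast rk_pos hj)
  refine h0.trans ?_
  apply mul_le_mul_of_nonneg_left _ (by positivity)
  have hH : (∑ x ∈ Finset.Icc 1 m, ((x : ℝ))⁻¹) ≤ 1 + Real.log m := by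
    have := harmonic_le_one_add_log m
    rw [harmonic_eq_sum_Icc] at this
    push_cast at this
    exact this
  have hH0 : 0 ≤ (∑ x ∈ Finset.Icc 1 m, ((x : ℝ))⁻¹) := by positivity
  calc ∑ j ∈ Finset.range m, ((rk m d j : ℝ)⁻¹ * (rk m e j : ℝ)⁻¹)
      = ∑ p ∈ (Finset.range m).image (fun j => (rk m d j, rk m e j)),
          ((p.1 : ℝ)⁻¹ * (p.2 : ℝ)⁻¹) := by
        rw [Finset.sum_image]
        intro i hi j hj hij
        have hi' := Finset.mem_range.mp hi
        have hj' := Finset.mem_range.mp hj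
        have h1 := rk_inj hi' hj' (congrArg Prod.fst hij)
        have h2 := rk_inj hi' hj' (congrArg Prod.snd hij)
        rcases lt_trichotomy i j with h | h | h
        · exact absurd h2 (hinj i j h hj' h1)
        · exact h
        · exact absurd h2.symm (hinj j i h hi' h1.symm)
    _ ≤ ∑ p ∈ (Finset.Icc 1 m) ×ˢ (Finset.Icc 1 m), ((p.1 : ℝ)⁻¹ * (p.2 : ℝ)⁻¹) := by
        apply Finset.sum_le_sum_of_subset_of_nonneg
        · intro p hp
          obtain ⟨j, hj, rfl⟩ := Finset.mem_image.mp hp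
          have hj' := Finset.mem_range.mp hj
          simp only [Finset.mem_product, Finset.mem_Icc]
          exact ⟨⟨rk_pos hj', rk_le⟩, ⟨rk_pos hj', rk_le⟩⟩
        · intros
          positivity
    _ = (∑ x ∈ Finset.Icc 1 m, ((x : ℝ))⁻¹) ^ 2 := by
        rw [Finset.sum_product, sq, Finset.sum_mul_sum]
    _ ≤ _ := by gcongr

lemma slope_aux (X Y : ℕ → ℝ) (N : ℕ)
    (hX : ∀ i j, i < j → j < N → X i < X j)
    (hc : ∀ i j k, i < j → j < k → k < N →
      (Y j - Y i) * (X k - X i) < (Y k - Y i) * (X j - X i))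
    (i j : ℕ) (hij : i < j) (hj : j + 1 < N)
    (hd : X (i + 1) - X i = X (j + 1) - X j) : Y (i + 1) - Y i ≠ Y (j + 1) - Y j := by
  intro he
  have h1 := hX i (i + 1) (by omega) (by omega)
  rcases (show i + 1 ≤ j from hij).lt_or_eq with h | h
  · have c1 := hc i (i + 1) (j + 1) (by omega) (by omega) hj
    have c2 := hc i j (j + 1) (by omega) (by omega) hj
    have e1 : X (i + 1) = X i + (X (j + 1) - X j) := by linarith
    have e2 : Y (i + 1) = Y i + (Y (j + 1) - Y j) := by linarith
    rw [e1, e2] at c1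
    nlinarith
  · subst h
    have c1 := hc i (i + 1) (i + 1 + 1) (by omega) (by omega) hj
    have e1 : X (i + 1 + 1) = X (i + 1) + (X (i + 1) - X i) := by linarith
    have e2 : Y (i + 1 + 1) = Y (i + 1) + (Y (i + 1) - Y i) := by linarith
    rw [e1, e2] at c1
    nlinarith

lemma final_bound (N m : ℕ) (hN : 2 ≤ N) (hm : m = N / 2) (P Q t₁ t₂ : ℝ)
    (hP : 0 ≤ P) (hQ : 0 ≤ Q)
    (h : (m : ℝ) ^ 3 ≤ P * Q * (1 + Real.log m) ^ 2)
    (h1 : ((N - m : ℕ) : ℝ) * P ≤ t₁) (h2 : ((N - m : ℕ) : ℝ) * Q ≤ t₂) :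
    (1 / 8192 : ℝ) * (N : ℝ) ^ 5 / Real.log (N : ℝ) ^ 3 ≤ t₁ * t₂ := by
  have hl2 : (1 / 2 : ℝ) ≤ Real.log 2 := by linarith [Real.log_two_gt_d9]
  have hNr : (2 : ℝ) ≤ N := by exact_mod_cast hN
  have hlN : Real.log 2 ≤ Real.log N := Real.log_le_log (by norm_num) hNr
  have hm1 : 1 ≤ m := by omega
  have hm1r : (1 : ℝ) ≤ m := by exact_mod_cast hm1
  have hmN : (m : ℝ) ≤ N := by exact_mod_cast (show m ≤ N by omega)
  have hlm : Real.log m ≤ Real.log N := Real.log_le_log (by linarith) hmN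
  have hlm0 : 0 ≤ Real.log m := Real.log_nonneg hm1r
  set l := Real.log (N : ℝ) with hl
  have hl0 : 1 / 2 ≤ l := by linarith
  have hNm : (N : ℝ) / 2 ≤ ((N - m : ℕ) : ℝ) := by
    have : N ≤ 2 * (N - m) := by omega
    have : (N : ℝ) ≤ 2 * ((N - m : ℕ) : ℝ) := by exact_mod_cast this
    linarith
  have hm4 : (N : ℝ) / 4 ≤ m := by
    have : N ≤ 4 * m := by omega
    have : (N : ℝ) ≤ 4 * (m : ℝ) := by exact_mod_cast this
    linarith
  have hlog : (1 + Real.log m) ^ 2 ≤ 32 * l ^ 3 := by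
    have : (1 + Real.log m) ^ 2 ≤ (1 + l) ^ 2 := by gcongr
    have h3 : (1 + l) ^ 2 ≤ (3 * l) ^ 2 := by
      apply pow_le_pow_left₀ (by linarith)
      linarith
    nlinarith [sq_nonneg l, mul_nonneg (sq_nonneg l) (by linarith : 0 ≤ l - 1 / 2)]
  have hPQ : ((N : ℝ) / 4) ^ 3 ≤ P * Q * (32 * l ^ 3) := by
    calc ((N : ℝ) / 4) ^ 3 ≤ (m : ℝ) ^ 3 := by gcongr
      _ ≤ P * Q * (1 + Real.log m) ^ 2 := h
      _ ≤ _ := by gcongr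
  rw [div_le_iff₀ (by positivity)]
  have g1 : (N : ℝ) / 2 * P ≤ t₁ := le_trans (by gcongr) h1
  have g2 : (N : ℝ) / 2 * Q ≤ t₂ := le_trans (by gcongr) h2
  have g3 : ((N : ℝ) / 2 * P) * ((N : ℝ) / 2 * Q) ≤ t₁ * t₂ :=
    mul_le_mul g1 g2 (by positivity) (le_trans (by positivity) g1)
  have hl3 : 0 ≤ l ^ 3 := by positivity
  have g4 := mul_le_mul_of_nonneg_right g3 hl3
  have g5 := mul_le_mul_of_nonneg_left hPQ (by positivity : 0 ≤ (N : ℝ) ^ 2 / 128)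
  have hN5 : 0 ≤ (N : ℝ) ^ 5 := by positivity
  nlinarith

lemma diff_lt (f : ℝ → ℝ) (hf : StrictConvexOn ℝ Set.univ f) (s t p q : ℝ) (hst : s < t)
    (hpq : p < q) : f (s + q) - f (s + p) < f (t + q) - f (t + p) := by
  have h1 := hf.secant_strict_mono (a := s + p) (x := s + q) (y := t + q) trivial trivial
    trivial (by linarith) (by linarith) (by linarith)
  have h2 := hf.secant_strict_mono (a := t + q) (x := s + p) (y := t + p) trivial trivial
    trivial (by linarith) (by linarith) (by linarith)
  have e : (f (t + q) - f (s + p)) / (t + q - (s + p)) =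
      (f (s + p) - f (t + q)) / (s + p - (t + q)) := by
    rw [← neg_div_neg_eq]
    ring
  rw [e] at h1
  have h3 := h1.trans h2
  have e2 : (f (t + p) - f (t + q)) / (t + p - (t + q)) =
      (f (t + q) - f (t + p)) / (q - p) := by
    rw [← neg_div_neg_eq]
    ring
  have e3 : s + q - (s + p) = q - p := by ring
  rw [e2, e3] at h3
  have := (div_lt_div_iff_of_pos_right (by linarith : 0 < q - p)).mp h3
  exact this

end Squeeze


/-- Squeezing expander bound: if `f` is continuous, strictly increasing and strictly convex,
`h₁ < h₂ < h₃`, the parametric curve `t ↦ (f(t+h₂) - f(t+h₁), f(t+h₃) - f(t+h₂))` is the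
graph of a strictly convex or strictly concave function, and `A` is a finite set of `N ≥ 2`
positive reals whose consecutive gaps are all at least `max(h₂ - h₁, h₃ - h₂)`, then with
`Sᵢ = f(A + hᵢ)` we have `|2S₁ - 2S₁ + 2S₂ - S₂| · |2S₃ - 2S₃ + 2S₂ - S₂| ≥ c·N⁵/(log N)³`. -/
theorem convex_expander_squeeze :
    ∃ c : ℝ, 0 < c ∧
      ∀ (f : ℝ → ℝ) (h₁ h₂ h₃ : ℝ) (A : Finset ℝ),
        Continuous f → StrictMono f → StrictConvexOn ℝ Set.univ f →
        h₁ < h₂ → h₂ < h₃ →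
        -- the curve Γ is the graph of a strictly convex or strictly concave function
        (∀ Γ : Set (ℝ × ℝ),
          Γ = {p : ℝ × ℝ | ∃ t : ℝ, p = (f (t + h₂) - f (t + h₁), f (t + h₃) - f (t + h₂))} →
          (∀ p ∈ Γ, ∀ q ∈ Γ, p.1 = q.1 → p = q) ∧
          ((∀ p ∈ Γ, ∀ q ∈ Γ, ∀ r ∈ Γ, p.1 < q.1 → q.1 < r.1 →
              q.2 < p.2 + (r.2 - p.2) * (q.1 - p.1) / (r.1 - p.1)) ∨
           (∀ p ∈ Γ, ∀ q ∈ Γ, ∀ r ∈ Γ, p.1 < q.1 → q.1 < r.1 →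
              p.2 + (r.2 - p.2) * (q.1 - p.1) / (r.1 - p.1) < q.2))) →
        (∀ a ∈ A, (0 : ℝ) < a) → 2 ≤ A.card →
        -- spacing condition: all gaps between distinct elements are at least
        -- max (h₂ - h₁) (h₃ - h₂)
        (∀ a ∈ A, ∀ b ∈ A, a ≠ b → max (h₂ - h₁) (h₃ - h₂) ≤ |a - b|) →
        ∀ S₁ S₂ S₃ : Set ℝ,
          S₁ = f '' ((fun a => a + h₁) '' (A : Set ℝ)) →
          S₂ = f '' ((fun a => a + h₂) '' (A : Set ℝ)) →
          S₃ = f '' ((fun a => a + h₃) '' (A : Set ℝ)) →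
          c * (A.card : ℝ) ^ 5 / Real.log (A.card : ℝ) ^ 3 ≤
            ((S₁ + S₁ - S₁ - S₁ + S₂ + S₂ - S₂).ncard : ℝ) *
              ((S₃ + S₃ - S₃ - S₃ + S₂ + S₂ - S₂).ncard : ℝ) := by
  refine ⟨1 / 8192, by norm_num, ?_⟩
  intro f h₁ h₂ h₃ A _ hmono hconv h12 h23 hΓ _ hA hsp S₁ S₂ S₃ hS₁ hS₂ hS₃
  obtain ⟨-, hΓ⟩ := hΓ _ rfl
  set N := A.card with hN
  set a : ℕ → ℝ := fun k => if h : k < N then A.orderEmbOfFin rfl ⟨k, h⟩ else 0 with ha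
  have haA : ∀ k < N, a k ∈ A := by
    intro k hk
    simp only [ha, dif_pos hk]
    exact Finset.orderEmbOfFin_mem A rfl _
  have halt : ∀ i j, i < j → j < N → a i < a j := by
    intro i j hij hj
    simp only [ha, dif_pos hj, dif_pos (hij.trans hj)]
    exact (A.orderEmbOfFin rfl).strictMono hij
  have hgap : ∀ i j, i < j → j < N → a i + h₂ ≤ a j + h₁ ∧ a i + h₃ ≤ a j + h₂ := by
    intro i j hij hj
    have h1 := halt i j hij hj
    have h2 := hsp (a j) (haA j hj) (a i) (haA i (hij.trans hj)) h1.ne'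
    rw [abs_of_pos (by linarith)] at h2
    have h3 := (le_max_left _ _).trans h2
    have h4 := (le_max_right _ _).trans h2
    constructor <;> linarith
  set D : ℕ → ℝ := fun k => f (a k + h₂) - f (a k + h₁) with hD
  set E : ℕ → ℝ := fun k => f (a k + h₃) - f (a k + h₂) with hE
  have hDmono : ∀ i j, i < j → j < N → D i < D j := fun i j hij hj =>
    Squeeze.diff_lt f hconv _ _ _ _ (halt i j hij hj) h12
  have hEmono : ∀ i j, i < j → j < N → E i < E j := fun i j hij hj =>
    Squeeze.diff_lt f hconv _ _ _ _ (halt i j hij hj) h23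
  have hDpos : ∀ i, i < N → 0 < D i := fun i _ => sub_pos.mpr (hmono (by linarith))
  have hEpos : ∀ i, i < N → 0 < E i := fun i _ => sub_pos.mpr (hmono (by linarith))
  have m1 : ∀ k < N, f (a k + h₁) ∈ S₁ := fun k hk => by
    rw [hS₁]; exact ⟨_, ⟨a k, haA k hk, rfl⟩, rfl⟩
  have m2 : ∀ k < N, f (a k + h₂) ∈ S₂ := fun k hk => by
    rw [hS₂]; exact ⟨_, ⟨a k, haA k hk, rfl⟩, rfl⟩
  have m3 : ∀ k < N, f (a k + h₃) ∈ S₃ := fun k hk => by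
    rw [hS₃]; exact ⟨_, ⟨a k, haA k hk, rfl⟩, rfl⟩
  have f1 : S₁.Finite := by rw [hS₁]; exact (A.finite_toSet.image _).image _
  have f2 : S₂.Finite := by rw [hS₂]; exact (A.finite_toSet.image _).image _
  have f3 : S₃.Finite := by rw [hS₃]; exact (A.finite_toSet.image _).image _
  have hT₁ : (S₁ + S₁ - S₁ - S₁ + S₂ + S₂ - S₂).Finite :=
    ((((((f1.add f1).sub f1).sub f1).add f2).add f2).sub f2)
  have hT₂ : (S₃ + S₃ - S₃ - S₃ + S₂ + S₂ - S₂).Finite :=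
    ((((((f3.add f3).sub f3).sub f3).add f2).add f2).sub f2)
  set m := N / 2 with hm
  have c1 := Squeeze.count N m (by omega) (fun k => f (a k + h₁)) D 1 (by norm_num) hDpos
    hDmono (by
      intro i j hij hj x y hx hx' hy hy' heq
      have := hmono.monotone (hgap i j hij hj).1
      simp only [hD] at hx' hy'
      linarith) hT₁.toFinset (by
      intro k hk j hj i hi l hl
      rw [Set.Finite.mem_toFinset]
      have : f (a k + h₁) + 1 * (D j + (D i - D l)) =
          f (a k + h₁) + f (a l + h₁) - f (a j + h₁) - f (a i + h₁) + f (a j + h₂)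
            + f (a i + h₂) - f (a l + h₂) := by
        simp only [hD]
        ring
      rw [this]
      exact Set.sub_mem_sub (Set.add_mem_add (Set.add_mem_add (Set.sub_mem_sub
        (Set.sub_mem_sub (Set.add_mem_add (m1 k hk) (m1 l hl)) (m1 j hj)) (m1 i hi))
        (m2 j hj)) (m2 i hi)) (m2 l hl))
  have c2 := Squeeze.count N m (by omega) (fun k => f (a k + h₃)) E (-1) (by norm_num) hEpos
    hEmono (by
      intro i j hij hj x y hx hx' hy hy' heq
      have := hmono.monotone (hgap i j hij hj).2
      simp only [hE] at hx' hy'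
      linarith) hT₂.toFinset (by
      intro k hk j hj i hi l hl
      rw [Set.Finite.mem_toFinset]
      have : f (a k + h₃) + (-1) * (E j + (E i - E l)) =
          f (a k + h₃) + f (a l + h₃) - f (a j + h₃) - f (a i + h₃) + f (a j + h₂)
            + f (a i + h₂) - f (a l + h₂) := by
        simp only [hE]
        ring
      rw [this]
      exact Set.sub_mem_sub (Set.add_mem_add (Set.add_mem_add (Set.sub_mem_sub
        (Set.sub_mem_sub (Set.add_mem_add (m3 k hk) (m3 l hl)) (m3 j hj)) (m3 i hi))
        (m2 j hj)) (m2 i hi)) (m2 l hl))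
  have hinj : ∀ i j, i < j → j < m →
      (fun i => D (i + 1) - D i) i = (fun i => D (i + 1) - D i) j →
      (fun i => E (i + 1) - E i) i ≠ (fun i => E (i + 1) - E i) j := by
    intro i j hij hj hd
    rcases hΓ with hΓ | hΓ
    · refine Squeeze.slope_aux D E N hDmono ?_ i j hij (by omega) hd
      intro i j k hij hjk hk
      have p1 := hDmono i j hij (by omega)
      have p2 := hDmono j k hjk hk
      have := hΓ (D i, E i) ⟨a i, rfl⟩ (D j, E j) ⟨a j, rfl⟩ (D k, E k) ⟨a k, rfl⟩ p1 p2
      simp only at this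
      have h4 : E j - E i < (E k - E i) * (D j - D i) / (D k - D i) := by linarith
      rwa [lt_div_iff₀ (by linarith)] at h4
    · have := Squeeze.slope_aux D (fun i => - E i) N hDmono ?_ i j hij (by omega) hd
      · intro h
        apply this
        simp only at h ⊢
        linarith
      intro i j k hij hjk hk
      have p1 := hDmono i j hij (by omega)
      have p2 := hDmono j k hjk hk
      have := hΓ (D i, E i) ⟨a i, rfl⟩ (D j, E j) ⟨a j, rfl⟩ (D k, E k) ⟨a k, rfl⟩ p1 p2
      simp only at this
      have h4 : (E k - E i) * (D j - D i) / (D k - D i) < E j - E i := by linarith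
      rw [div_lt_iff₀ (by linarith)] at h4
      linarith
  have hr := Squeeze.ranks m (by omega) _ _ hinj
  rw [Set.ncard_eq_toFinset_card _ hT₁, Set.ncard_eq_toFinset_card _ hT₂]
  refine Squeeze.final_bound N m hA hm _ _ _ _ (by positivity) (by positivity) hr ?_ ?_
  · exact_mod_cast c1
  · exact_mod_cast c2
end

section
/- There exists an absolute constant c > 0 such that for every finite set P ⊂ ℝ² that is not contained in a single line, the set of distinct angles 𝒜(P) = { ∠(p, q, r) : p, q, r ∈ P, p ≠ q, r ≠ q } has cardinality at least c·|P|. -/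
namespace DA

/-- slope of the segment -/
noncomputable def sl (e : (ℝ × ℝ) × (ℝ × ℝ)) : ℝ := (e.2.2 - e.1.2) / (e.2.1 - e.1.1)

/-- intercept of the line through the segment -/
noncomputable def ic (e : (ℝ × ℝ) × (ℝ × ℝ)) : ℝ := e.1.2 - sl e * e.1.1

/-- height of the line through the segment at abscissa x -/
noncomputable def ht (e : (ℝ × ℝ) × (ℝ × ℝ)) (x : ℝ) : ℝ := sl e * x + ic e

/-- two segments cross in their relative interiors -/
def Cr (e f : (ℝ × ℝ) × (ℝ × ℝ)) : Prop :=
  ∃ x, e.1.1 < x ∧ x < e.2.1 ∧ f.1.1 < x ∧ x < f.2.1 ∧ ht e x = ht f x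

lemma ht_left (e : (ℝ × ℝ) × (ℝ × ℝ)) : ht e e.1.1 = e.1.2 := by
  unfold ht ic; ring

lemma ht_right (e : (ℝ × ℝ) × (ℝ × ℝ)) (h : e.1.1 < e.2.1) : ht e e.2.1 = e.2.2 := by
  unfold ht ic sl
  have : e.2.1 - e.1.1 ≠ 0 := by linarith
  field_simp; ring

lemma ht_cont (e : (ℝ × ℝ) × (ℝ × ℝ)) : Continuous (ht e) := by
  unfold ht; fun_prop

lemma ht_sub (e : (ℝ × ℝ) × (ℝ × ℝ)) (x y : ℝ) : ht e x - ht e y = sl e * (x - y) := by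
  unfold ht; ring

lemma end_le (e f : (ℝ × ℝ) × (ℝ × ℝ)) (l x : ℝ) (hl : l < x) (h : ht e x < ht f x)
    (hz : ∀ z, l < z → z < x → ht e z ≠ ht f z) : ht e l ≤ ht f l := by
  by_contra hc
  push Not at hc
  have hcont : ContinuousOn (fun z => ht e z - ht f z) (Set.Icc l x) :=
    ((ht_cont e).sub (ht_cont f)).continuousOn
  have := intermediate_value_Icc' hl.le hcont
  obtain ⟨z, hz1, hz2⟩ := this (show (0:ℝ) ∈ Set.Icc _ _ from ⟨by linarith, by linarith⟩)
  simp only at hz2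
  have h1 : z ≠ l := by rintro rfl; linarith
  have h2 : z ≠ x := by rintro rfl; linarith
  exact hz z (lt_of_le_of_ne hz1.1 h1.symm) (lt_of_le_of_ne hz1.2 h2) (by linarith)

/-- `e` is a proper edge w.r.t. the vertex set `S`. -/
def Good (S : Finset (ℝ × ℝ)) (e : (ℝ × ℝ) × (ℝ × ℝ)) : Prop :=
  e.1 ∈ S ∧ e.2 ∈ S ∧ e.1.1 < e.2.1 ∧ ∀ w ∈ S, e.1.1 < w.1 → w.1 < e.2.1 → w.2 ≠ ht e w.1

/-- If two good edges lie on the same line and overlap, they are equal. -/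
lemma good_eq {S : Finset (ℝ × ℝ)} (hS : ∀ p ∈ S, ∀ q ∈ S, p.1 = q.1 → p = q)
    {e f : (ℝ × ℝ) × (ℝ × ℝ)} (he : Good S e) (hf : Good S f)
    (hl : ∀ x, ht e x = ht f x) {x : ℝ} (h1 : e.1.1 < x) (h2 : x < e.2.1) (h3 : f.1.1 < x)
    (h4 : x < f.2.1) : e = f := by
  obtain ⟨e1, e2, e3, e4⟩ := he
  obtain ⟨f1, f2, f3, f4⟩ := hf
  have a1 : e.1.1 = f.1.1 := by
    rcases lt_trichotomy e.1.1 f.1.1 with h | h | h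
    · exact absurd (by rw [hl, ht_left]) (e4 f.1 f1 h (by linarith))
    · exact h
    · exact absurd (by rw [← hl, ht_left]) (f4 e.1 e1 h (by linarith))
  have a2 : e.2.1 = f.2.1 := by
    rcases lt_trichotomy e.2.1 f.2.1 with h | h | h
    · exact absurd (by rw [← hl, ht_right _ e3]) (f4 e.2 e2 (by linarith) h)
    · exact h
    · exact absurd (by rw [hl, ht_right _ f3]) (e4 f.2 f2 (by linarith) h)
  exact Prod.ext (hS _ e1 _ f1 a1) (hS _ e2 _ f2 a2)

lemma core {S : Finset (ℝ × ℝ)} (hS : ∀ p ∈ S, ∀ q ∈ S, p.1 = q.1 → p = q)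
    {e f f' : (ℝ × ℝ) × (ℝ × ℝ)} (he : Good S e) (hf : Good S f)
    (hff : f'.1 = f.1) (c1 : ¬ Cr e f) (c2 : ¬ Cr e f') (w x : ℝ)
    (h1 : f.1.1 < x) (h2 : x < w) (h3 : w ≤ f.2.1) (h4 : w ≤ f'.2.1)
    (h5 : e.1.1 < x) (h6 : x < e.2.1) (h7 : ht f x < ht e x) (h8 : ht e x < ht f' x)
    (hl : ∀ z ∈ S, f.1.1 < z.1 → z.1 < w → ¬ (ht f z.1 ≤ z.2 ∧ z.2 ≤ ht f' z.1))
    (hu : e.1 = f.1 → sl f < sl e → sl f' ≤ sl e) : False := by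
  have hff1 : f'.1.1 = f.1.1 := by rw [hff]
  have key : ∀ l, e.1.1 ≤ l → f.1.1 ≤ l → l < x → ht f l ≤ ht e l ∧ ht e l ≤ ht f' l := by
    intro l l1 l2 l3
    refine ⟨end_le _ _ l x l3 h7 fun z z1 z2 z3 => c1 ⟨z, ?_⟩,
      end_le _ _ l x l3 h8 fun z z1 z2 z3 => c2 ⟨z, ?_⟩⟩
    · exact ⟨by linarith, by linarith, by linarith, by linarith, z3.symm⟩
    · exact ⟨by linarith, by linarith, by linarith, by linarith, z3⟩
  rcases lt_trichotomy e.1.1 f.1.1 with h | h | h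
  · obtain ⟨k1, k2⟩ := key f.1.1 h.le le_rfl h1
    rw [ht_left] at k1
    have : ht f' f.1.1 = f.1.2 := by rw [← hff, ht_left]
    rw [this] at k2
    exact he.2.2.2 f.1 hf.1 h (by linarith) (le_antisymm k1 k2)
  · have hh := hS _ he.1 _ hf.1 h
    have e1 := ht_sub e x f.1.1
    have e2 := ht_sub f x f.1.1
    have e3 := ht_sub f' x f.1.1
    have i1 : ht e f.1.1 = f.1.2 := by rw [← hh, ht_left]
    have i2 : ht f' f.1.1 = f.1.2 := by rw [← hff, ht_left]
    rw [i1] at e1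
    rw [ht_left] at e2
    rw [i2] at e3
    have s1 : sl f < sl e := by
      have : sl f * (x - f.1.1) < sl e * (x - f.1.1) := by linarith
      exact lt_of_mul_lt_mul_right this (by linarith)
    have := hu hh s1
    have : sl f' * (x - f.1.1) ≤ sl e * (x - f.1.1) :=
      mul_le_mul_of_nonneg_right this (by linarith)
    linarith
  · obtain ⟨k1, k2⟩ := key e.1.1 le_rfl h.le h5
    rw [ht_left] at k1 k2
    exact hl e.1 he.1 h (by linarith) ⟨k1, k2⟩

lemma sl_eq_ht {e f : (ℝ × ℝ) × (ℝ × ℝ)} (h : sl e = sl f) {x : ℝ} (hx : ht e x = ht f x) (y : ℝ) :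
    ht e y = ht f y := by
  have e1 := ht_sub e y x
  have e2 := ht_sub f y x
  rw [h] at e1
  linarith

lemma planar (S : Finset (ℝ × ℝ)) (hS : ∀ p ∈ S, ∀ q ∈ S, p.1 = q.1 → p = q)
    (E : Finset ((ℝ × ℝ) × (ℝ × ℝ))) (hE : ∀ e ∈ E, Good S e)
    (hc : ∀ e ∈ E, ∀ f ∈ E, e ≠ f → ¬ Cr e f) : E.card ≤ 3 * S.card := by
  classical
  let U : ((ℝ × ℝ) × (ℝ × ℝ)) → Prop := fun e => ∃ g ∈ E, g.1 = e.1 ∧ sl e < sl g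
  have hW : ∀ e, ∃ p : ((ℝ × ℝ) × (ℝ × ℝ)) × (ℝ × ℝ), e ∈ E → U e →
      p.1 ∈ E ∧ p.1.1 = e.1 ∧ sl e < sl p.1 ∧ (∀ g ∈ E, g.1 = e.1 → sl e < sl g → sl p.1 ≤ sl g) ∧
      p.2 ∈ S ∧ e.1.1 < p.2.1 ∧ p.2.1 ≤ e.2.1 ∧ p.2.1 ≤ p.1.2.1 ∧ ht e p.2.1 ≤ p.2.2 ∧
      p.2.2 ≤ ht p.1 p.2.1 ∧
      ∀ z ∈ S, e.1.1 < z.1 → z.1 < p.2.1 → ¬ (ht e z.1 ≤ z.2 ∧ z.2 ≤ ht p.1 z.1) := by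
    intro e
    by_cases he : e ∈ E
    swap
    · exact ⟨(e, e.1), fun h => absurd h he⟩
    by_cases hu : U e
    swap
    · exact ⟨(e, e.1), fun _ h => absurd h hu⟩
    obtain ⟨g, hg, hg1, hg2⟩ := hu
    obtain ⟨f, hf, hfm⟩ := (E.filter fun g => g.1 = e.1 ∧ sl e < sl g).exists_min_image sl
      ⟨g, by simp [hg, hg1, hg2]⟩
    simp only [Finset.mem_filter] at hf hfm
    obtain ⟨hf, hf1, hf2⟩ := hf
    have hfl : f.1.1 = e.1.1 := by rw [hf1]
    obtain ⟨e1, e2, e3, e4⟩ := hE e he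
    obtain ⟨f1, f2, f3, f4⟩ := hE f hf
    have hab : ∀ x, e.1.1 < x → ht e x < ht f x := by
      intro x hx
      have a1 := ht_sub e x e.1.1
      have a2 := ht_sub f x f.1.1
      rw [ht_left] at a1 a2
      rw [hf1] at a2
      have : sl e * (x - e.1.1) < sl f * (x - e.1.1) :=
        mul_lt_mul_of_pos_right hf2 (by linarith)
      linarith
    obtain ⟨w, hw, hwm⟩ := (S.filter fun w => e.1.1 < w.1 ∧ w.1 ≤ e.2.1 ∧ w.1 ≤ f.2.1 ∧
        ht e w.1 ≤ w.2 ∧ w.2 ≤ ht f w.1).exists_min_image (fun w => w.1) (by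
      rcases le_total e.2.1 f.2.1 with h | h
      · refine ⟨e.2, ?_⟩
        simp only [Finset.mem_filter]
        refine ⟨e2, e3, le_rfl, h, (ht_right _ e3).le, ?_⟩
        rw [← ht_right _ e3]
        exact (hab _ e3).le
      · refine ⟨f.2, ?_⟩
        simp only [Finset.mem_filter]
        refine ⟨f2, by linarith, h, le_rfl, ?_, (ht_right _ f3).ge⟩
        rw [← ht_right _ f3]
        exact (hab _ (by linarith)).le)
    simp only [Finset.mem_filter] at hw hwm
    obtain ⟨w1, w2, w3, w4, w5, w6⟩ := hw
    refine ⟨(f, w), fun _ _ => ⟨hf, hf1, hf2, fun g g1 g2 g3 => hfm g ⟨g1, g2, g3⟩, w1, w2, w3, w4,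
      w5, w6, fun z z1 z2 z3 z4 => ?_⟩⟩
    have := hwm z ⟨z1, z2, by linarith, by simp only at z3; linarith, z4⟩
    simp only at z3
    linarith
  choose p hp using hW
  have key : ∀ e ∈ E, ∀ f ∈ E, U e → U f → ∀ x, f.1.1 < x → x < (p f).2.1 → e.1.1 < x →
      x < e.2.1 → ht f x < ht e x → ht e x < ht (p f).1 x → False := by
    intro e he f hf ue uf x x1 x2 x3 x4 x5 x6
    obtain ⟨q1, q2, q3, q4, q5, q6, q7, q8, q9, q10, q11⟩ := hp f hf uf
    refine core hS (hE e he) (hE f hf) q2 (hc e he f hf ?_) (hc e he _ q1 ?_) _ x x1 x2 q7 q8 x3 x4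
      x5 x6 q11 (fun h h' => q4 e he h h')
    · rintro rfl; exact lt_irrefl _ x5
    · intro h; rw [← h] at x6; exact lt_irrefl _ x6
  have key2 : ∀ e ∈ E, ∀ f ∈ E, U e → U f → ∀ y, f.1.1 < y → y ≤ (p f).2.1 → e.1.1 < y →
      y ≤ e.2.1 → (∀ᶠ x in nhdsWithin y (Set.Iio y), ht f x < ht e x) →
      ht e y < ht (p f).1 y → False := by
    intro e he f hf ue uf y y1 y2 y3 y4 y5 y6
    have a1 : ∀ᶠ x in nhdsWithin y (Set.Iio y), ht e x < ht (p f).1 x :=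
      nhdsWithin_le_nhds ((ht_cont e).continuousAt.eventually_lt (ht_cont _).continuousAt y6)
    have a2 : ∀ᶠ x in nhdsWithin y (Set.Iio y), f.1.1 < x :=
      nhdsWithin_le_nhds (lt_mem_nhds y1)
    have a3 : ∀ᶠ x in nhdsWithin y (Set.Iio y), e.1.1 < x :=
      nhdsWithin_le_nhds (lt_mem_nhds y3)
    have a4 : ∀ᶠ x in nhdsWithin y (Set.Iio y), x < y := self_mem_nhdsWithin
    obtain ⟨x, b1, b2, b3, b4, b5⟩ := (a1.and (a2.and (a3.and (a4.and y5)))).exists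
    exact key e he f hf ue uf x b2 (by linarith) b3 (by linarith) b5 b1
  let E0 := E.filter fun e => ¬ U e
  let E1 := E.filter fun e => U e ∧ ht e (p e).2.1 < (p e).2.2
  let E2 := E.filter fun e => U e ∧ ¬ ht e (p e).2.1 < (p e).2.2
  have hcov : E ⊆ E0 ∪ (E1 ∪ E2) := by
    intro e he
    simp only [E0, E1, E2, Finset.mem_union, Finset.mem_filter]
    by_cases h1 : U e
    · by_cases h2 : ht e (p e).2.1 < (p e).2.2
      · exact Or.inr (Or.inl ⟨he, h1, h2⟩)
      · exact Or.inr (Or.inr ⟨he, h1, h2⟩)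
    · exact Or.inl ⟨he, h1⟩
  have c0 : E0.card ≤ S.card := by
    refine Finset.card_le_card_of_injOn (fun e => e.1) ?_ ?_
    · intro e he
      exact (hE e (Finset.mem_filter.1 he).1).1
    · intro e he f hf hef
      simp only at hef
      have he' := Finset.mem_filter.1 he
      have hf' := Finset.mem_filter.1 hf
      have hs : sl e = sl f := by
        rcases lt_trichotomy (sl e) (sl f) with h | h | h
        · exact absurd ⟨f, hf'.1, hef.symm, h⟩ he'.2
        · exact h
        · exact absurd ⟨e, he'.1, hef, h⟩ hf'.2
      have g1 := hE e he'.1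
      have g2 := hE f hf'.1
      have hh : ∀ x, ht e x = ht f x :=
        sl_eq_ht hs (x := e.1.1) (by rw [ht_left, hef, ht_left])
      have l1 := g1.2.2.1
      have l2 := g2.2.2.1
      have l3 : e.1.1 = f.1.1 := by rw [hef]
      obtain ⟨x, x1, x2⟩ := exists_between (show e.1.1 < min e.2.1 f.2.1 from
        lt_min l1 (by linarith))
      rw [lt_min_iff] at x2
      exact good_eq hS g1 g2 hh x1 x2.1 (by linarith) x2.2
  have c1 : E1.card ≤ S.card := by
    refine Finset.card_le_card_of_injOn (fun e => (p e).2) ?_ ?_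
    · intro e he
      have he' := Finset.mem_filter.1 he
      exact (hp e he'.1 he'.2.1).2.2.2.2.1
    · have main : ∀ e ∈ E1, ∀ f ∈ E1, (p e).2 = (p f).2 → e ≠ f →
          ht f (p f).2.1 ≤ ht e (p f).2.1 → False := by
        intro e he f hf hef hne hle
        have he' := Finset.mem_filter.1 he
        have hf' := Finset.mem_filter.1 hf
        obtain ⟨q1, q2, q3, q4, q5, q6, q7, q8, q9, q10, q11⟩ := hp f hf'.1 hf'.2.1
        obtain ⟨r1, r2, r3, r4, r5, r6, r7, r8, r9, r10, r11⟩ := hp e he'.1 he'.2.1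
        have hf3 := hf'.2.2
        have he3 := he'.2.2
        rw [hef] at r6 r7 he3
        have s1 : (p f).2.1 < e.2.1 := by
          refine lt_of_le_of_ne r7 fun h => ?_
          have := hS _ q5 _ (hE e he'.1).2.1 h
          rw [this, ht_right _ (hE e he'.1).2.2.1] at he3
          exact lt_irrefl _ he3
        have s2 : (p f).2.1 < f.2.1 := by
          refine lt_of_le_of_ne q7 fun h => ?_
          have := hS _ q5 _ (hE f hf'.1).2.1 h
          rw [this, ht_right _ (hE f hf'.1).2.2.1] at hf3
          exact lt_irrefl _ hf3
        rcases hle.lt_or_eq with h | h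
        · refine key2 e he'.1 f hf'.1 he'.2.1 hf'.2.1 (p f).2.1 q6 le_rfl r6 r7 ?_ (by linarith)
          exact nhdsWithin_le_nhds ((ht_cont f).continuousAt.eventually_lt
            (ht_cont _).continuousAt h)
        · exact hc e he'.1 f hf'.1 hne ⟨(p f).2.1, r6, s1, q6, s2, h.symm⟩
      intro e he f hf hef
      simp only at hef
      by_contra hne
      rcases le_total (ht f (p f).2.1) (ht e (p f).2.1) with h | h
      · exact main e he f hf hef hne h
      · exact main f hf e he hef.symm (Ne.symm hne) (by rw [hef]; exact h)
  have c2 : E2.card ≤ S.card := by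
    have hw : ∀ e ∈ E2, (p e).2 = e.2 := by
      intro e he
      have he' := Finset.mem_filter.1 he
      obtain ⟨r1, r2, r3, r4, r5, r6, r7, r8, r9, r10, r11⟩ := hp e he'.1 he'.2.1
      have h := le_antisymm r9 (not_lt.1 he'.2.2)
      rcases r7.lt_or_eq with h1 | h1
      · exact absurd h.symm ((hE e he'.1).2.2.2 _ r5 r6 h1)
      · exact hS _ r5 _ (hE e he'.1).2.1 h1
    refine Finset.card_le_card_of_injOn (fun e => (p e).2) ?_ ?_
    · intro e he
      have he' := Finset.mem_filter.1 he
      exact (hp e he'.1 he'.2.1).2.2.2.2.1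
    · have main : ∀ e ∈ E2, ∀ f ∈ E2, (p e).2 = (p f).2 → sl e < sl f → False := by
        intro e he f hf hef hlt
        have he' := Finset.mem_filter.1 he
        have hf' := Finset.mem_filter.1 hf
        obtain ⟨q1, q2, q3, q4, q5, q6, q7, q8, q9, q10, q11⟩ := hp f hf'.1 hf'.2.1
        have hew := hw e he
        have hfw := hw f hf
        have hfe : f.2 = e.2 := by rw [← hew, ← hfw, hef]
        have l1 := (hE e he'.1).2.2.1
        have l2 := (hE f hf'.1).2.2.1
        have v1 := ht_right e l1
        have v2 := ht_right f l2
        rw [hfe] at v2 l2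
        refine key2 e he'.1 f hf'.1 he'.2.1 hf'.2.1 e.2.1 l2 ?_ l1 le_rfl ?_ ?_
        · rw [hfw, hfe]
        · filter_upwards [self_mem_nhdsWithin] with x hx
          have hx : x < e.2.1 := hx
          have a1 := ht_sub e x e.2.1
          have a2 := ht_sub f x e.2.1
          have : (sl f - sl e) * (x - e.2.1) < 0 :=
            mul_neg_of_pos_of_neg (by linarith) (by linarith)
          nlinarith
        · have a1 := ht_sub f e.2.1 f.1.1
          have a2 := ht_sub (p f).1 e.2.1 (p f).1.1.1
          rw [ht_left] at a1 a2
          rw [q2] at a2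
          have : sl f * (e.2.1 - f.1.1) < sl (p f).1 * (e.2.1 - f.1.1) :=
            mul_lt_mul_of_pos_right q3 (by linarith)
          linarith
      intro e he f hf hef
      simp only at hef
      rcases lt_trichotomy (sl e) (sl f) with h | h | h
      · exact (main e he f hf hef h).elim
      · have he' := Finset.mem_filter.1 he
        have hf' := Finset.mem_filter.1 hf
        have hew := hw e he
        have hfw := hw f hf
        have hfe : f.2 = e.2 := by rw [← hew, ← hfw, hef]
        have g1 := hE e he'.1
        have g2 := hE f hf'.1
        have l1 := g1.2.2.1
        have l2 := g2.2.2.1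
        have l3 : f.2.1 = e.2.1 := by rw [hfe]
        have hh : ∀ x, ht e x = ht f x :=
          sl_eq_ht h (x := e.2.1) (by rw [ht_right _ l1, ← hfe, ht_right _ l2])
        obtain ⟨x, x1, x2⟩ := exists_between (show max e.1.1 f.1.1 < e.2.1 from
          max_lt l1 (by linarith))
        rw [max_lt_iff] at x1
        exact good_eq hS g1 g2 hh x1.1 x2 x1.2 (by linarith)
      · exact (main f hf e he hef.symm h).elim
  have := Finset.card_le_card hcov
  have := Finset.card_union_le E0 (E1 ∪ E2)
  have := Finset.card_union_le E1 E2
  omega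

end DA

namespace DA

open Classical in
/-- points of `P` coloured `0` -/
noncomputable def sel {P : Finset (ℝ × ℝ)} {s : ℕ} (c : P → Fin (s + 1)) : Finset (ℝ × ℝ) :=
  (Finset.univ.filter fun i : P => c i = 0).image Subtype.val

lemma mem_sel {P : Finset (ℝ × ℝ)} {s : ℕ} (c : P → Fin (s + 1)) (x : ℝ × ℝ) :
    x ∈ sel c ↔ ∃ h : x ∈ P, c ⟨x, h⟩ = 0 := by
  simp [sel]

open Classical in
lemma count_sel (P : Finset (ℝ × ℝ)) (s : ℕ) (T : Finset (ℝ × ℝ)) (hT : T ⊆ P) :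
    (Finset.univ.filter fun c : P → Fin (s + 1) => T ⊆ sel c).card * (s + 1) ^ T.card
      = (s + 1) ^ P.card := by
  have h1 : (Finset.univ.filter fun c : P → Fin (s + 1) => T ⊆ sel c) =
      Fintype.piFinset fun i : P => if (i : ℝ × ℝ) ∈ T then ({0} : Finset (Fin (s + 1)))
        else Finset.univ := by
    ext c
    simp only [Finset.mem_filter, Finset.mem_univ, true_and, Fintype.mem_piFinset]
    constructor
    · intro h i
      split_ifs with hi
      · obtain ⟨_, h2⟩ := (mem_sel c _).1 (h hi)
        simpa using h2
      · simp
    · intro h x hx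
      refine (mem_sel c x).2 ⟨hT hx, ?_⟩
      have := h ⟨x, hT hx⟩
      simpa [hx] using this
  rw [h1, Fintype.card_piFinset]
  have h2 : ∀ i : P, (if (i : ℝ × ℝ) ∈ T then ({0} : Finset (Fin (s + 1)))
        else Finset.univ).card = if (i : ℝ × ℝ) ∈ T then 1 else (s + 1) := by
    intro i; split_ifs <;> simp
  simp_rw [h2]
  rw [Finset.prod_coe_sort P (fun i => if i ∈ T then 1 else (s + 1)), Finset.prod_ite]
  simp only [Finset.prod_const, one_pow, one_mul]
  rw [← pow_add]
  congr 1
  have : P.filter (fun x => x ∉ T) = P \ T := by ext; simp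
  rw [this, Finset.card_sdiff_add_card_eq_card hT]

open Classical in
lemma crossing (P : Finset (ℝ × ℝ)) (hS : ∀ p ∈ P, ∀ q ∈ P, p.1 = q.1 → p = q)
    (E : Finset ((ℝ × ℝ) × (ℝ × ℝ))) (hE : ∀ e ∈ E, Good P e) (t : ℕ) (ht0 : 1 ≤ t) :
    E.card * t ^ 2 ≤ 3 * P.card * t ^ 3 +
      ((E ×ˢ E).filter fun x => x.1 ≠ x.2 ∧ Cr x.1 x.2).card := by
  obtain ⟨s, rfl⟩ : ∃ s, t = s + 1 := ⟨t - 1, by omega⟩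
  set X := (E ×ˢ E).filter fun x => x.1 ≠ x.2 ∧ Cr x.1 x.2 with hX
  let ed : ((ℝ × ℝ) × (ℝ × ℝ)) → Finset (ℝ × ℝ) := fun e => {e.1, e.2}
  have hed : ∀ e S, ed e ⊆ S ↔ e.1 ∈ S ∧ e.2 ∈ S := by
    intro e S; simp [ed, Finset.insert_subset_iff]
  have hpt : ∀ c : P → Fin (s + 1), (E.filter fun e => ed e ⊆ sel c).card ≤
      3 * (P.filter fun p => {p} ⊆ sel c).card +
      (X.filter fun x => ed x.1 ∪ ed x.2 ⊆ sel c).card := by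
    intro c
    have hsel : (P.filter fun p => {p} ⊆ sel c) = sel c := by
      ext p
      simp only [Finset.mem_filter, Finset.singleton_subset_iff, and_iff_right_iff_imp]
      intro h
      exact ((mem_sel c p).1 h).1
    have hsub : sel c ⊆ P := fun p h => ((mem_sel c p).1 h).1
    rw [hsel]
    set Ec := E.filter fun e => ed e ⊆ sel c
    set Xc := X.filter fun x => ed x.1 ∪ ed x.2 ⊆ sel c
    have h1 := planar (sel c) (fun p hp q hq => hS p (hsub hp) q (hsub hq))
      (Ec \ Xc.image Prod.fst) (by
        intro e he
        have he := (Finset.mem_filter.1 (Finset.mem_sdiff.1 he).1)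
        obtain ⟨g1, g2, g3, g4⟩ := hE e he.1
        have := (hed _ _).1 he.2
        exact ⟨this.1, this.2, g3, fun w hw => g4 w (hsub hw)⟩) (by
        intro e he f hf hne hcr
        have he' := Finset.mem_sdiff.1 he
        have he1 := Finset.mem_filter.1 he'.1
        have hf1 := Finset.mem_filter.1 (Finset.mem_sdiff.1 hf).1
        refine he'.2 (Finset.mem_image.2 ⟨(e, f), ?_, rfl⟩)
        simp only [Xc, hX, Finset.mem_filter, Finset.mem_product]
        exact ⟨⟨⟨he1.1, hf1.1⟩, hne, hcr⟩, Finset.union_subset he1.2 hf1.2⟩)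
    have h2 := Finset.le_card_sdiff (Xc.image Prod.fst) Ec
    have h3 : (Xc.image Prod.fst).card ≤ Xc.card := Finset.card_image_le
    omega
  have hsum := Finset.sum_le_sum fun c (_ : c ∈ (Finset.univ : Finset (P → Fin (s + 1)))) => hpt c
  rw [Finset.sum_add_distrib, ← Finset.mul_sum] at hsum
  simp only [Finset.card_filter] at hsum
  rw [Finset.sum_comm, Finset.sum_comm (t := P), Finset.sum_comm (t := X)] at hsum
  simp only [← Finset.card_filter] at hsum
  set N := s + 1
  have k1 : ∀ e ∈ E, (Finset.univ.filter fun c : P → Fin (s + 1) => ed e ⊆ sel c).card * N ^ 4 =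
      N ^ 2 * N ^ P.card := by
    intro e he
    obtain ⟨g1, g2, g3, g4⟩ := hE e he
    rw [← count_sel P s (ed e) ((hed _ _).2 ⟨g1, g2⟩)]
    have : (ed e).card = 2 := Finset.card_pair (by intro h; rw [h] at g3; exact lt_irrefl _ g3)
    rw [this]; ring
  have k2 : ∀ p ∈ P, (Finset.univ.filter fun c : P → Fin (s + 1) => {p} ⊆ sel c).card * N ^ 4 =
      N ^ 3 * N ^ P.card := by
    intro p hp
    rw [← count_sel P s {p} (by simpa using hp)]
    rw [Finset.card_singleton]; ring
  have k3 : ∀ x ∈ X, (Finset.univ.filter fun c : P → Fin (s + 1) =>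
      ed x.1 ∪ ed x.2 ⊆ sel c).card * N ^ 4 = N ^ P.card := by
    intro x hx
    obtain ⟨hx1, hx2, x0, c1, c2, c3, c4, c5⟩ := Finset.mem_filter.1 hx
    obtain ⟨he, hf⟩ := Finset.mem_product.1 hx1
    have ge := hE _ he
    have gf := hE _ hf
    rw [← count_sel P s (ed x.1 ∪ ed x.2) (Finset.union_subset
      ((hed _ _).2 ⟨ge.1, ge.2.1⟩) ((hed _ _).2 ⟨gf.1, gf.2.1⟩))]
    have hcol : ∀ y, y ≠ x0 → ht x.1 y = ht x.2 y → False := by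
      intro y hy h
      refine hx2 (good_eq hS ge gf ?_ c1 c2 c3 c4)
      have a1 := ht_sub x.1 y x0
      have a2 := ht_sub x.2 y x0
      have : (sl x.1 - sl x.2) * (y - x0) = 0 := by linarith
      rcases mul_eq_zero.1 this with h' | h'
      · exact sl_eq_ht (by linarith) c5
      · exact absurd (by linarith) hy
    have n1 : x.1.1 ≠ x.2.1 := fun h => hcol x.1.1.1 c1.ne (by rw [ht_left, h, ht_left])
    have n2 : x.1.2 ≠ x.2.2 := fun h => hcol x.1.2.1 c2.ne'
      (by rw [ht_right _ ge.2.2.1, h, ht_right _ gf.2.2.1])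
    have n3 : x.1.1 ≠ x.2.2 := fun h => by
      have : x.1.1.1 = x.2.2.1 := by rw [h]
      linarith
    have n4 : x.1.2 ≠ x.2.1 := fun h => by
      have : x.1.2.1 = x.2.1.1 := by rw [h]
      linarith
    have n5 : x.1.1 ≠ x.1.2 := fun h => by
      have : x.1.1.1 = x.1.2.1 := by rw [h]
      linarith
    have n6 : x.2.1 ≠ x.2.2 := fun h => by
      have : x.2.1.1 = x.2.2.1 := by rw [h]
      linarith
    have : (ed x.1 ∪ ed x.2).card = 4 := by
      rw [Finset.card_union_of_disjoint]
      · simp only [ed]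
        rw [Finset.card_pair n5, Finset.card_pair n6]
      · simp [ed]
        refine ⟨⟨n1.symm, n4.symm⟩, n3.symm, n2.symm⟩
    rw [this]
  have hmul := Nat.mul_le_mul_right (N ^ 4) hsum
  rw [add_mul, mul_assoc, Finset.sum_mul, Finset.sum_mul, Finset.sum_mul, Finset.sum_congr rfl k1,
    Finset.sum_congr rfl k2, Finset.sum_congr rfl k3] at hmul
  simp only [Finset.sum_const, smul_eq_mul] at hmul
  have hpos : 0 < N ^ P.card := by positivity
  refine Nat.le_of_mul_le_mul_right ?_ hpos
  calc _ = E.card * (N ^ 2 * N ^ P.card) := by ring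
    _ ≤ _ := hmul
    _ = _ := by ring

open Classical in
/-- points on a line -/
noncomputable def on (P : Finset (ℝ × ℝ)) (l : ℝ × ℝ) : Finset (ℝ × ℝ) :=
  P.filter fun w => w.2 = l.1 * w.1 + l.2

/-- line of an edge -/
noncomputable def ln (e : (ℝ × ℝ) × (ℝ × ℝ)) : ℝ × ℝ := (sl e, ic e)

lemma ht_ln (e : (ℝ × ℝ) × (ℝ × ℝ)) (x : ℝ) : ht e x = (ln e).1 * x + (ln e).2 := rfl

lemma ln_eq {u v l : ℝ × ℝ} (h : u.1 ≠ v.1) (hu : u.2 = l.1 * u.1 + l.2)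
    (hv : v.2 = l.1 * v.1 + l.2) : ln (u, v) = l := by
  have h' : v.1 - u.1 ≠ 0 := sub_ne_zero.2 h.symm
  have : sl (u, v) = l.1 := by
    simp only [sl]; rw [hu, hv]; field_simp; ring
  refine Prod.ext this ?_
  simp only [ln, ic, this, hu]; ring

open Classical in
lemma edges_card (P : Finset (ℝ × ℝ)) (hS : ∀ p ∈ P, ∀ q ∈ P, p.1 = q.1 → p = q)
    (l : ℝ × ℝ) : (on P l).card - 1 ≤
      ((P ×ˢ P).filter fun e => Good P e ∧ ln e = l).card := by
  rcases (on P l).eq_empty_or_nonempty with h0 | h0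
  · simp [h0]
  obtain ⟨m, hm, hmax⟩ := (on P l).exists_max_image (fun w => w.1) h0
  rw [← Finset.card_erase_of_mem hm]
  refine le_trans (Finset.card_le_card ?_) (Finset.card_image_le (f := Prod.fst))
  intro u hu
  obtain ⟨hu1, hu2⟩ := Finset.mem_erase.1 hu
  have hu3 := Finset.mem_filter.1 hu2
  have hm3 := Finset.mem_filter.1 hm
  have hlt : u.1 < m.1 := lt_of_le_of_ne (hmax u hu2) fun h => hu1 (hS _ hu3.1 _ hm3.1 h)
  obtain ⟨v, hv, hmin⟩ := ((on P l).filter fun w => u.1 < w.1).exists_min_image (fun w => w.1)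
    ⟨m, Finset.mem_filter.2 ⟨hm, hlt⟩⟩
  obtain ⟨hv1, hv2⟩ := Finset.mem_filter.1 hv
  have hv3 := Finset.mem_filter.1 hv1
  have hl := ln_eq hv2.ne hu3.2 hv3.2
  refine Finset.mem_image.2 ⟨(u, v), Finset.mem_filter.2 ⟨Finset.mem_product.2 ⟨hu3.1, hv3.1⟩,
    ⟨hu3.1, hv3.1, hv2, ?_⟩, hl⟩, rfl⟩
  intro w hw w1 w2 w3
  rw [ht_ln, hl] at w3
  have := hmin w (Finset.mem_filter.2 ⟨Finset.mem_filter.2 ⟨hw, w3⟩, w1⟩)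
  simp only at this w2
  linarith

open Classical in
lemma st_nat (P : Finset (ℝ × ℝ)) (hS : ∀ p ∈ P, ∀ q ∈ P, p.1 = q.1 → p = q)
    (L : Finset (ℝ × ℝ)) (k : ℕ) (hL : ∀ l ∈ L, k ≤ (on P l).card) (t : ℕ) (ht0 : 1 ≤ t) :
    L.card * (k - 1) * t ^ 2 ≤ 3 * P.card * t ^ 3 + L.card ^ 2 := by
  let E := (P ×ˢ P).filter fun e => Good P e ∧ ln e ∈ L
  have hE : ∀ e ∈ E, Good P e := fun e he => (Finset.mem_filter.1 he).2.1
  have hEL : ∀ e ∈ E, ln e ∈ L := fun e he => (Finset.mem_filter.1 he).2.2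
  have h1 : L.card * (k - 1) ≤ E.card := by
    rw [Finset.card_eq_sum_card_fiberwise (f := ln) (t := L) (fun e he => hEL e he)]
    rw [← smul_eq_mul]
    refine Finset.card_nsmul_le_sum _ _ _ fun l hl => ?_
    refine (Nat.sub_le_sub_right (hL l hl) 1).trans ((edges_card P hS l).trans
      (Finset.card_le_card ?_))
    intro e he
    obtain ⟨a, b, c⟩ := Finset.mem_filter.1 he
    exact Finset.mem_filter.2 ⟨Finset.mem_filter.2 ⟨a, b, by rw [c]; exact hl⟩, c⟩
  have h2 := crossing P hS E hE t ht0
  have h3 : ((E ×ˢ E).filter fun x => x.1 ≠ x.2 ∧ Cr x.1 x.2).card ≤ L.card ^ 2 := by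
    rw [sq, ← Finset.card_product]
    refine Finset.card_le_card_of_injOn (fun x => (ln x.1, ln x.2)) ?_ ?_
    · intro x hx
      obtain ⟨a, _⟩ := Finset.mem_filter.1 hx
      obtain ⟨a, b⟩ := Finset.mem_product.1 a
      exact Finset.mem_product.2 ⟨hEL _ a, hEL _ b⟩
    · intro x hx y hy hxy
      simp only [Prod.mk.injEq] at hxy
      obtain ⟨a, hne, x0, c1, c2, c3, c4, c5⟩ := Finset.mem_filter.1 hx
      obtain ⟨a1, a2⟩ := Finset.mem_product.1 a
      obtain ⟨b, hne', y0, d1, d2, d3, d4, d5⟩ := Finset.mem_filter.1 hy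
      obtain ⟨b1, b2⟩ := Finset.mem_product.1 b
      have e1 : ∀ z, ht x.1 z = ht y.1 z := fun z => by rw [ht_ln, ht_ln, hxy.1]
      have e2 : ∀ z, ht x.2 z = ht y.2 z := fun z => by rw [ht_ln, ht_ln, hxy.2]
      have : x0 = y0 := by
        by_contra hy0
        rw [← e1, ← e2] at d5
        refine hne (good_eq hS (hE _ a1) (hE _ a2) ?_ c1 c2 c3 c4)
        have a1 := ht_sub x.1 y0 x0
        have a2 := ht_sub x.2 y0 x0
        have : (sl x.1 - sl x.2) * (y0 - x0) = 0 := by linarith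
        rcases mul_eq_zero.1 this with h' | h'
        · exact sl_eq_ht (by linarith) c5
        · exact absurd (by linarith) hy0
      subst this
      exact Prod.ext (good_eq hS (hE _ a1) (hE _ b1) e1 c1 c2 d1 d2)
        (good_eq hS (hE _ a2) (hE _ b2) e2 c3 c4 d3 d4)
  calc _ ≤ E.card * t ^ 2 := Nat.mul_le_mul_right _ h1
    _ ≤ _ := h2
    _ ≤ _ := by omega

lemma st_real (P : Finset (ℝ × ℝ)) (hS : ∀ p ∈ P, ∀ q ∈ P, p.1 = q.1 → p = q)
    (L : Finset (ℝ × ℝ)) (k : ℕ) (hk : 2 ≤ k) (hL : ∀ l ∈ L, k ≤ (on P l).card) :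
    (L.card : ℝ) ≤ 2304 * (P.card : ℝ) ^ 2 / (k : ℝ) ^ 3 + 12 * P.card / k := by
  obtain ⟨j, rfl⟩ : ∃ j, k = j + 1 := ⟨k - 1, by omega⟩
  have hj : 1 ≤ j := by omega
  have hst := st_nat P hS L (j + 1) hL
  simp only [Nat.add_sub_cancel] at hst
  set N := L.card with hN
  set n := P.card with hn
  have hjr : (1 : ℝ) ≤ j := by exact_mod_cast hj
  rcases Nat.eq_zero_or_pos N with h0 | h0
  · rw [h0]; push_cast; positivity
  have hnpos : 0 < n := by
    obtain ⟨l, hl⟩ := Finset.card_pos.1 h0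
    have h1 := hL l hl
    have h2 : (on P l).card ≤ n := Finset.card_le_card (Finset.filter_subset _ _)
    omega
  have hNr : (0 : ℝ) < N := by exact_mod_cast h0
  have hnr : (0 : ℝ) < n := by exact_mod_cast hnpos
  push_cast
  rcases lt_or_ge (N * j) (6 * n) with h | h
  · have h' : (N : ℝ) * j < 6 * n := by exact_mod_cast h
    have : (N : ℝ) ≤ 12 * n / ((j : ℝ) + 1) := by
      rw [le_div_iff₀ (by positivity)]; nlinarith
    have : 0 ≤ 2304 * (n : ℝ) ^ 2 / ((j : ℝ) + 1) ^ 3 := by positivity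
    linarith
  · set t := N * j / (6 * n) with ht
    have ht1 : 1 ≤ t := (Nat.one_le_div_iff (by omega)).2 h
    have u1 : t * (6 * n) ≤ N * j := Nat.div_mul_le_self _ _
    have u2 : N * j < (t + 1) * (6 * n) := Nat.lt_mul_of_div_lt (Nat.lt_succ_self _) (by omega)
    have u3 := hst t ht1
    have v1 : (t : ℝ) * (6 * n) ≤ N * j := by exact_mod_cast u1
    have v2 : (N : ℝ) * j < (t + 1) * (6 * n) := by exact_mod_cast u2
    have v3 : (N : ℝ) * j * t ^ 2 ≤ 3 * n * t ^ 3 + N ^ 2 := by exact_mod_cast u3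
    have htr : (1 : ℝ) ≤ t := by exact_mod_cast ht1
    generalize hq : (N : ℝ) * j = q at v1 v2 v3
    have hq0 : 0 < q := by rw [← hq]; positivity
    have w1 : q * t ^ 2 ≤ 2 * N ^ 2 := by
      have : (t : ℝ) * (6 * n) * t ^ 2 ≤ q * t ^ 2 := by gcongr
      nlinarith
    have w2 : q ≤ 12 * n * t := by nlinarith
    have w3 : q ^ 2 ≤ (12 * n * t) ^ 2 := by gcongr
    have w4 : q ^ 3 ≤ 288 * n ^ 2 * N ^ 2 := by
      calc q ^ 3 = q * q ^ 2 := by ring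
        _ ≤ q * (12 * n * t) ^ 2 := by gcongr
        _ = 144 * n ^ 2 * (q * t ^ 2) := by ring
        _ ≤ 144 * n ^ 2 * (2 * N ^ 2) := by gcongr
        _ = _ := by ring
    rw [← hq] at w4
    have w5 : (N : ℝ) * j ^ 3 ≤ 288 * n ^ 2 := by
      have : (N : ℝ) * j ^ 3 * N ^ 2 ≤ 288 * n ^ 2 * N ^ 2 := by linarith
      exact le_of_mul_le_mul_right this (by positivity)
    have w6 : ((j : ℝ) + 1) ^ 3 ≤ (2 * j) ^ 3 := by gcongr; linarith
    have : (N : ℝ) ≤ 2304 * n ^ 2 / ((j : ℝ) + 1) ^ 3 := by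
      rw [le_div_iff₀ (by positivity)]
      calc (N : ℝ) * ((j : ℝ) + 1) ^ 3 ≤ (N : ℝ) * (2 * (j : ℝ)) ^ 3 := by gcongr
        _ = 8 * ((N : ℝ) * (j : ℝ) ^ 3) := by ring
        _ ≤ _ := by linarith
    have : 0 ≤ 12 * (n : ℝ) / ((j : ℝ) + 1) := by positivity
    linarith

end DA

namespace DA

lemma sq_le_sum (k m M : ℕ) (hk : k ≤ m) (hm : m ≤ M) :
    (m : ℝ) ^ 2 ≤ (k : ℝ) ^ 2 + ∑ i ∈ Finset.Ioc k M, (if i ≤ m then 2 * (i : ℝ) else 0) := by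
  have h1 : ∑ i ∈ Finset.Ioc k m, 2 * (i : ℝ) ≤
      ∑ i ∈ Finset.Ioc k M, (if i ≤ m then 2 * (i : ℝ) else 0) := by
    rw [← Finset.sum_filter]
    refine Finset.sum_le_sum_of_subset_of_nonneg ?_ fun i _ _ => by positivity
    intro i hi
    simp only [Finset.mem_Ioc, Finset.mem_filter] at hi ⊢
    omega
  have h2 : ∀ m, k ≤ m → (m : ℝ) ^ 2 ≤ (k : ℝ) ^ 2 + ∑ i ∈ Finset.Ioc k m, 2 * (i : ℝ) := by
    intro m hm
    induction m, hm using Nat.le_induction with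
    | base => simp
    | succ m hm ih =>
      rw [Finset.sum_Ioc_succ_top (by omega)]
      push_cast
      nlinarith
  linarith [h2 m hk]

open Classical in
lemma rich_sum (P : Finset (ℝ × ℝ)) (hS : ∀ p ∈ P, ∀ q ∈ P, p.1 = q.1 → p = q)
    (L : Finset (ℝ × ℝ)) (k M : ℕ) (hk : 2 ≤ k) (hL : ∀ l ∈ L, k ≤ (on P l).card)
    (hM : ∀ l ∈ L, (on P l).card ≤ M) :
    ∑ l ∈ L, ((on P l).card : ℝ) ^ 2 ≤
      6912 * (P.card : ℝ) ^ 2 / k + 12 * P.card * k + 24 * P.card * M := by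
  have hkr : (2 : ℝ) ≤ k := by exact_mod_cast hk
  set n : ℝ := (P.card : ℝ) with hn
  have hn0 : 0 ≤ n := by positivity
  have hN : ∀ i : ℕ, 2 ≤ i → ((L.filter fun l => i ≤ (on P l).card).card : ℝ) ≤
      2304 * n ^ 2 / (i : ℝ) ^ 3 + 12 * n / i := fun i hi =>
    st_real P hS _ i hi fun l hl => (Finset.mem_filter.1 hl).2
  have hN0 : (L.card : ℝ) ≤ 2304 * n ^ 2 / (k : ℝ) ^ 3 + 12 * n / k := st_real P hS L k hk hL
  calc ∑ l ∈ L, ((on P l).card : ℝ) ^ 2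
      ≤ ∑ l ∈ L, ((k : ℝ) ^ 2 + ∑ i ∈ Finset.Ioc k M,
          (if i ≤ (on P l).card then 2 * (i : ℝ) else 0)) :=
        Finset.sum_le_sum fun l hl => sq_le_sum k _ M (hL l hl) (hM l hl)
    _ = L.card * (k : ℝ) ^ 2 + ∑ i ∈ Finset.Ioc k M,
          ((L.filter fun l => i ≤ (on P l).card).card : ℝ) * (2 * (i : ℝ)) := by
        rw [Finset.sum_add_distrib, Finset.sum_const, nsmul_eq_mul, Finset.sum_comm]
        congr 1
        refine Finset.sum_congr rfl fun i _ => ?_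
        rw [← Finset.sum_filter, Finset.sum_const, nsmul_eq_mul]
    _ ≤ (2304 * n ^ 2 / k + 12 * n * k) + ∑ i ∈ Finset.Ioc k M,
          (4608 * n ^ 2 * ((i : ℝ) ^ 2)⁻¹ + 24 * n) := by
        refine add_le_add ?_ (Finset.sum_le_sum fun i hi => ?_)
        · calc (L.card : ℝ) * (k : ℝ) ^ 2
              ≤ (2304 * n ^ 2 / (k : ℝ) ^ 3 + 12 * n / k) * (k : ℝ) ^ 2 := by gcongr
            _ = _ := by field_simp
        · have hi1 := Finset.mem_Ioc.1 hi
          have hi2 : 2 ≤ i := by omega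
          have hi3 : (0 : ℝ) < i := by exact_mod_cast (by omega : 0 < i)
          calc ((L.filter fun l => i ≤ (on P l).card).card : ℝ) * (2 * (i : ℝ))
              ≤ (2304 * n ^ 2 / (i : ℝ) ^ 3 + 12 * n / i) * (2 * (i : ℝ)) := by
                gcongr; exact hN i hi2
            _ = _ := by field_simp; ring
    _ ≤ (2304 * n ^ 2 / k + 12 * n * k) + (4608 * n ^ 2 / k + 24 * n * M) := by
        gcongr
        rw [Finset.sum_add_distrib, ← Finset.mul_sum, Finset.sum_const, nsmul_eq_mul]
        have h1 : ∑ i ∈ Finset.Ioc k M, ((i : ℝ) ^ 2)⁻¹ ≤ (k : ℝ)⁻¹ := by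
          rcases le_total k M with h | h
          · have := sum_Ioc_inv_sq_le_sub (α := ℝ) (k := k) (n := M) (by omega) h
            have : (0 : ℝ) ≤ (M : ℝ)⁻¹ := by positivity
            linarith
          · rw [Finset.Ioc_eq_empty (by omega)]; simp
        have h2 : ((Finset.Ioc k M).card : ℝ) ≤ M := by
          rw [Nat.card_Ioc]; exact_mod_cast Nat.sub_le _ _
        have h3 : 4608 * n ^ 2 * ∑ i ∈ Finset.Ioc k M, ((i : ℝ) ^ 2)⁻¹ ≤
            4608 * n ^ 2 * (k : ℝ)⁻¹ := by gcongr
        have h4 : ((Finset.Ioc k M).card : ℝ) * (24 * n) ≤ M * (24 * n) := by gcongr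
        rw [div_eq_mul_inv]
        linarith
    _ = _ := by ring

lemma mem_on_left {P : Finset (ℝ × ℝ)} {q r : ℝ × ℝ} (hq : q ∈ P) : q ∈ on P (ln (q, r)) := by
  refine Finset.mem_filter.2 ⟨hq, ?_⟩
  have := ht_left (q, r)
  rw [ht_ln] at this
  exact this.symm

lemma mem_on_right {P : Finset (ℝ × ℝ)} {q r : ℝ × ℝ} (hr : r ∈ P) (h : q.1 ≠ r.1) :
    r ∈ on P (ln (q, r)) := by
  refine Finset.mem_filter.2 ⟨hr, ?_⟩
  have h' : r.1 - q.1 ≠ 0 := sub_ne_zero.2 h.symm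
  simp only [ln, ic, sl]
  field_simp
  ring

open Classical in
lemma dirac (P : Finset (ℝ × ℝ)) (hS : ∀ p ∈ P, ∀ q ∈ P, p.1 = q.1 → p = q) (M : ℕ)
    (hM : 1 ≤ M) (hn : 2 ≤ P.card)
    (h1 : ∀ q ∈ P, ((P.erase q).image fun r => ln (q, r)).card ≤ M)
    (hnc : ∀ l, ∃ q ∈ P, q ∉ on P l) : (P.card : ℝ) ≤ 1437792 * M := by
  have h2 : ∀ l, (on P l).card ≤ M := by
    intro l
    obtain ⟨q, hq, hql⟩ := hnc l
    refine le_trans ?_ (h1 q hq)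
    refine Finset.card_le_card_of_injOn (fun r => ln (q, r)) ?_ ?_
    · intro r hr
      have hr' : r ∈ on P l := hr
      refine Finset.mem_coe.2 (Finset.mem_image.2 ⟨r, Finset.mem_erase.2 ⟨?_,
        (Finset.mem_filter.1 hr').1⟩, rfl⟩)
      rintro rfl; exact hql hr'
    · intro r hr r' hr' hrr
      have hr : r ∈ on P l := hr
      have hr' : r' ∈ on P l := hr'
      simp only at hrr
      have p1 := Finset.mem_filter.1 hr
      have p2 := Finset.mem_filter.1 hr'
      by_contra hne
      have n1 : q.1 ≠ r.1 := fun h => hql (by rw [hS _ hq _ p1.1 h]; exact hr)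
      have n2 : q.1 ≠ r'.1 := fun h => hql (by rw [hS _ hq _ p2.1 h]; exact hr')
      have n3 : r.1 ≠ r'.1 := fun h => hne (hS _ p1.1 _ p2.1 h)
      have m1 := Finset.mem_filter.1 (mem_on_right p1.1 n1)
      have m2 := Finset.mem_filter.1 (mem_on_right p2.1 n2)
      rw [← hrr] at m2
      have e1 := ln_eq n3 m1.2 m2.2
      have e2 := ln_eq n3 p1.2 p2.2
      have := mem_on_left (r := r) hq
      rw [← e1, e2] at this
      exact hql this
  set k : ℕ := 27648 with hk
  let D := P.offDiag
  let f : ((ℝ × ℝ) × (ℝ × ℝ)) → ℝ × ℝ := ln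
  have hx : ∀ e ∈ D, e.1.1 ≠ e.2.1 := fun e he h => by
    obtain ⟨a, b, c⟩ := Finset.mem_offDiag.1 he
    exact c (hS _ a _ b h)
  let D1 := D.filter fun e => k ≤ (on P (ln e)).card
  let D2 := D.filter fun e => ¬ k ≤ (on P (ln e)).card
  have hD : D1.card + D2.card = D.card := Finset.card_filter_add_card_filter_not _
  have hD2 : D2.card ≤ P.card * (M * k) := by
    rw [Finset.card_eq_sum_card_fiberwise (f := Prod.fst) (t := P) (fun e he =>
      (Finset.mem_offDiag.1 (Finset.mem_filter.1 he).1).1)]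
    rw [← smul_eq_mul]
    refine Finset.sum_le_card_nsmul _ _ _ fun q hq => ?_
    refine le_trans (Finset.card_le_mul_card_image_of_maps_to (f := ln)
      (t := (P.erase q).image fun r => ln (q, r)) ?_ k ?_) ?_
    · intro e he
      obtain ⟨a, b⟩ := Finset.mem_filter.1 he
      obtain ⟨c, d, g⟩ := Finset.mem_offDiag.1 (Finset.mem_filter.1 a).1
      refine Finset.mem_image.2 ⟨e.2, Finset.mem_erase.2 ⟨?_, d⟩, ?_⟩
      · rw [← b]; exact g.symm
      · rw [← b]
    · intro l hl
      by_cases hlk : k ≤ (on P l).card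
      · rw [Finset.card_eq_zero.2]
        · exact Nat.zero_le _
        · refine Finset.filter_eq_empty_iff.2 fun e he hel => ?_
          obtain ⟨a, b⟩ := Finset.mem_filter.1 he
          have := (Finset.mem_filter.1 a).2
          rw [hel] at this
          exact this hlk
      · refine le_trans ?_ (not_le.1 hlk).le
        refine Finset.card_le_card_of_injOn Prod.snd ?_ ?_
        · intro e he
          obtain ⟨a, b⟩ := Finset.mem_filter.1 he
          obtain ⟨a, c⟩ := Finset.mem_filter.1 a
          have a' := (Finset.mem_filter.1 a).1
          have := mem_on_right (P := P) (Finset.mem_offDiag.1 a').2.1 (hx e a')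
          rw [← b]; exact this
        · intro e he e' he' hee
          have he := (Finset.mem_filter.1 (Finset.mem_filter.1 he).1).2
          have he' := (Finset.mem_filter.1 (Finset.mem_filter.1 he').1).2
          exact Prod.ext (he.trans he'.symm) hee
    · rw [mul_comm]
      exact Nat.mul_le_mul_right _ (h1 q hq)
  have hD1 : (D1.card : ℝ) ≤ 6912 * (P.card : ℝ) ^ 2 / k + 12 * P.card * k + 24 * P.card * M := by
    refine le_trans ?_ (rich_sum P hS (D1.image ln) k M (by omega) ?_ fun l _ => h2 l)
    · rw [Finset.card_eq_sum_card_fiberwise (f := ln) (t := D1.image ln)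
        (fun e he => Finset.mem_coe.2 (Finset.mem_image_of_mem _ he))]
      push_cast
      refine Finset.sum_le_sum fun l hl => ?_
      rw [sq]
      norm_cast
      rw [← Finset.card_product]
      refine Finset.card_le_card fun e he => ?_
      obtain ⟨a, b⟩ := Finset.mem_filter.1 he
      have a' := (Finset.mem_filter.1 a).1
      obtain ⟨c, d, g⟩ := Finset.mem_offDiag.1 a'
      rw [← b]
      exact Finset.mem_product.2 ⟨mem_on_left c, mem_on_right d (hx e a')⟩
    · intro l hl
      obtain ⟨e, he, rfl⟩ := Finset.mem_image.1 hl
      exact (Finset.mem_filter.1 he).2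
  have hDc : (D.card : ℝ) = (P.card : ℝ) * P.card - P.card := by
    rw [Finset.offDiag_card, Nat.cast_sub (Nat.le_mul_self _)]
    push_cast; ring
  have hD' : (D1.card : ℝ) + D2.card = D.card := by exact_mod_cast hD
  have hD2' : (D2.card : ℝ) ≤ P.card * (M * k) := by exact_mod_cast hD2
  have hn' : (2 : ℝ) ≤ P.card := by exact_mod_cast hn
  have hM' : (1 : ℝ) ≤ M := by exact_mod_cast hM
  have hkr : (k : ℝ) = 27648 := by rw [hk]; norm_num
  rw [hkr] at hD1 hD2'
  generalize (P.card : ℝ) = n at *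
  generalize (M : ℝ) = m at *
  have hfin : n * n - n ≤ n * (m * 27648) + (6912 * n ^ 2 / 27648 + 12 * n * 27648 + 24 * n * m) := by
    linarith
  have : n * (n - 1) ≤ n * (m * 27648 + n / 4 + 12 * 27648 + 24 * m) := by
    calc n * (n - 1) = n * n - n := by ring
      _ ≤ _ := hfin
      _ = _ := by ring
  have := le_of_mul_le_mul_left this (by linarith)
  linarith

/-- shear -/
noncomputable def sh (s : ℝ) (p : EuclideanSpace ℝ (Fin 2)) : ℝ × ℝ := (p 0 + s * p 1, p 1)

lemma exists_shear (P : Finset (EuclideanSpace ℝ (Fin 2))) :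
    ∃ s : ℝ, ∀ p ∈ P, ∀ q ∈ P, (sh s p).1 = (sh s q).1 → p = q := by
  classical
  obtain ⟨s, hs⟩ := Infinite.exists_notMem_finset
    ((P ×ˢ P).image fun x => (x.2 0 - x.1 0) / (x.1 1 - x.2 1))
  refine ⟨s, fun p hp q hq h => ?_⟩
  simp only [sh] at h
  have h1 : p 1 = q 1 := by
    by_contra hne
    refine hs (Finset.mem_image.2 ⟨(p, q), Finset.mem_product.2 ⟨hp, hq⟩, ?_⟩)
    have : p 1 - q 1 ≠ 0 := sub_ne_zero.2 hne
    simp only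
    rw [div_eq_iff this]; linarith
  ext i
  fin_cases i
  · simp only [Fin.zero_eta]; rw [h1] at h; linarith
  · exact h1

lemma angle_key (v w w' : EuclideanSpace ℝ (Fin 2)) (hv : v ≠ 0) (hw : w ≠ 0) (hw' : w' ≠ 0)
    (h : InnerProductGeometry.angle v w = InnerProductGeometry.angle v w')
    (hs : 0 ≤ v 0 * w 1 - v 1 * w 0 ↔ 0 ≤ v 0 * w' 1 - v 1 * w' 0) :
    w 0 * w' 1 = w 1 * w' 0 := by
  have hn : ∀ u : EuclideanSpace ℝ (Fin 2), ‖u‖ ^ 2 = u 0 ^ 2 + u 1 ^ 2 := by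
    intro u; rw [EuclideanSpace.norm_sq_eq]; simp [Fin.sum_univ_two]
  have hi : ∀ u u' : EuclideanSpace ℝ (Fin 2), inner ℝ u u' = u 0 * u' 0 + u 1 * u' 1 := by
    intro u u'; simp [PiLp.inner_apply, Fin.sum_univ_two]; ring
  have ha : 0 < ‖w‖ := norm_pos_iff.2 hw
  have hb : 0 < ‖w'‖ := norm_pos_iff.2 hw'
  have hc : 0 < ‖v‖ := norm_pos_iff.2 hv
  have h1 := congrArg Real.cos h
  rw [InnerProductGeometry.cos_angle, InnerProductGeometry.cos_angle, hi, hi,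
    div_eq_div_iff (by positivity) (by positivity)] at h1
  have n1 := hn v
  have n2 := hn w
  have n3 := hn w'
  generalize ‖w‖ = a at *
  generalize ‖w'‖ = b at *
  generalize ‖v‖ = c at *
  generalize v 0 = x at *
  generalize v 1 = y at *
  generalize w 0 = p at *
  generalize w 1 = q at *
  generalize w' 0 = p' at *
  generalize w' 1 = q' at *
  have h2 : (x * p + y * q) * b = (x * p' + y * q') * a := by
    have : c * ((x * p + y * q) * b) = c * ((x * p' + y * q') * a) := by linarith
    exact mul_left_cancel₀ hc.ne' this
  have h3 : ((x * q - y * p) * b) ^ 2 = ((x * q' - y * p') * a) ^ 2 := by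
    have e1 : (x * q - y * p) ^ 2 = c ^ 2 * a ^ 2 - (x * p + y * q) ^ 2 := by
      rw [n1, n2]; ring
    have e2 : (x * q' - y * p') ^ 2 = c ^ 2 * b ^ 2 - (x * p' + y * q') ^ 2 := by
      rw [n1, n3]; ring
    rw [mul_pow, mul_pow, e1, e2]
    have := congrArg (· ^ 2) h2
    linear_combination -this
  have h4 : (x * q - y * p) * b = (x * q' - y * p') * a := by
    by_cases hp : 0 ≤ x * q - y * p
    · have hp' := hs.1 hp
      exact (pow_left_inj₀ (by positivity) (by positivity) two_ne_zero).1 h3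
    · have hp' : ¬ 0 ≤ x * q' - y * p' := fun h => hp (hs.2 h)
      rw [not_le] at hp hp'
      have h3' : (-(x * q - y * p) * b) ^ 2 = (-(x * q' - y * p') * a) ^ 2 := by
        linear_combination h3
      have := (pow_left_inj₀ (mul_nonneg (by linarith) hb.le) (mul_nonneg (by linarith) ha.le)
        two_ne_zero).1 h3'
      linarith
  have hcc : x ^ 2 + y ^ 2 ≠ 0 := by rw [← n1]; positivity
  have e1 : p * b = p' * a := by
    have : (x ^ 2 + y ^ 2) * (p * b) = (x ^ 2 + y ^ 2) * (p' * a) := by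
      linear_combination x * h2 - y * h4
    exact mul_left_cancel₀ hcc this
  have e2 : q * b = q' * a := by
    have : (x ^ 2 + y ^ 2) * (q * b) = (x ^ 2 + y ^ 2) * (q' * a) := by
      linear_combination y * h2 + x * h4
    exact mul_left_cancel₀ hcc this
  have : a * (p * q') = a * (q * p') := by linear_combination q * e1 - p * e2
  exact mul_left_cancel₀ ha.ne' this

end DA

/-- There is an absolute constant `c > 0` such that every finite non-collinear point set
`P ⊆ ℝ²` determines at least `c·|P|` distinct angles. -/
theorem distinct_angles_linear_bound :
    ∃ c : ℝ, 0 < c ∧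
      ∀ P : Finset (EuclideanSpace ℝ (Fin 2)),
        ¬ Collinear ℝ (P : Set (EuclideanSpace ℝ (Fin 2))) →
        c * (P.card : ℝ) ≤
          ({θ : ℝ | ∃ p ∈ P, ∃ q ∈ P, ∃ r ∈ P,
              p ≠ q ∧ r ≠ q ∧ EuclideanGeometry.angle p q r = θ}).ncard := by
  classical
  refine ⟨1 / 2875584, by norm_num, fun P hP => ?_⟩
  set A : Set ℝ := {θ : ℝ | ∃ p ∈ P, ∃ q ∈ P, ∃ r ∈ P,
              p ≠ q ∧ r ≠ q ∧ EuclideanGeometry.angle p q r = θ} with hA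
  have hfin : A.Finite := by
    refine ((P ×ˢ (P ×ˢ P)).image fun x =>
      EuclideanGeometry.angle x.1 x.2.1 x.2.2).finite_toSet.subset ?_
    rintro θ ⟨p, hp, q, hq, r, hr, -, -, h⟩
    exact Finset.mem_coe.2 (Finset.mem_image.2 ⟨(p, q, r), by simp [hp, hq, hr], h⟩)
  set F := hfin.toFinset with hF
  have hFm : ∀ θ, θ ∈ F ↔ θ ∈ A := fun θ => hfin.mem_toFinset
  rw [Set.ncard_eq_toFinset_card A hfin]
  have hcard : 2 ≤ P.card := by
    by_contra h
    rcases P.eq_empty_or_nonempty with h0 | ⟨a, ha⟩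
    · exact hP (by rw [h0, Finset.coe_empty]; exact collinear_empty ℝ _)
    · have : P = {a} := Finset.eq_singleton_iff_unique_mem.2
        ⟨ha, fun b hb => Finset.card_le_one.1 (by omega) b hb a ha⟩
      exact hP (by rw [this, Finset.coe_singleton]; exact collinear_singleton ℝ a)
  have hFpos : 1 ≤ F.card := by
    obtain ⟨a, ha, b, hb, hab⟩ := Finset.one_lt_card.1 (show 1 < P.card by omega)
    exact Finset.card_pos.2 ⟨_, (hFm _).2 ⟨a, ha, b, hb, a, ha, hab, hab, rfl⟩⟩
  obtain ⟨s, hs⟩ := DA.exists_shear P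
  have hinj : Set.InjOn (DA.sh s) P := fun p hp q hq h => hs p hp q hq (by rw [h])
  have hPc : (P.image (DA.sh s)).card = P.card := Finset.card_image_of_injOn hinj
  have hmain := DA.dirac (P.image (DA.sh s)) (by
      intro p hp q hq h
      obtain ⟨p, hp', rfl⟩ := Finset.mem_image.1 hp
      obtain ⟨q, hq', rfl⟩ := Finset.mem_image.1 hq
      rw [hs p hp' q hq' h]) (2 * F.card) (by omega) (by omega) ?_ ?_
  · rw [hPc] at hmain
    push_cast at hmain
    linarith
  · intro q0 hq0
    obtain ⟨q, hq, rfl⟩ := Finset.mem_image.1 hq0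
    obtain ⟨p, hp, hpq⟩ := Finset.exists_mem_ne (show 1 < P.card by omega) q
    have : 2 * F.card = (F ×ˢ (Finset.univ : Finset Bool)).card := by
      rw [Finset.card_product]; simp [mul_comm]
    rw [this]
    refine Finset.card_le_card_of_forall_subsingleton (fun l x => ∃ r ∈ P, r ≠ q ∧
      DA.ln (DA.sh s q, DA.sh s r) = l ∧ EuclideanGeometry.angle p q r = x.1 ∧
      (x.2 = true ↔ 0 ≤ (p - q) 0 * (r - q) 1 - (p - q) 1 * (r - q) 0)) ?_ ?_
    · intro l hl
      obtain ⟨r0, hr0, rfl⟩ := Finset.mem_image.1 hl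
      obtain ⟨hr1, hr2⟩ := Finset.mem_erase.1 hr0
      obtain ⟨r, hr, rfl⟩ := Finset.mem_image.1 hr2
      have hrq : r ≠ q := fun h => hr1 (by rw [h])
      refine ⟨(EuclideanGeometry.angle p q r,
        decide (0 ≤ (p - q) 0 * (r - q) 1 - (p - q) 1 * (r - q) 0)), ?_, r, hr, hrq, rfl, rfl,
        by simp⟩
      exact Finset.mem_product.2 ⟨(hFm _).2 ⟨p, hp, q, hq, r, hr, hpq, hrq, rfl⟩,
        Finset.mem_univ _⟩
    · rintro x hx l ⟨-, r, hr, hrq, rfl, ha, hb⟩ l' ⟨-, r', hr', hrq', rfl, ha', hb'⟩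
      have key := DA.angle_key (p - q) (r - q) (r' - q) (sub_ne_zero.2 hpq) (sub_ne_zero.2 hrq)
        (sub_ne_zero.2 hrq') (ha.trans ha'.symm) (hb.symm.trans hb')
      have n1 : (DA.sh s r).1 - (DA.sh s q).1 ≠ 0 :=
        sub_ne_zero.2 fun h => hrq (hs _ hr _ hq h)
      have n2 : (DA.sh s r').1 - (DA.sh s q).1 ≠ 0 :=
        sub_ne_zero.2 fun h => hrq' (hs _ hr' _ hq h)
      have hsl : DA.sl (DA.sh s q, DA.sh s r) = DA.sl (DA.sh s q, DA.sh s r') := by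
        simp only [DA.sl]
        rw [div_eq_div_iff n1 n2]
        simp only [DA.sh]
        simp only [PiLp.sub_apply] at key
        linear_combination -key
      simp only [DA.ln, DA.ic, hsl]
  · intro l
    by_contra hcon
    push Not at hcon
    refine hP ((collinear_iff_exists_forall_eq_smul_vadd (k := ℝ) _).2
      ⟨!₂[-s * l.2, l.2], !₂[1 - s * l.1, l.1], fun p hp => ⟨p 0 + s * p 1, ?_⟩⟩)
    have := (Finset.mem_filter.1 (hcon _ (Finset.mem_image_of_mem (DA.sh s) hp))).2
    simp only [DA.sh] at this
    ext i
    fin_cases i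
    · simp
      linear_combination -s * this
    · simp
      linear_combination this
end

section
/- There exist absolute constants c > 0 and N₀ such that the following holds. Let B₁, B₂ ⊂ ℝ be finite sets with |B₁| = |B₂| = n ≥ N₀ and with every element of B₁ strictly smaller than every element of B₂. Then there exist a, b ∈ B₁ such that the ratio set { (y − b)/(x − a) : x, y ∈ B₂ } has cardinality at least c·n². -/
open Finset in
lemma cells_exist (B : Finset ℝ) (r : ℕ) (hr : 0 < r) (hn : r ≤ #B) :
    ∃ c : ℝ → ℕ, Monotone c ∧ (∀ x ∈ B, c x < r) ∧
      ∀ x ∈ B, r * #{x' ∈ B | c x = c x'} ≤ 2 * #B := by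
  classical
  set s := #B / r + 1 with hs
  have hspos : 0 < s := Nat.succ_pos _
  set rk : ℝ → ℕ := fun x => #{y ∈ B | y < x} with hrk
  have hmono : Monotone rk := by
    intro x y hxy
    apply card_le_card
    intro z hz
    simp only [mem_filter] at hz ⊢
    exact ⟨hz.1, lt_of_lt_of_le hz.2 hxy⟩
  have hstrict : ∀ x ∈ B, ∀ y, x < y → rk x < rk y := by
    intro x hx y hxy
    apply card_lt_card
    refine (Finset.ssubset_iff_of_subset ?_).2 ⟨x, ?_, ?_⟩
    · intro z hz
      simp only [mem_filter] at hz ⊢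
      exact ⟨hz.1, lt_trans hz.2 hxy⟩
    · simp [hx, hxy]
    · simp
  refine ⟨fun x => rk x / s, fun x y h => Nat.div_le_div_right (hmono h), ?_, ?_⟩
  · intro x hx
    have h1 : rk x < #B := by
      apply card_lt_card
      refine (Finset.ssubset_iff_of_subset (filter_subset _ _)).2 ⟨x, hx, by simp⟩
    have h2 : #B < r * s := Nat.lt_mul_div_succ _ hr
    exact (Nat.div_lt_iff_lt_mul hspos).2 (by omega)
  · intro x hx
    have h1 : #{x' ∈ B | rk x / s = rk x' / s} ≤ #(Finset.Ico (rk x / s * s) (rk x / s * s + s)) := by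
      apply card_le_card_of_injOn rk
      · intro y hy
        simp only [coe_filter, Set.mem_ofPred_eq] at hy
        simp only [coe_Ico, Set.mem_Ico]
        rw [hy.2]
        exact ⟨Nat.div_mul_le_self _ _, Nat.lt_div_mul_add hspos⟩
      · intro y hy z hz hyz
        simp only [coe_filter, Set.mem_ofPred_eq] at hy hz
        rcases lt_trichotomy y z with h | h | h
        · exact absurd hyz (hstrict y hy.1 z h).ne
        · exact h
        · exact absurd hyz (hstrict z hz.1 y h).ne'
    rw [Nat.card_Ico, Nat.add_sub_cancel_left] at h1
    have h2 : r * (#B / r) ≤ #B := Nat.mul_div_le _ _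
    calc _ ≤ r * s := Nat.mul_le_mul_left _ h1
      _ = r * (#B / r) + r := by rw [hs]; ring
      _ ≤ _ := by omega

open Finset in
/-- Abscissae of the points of `B × B` on the line `y = ℓ.1 * x + ℓ.2`. -/
noncomputable def onLine (B : Finset ℝ) (l : ℝ × ℝ) : Finset ℝ :=
  {x ∈ B | l.1 * x + l.2 ∈ B}

open Finset in
/-- Pairs of distinct points of the line in a common cell. -/
noncomputable def cellPairs (B : Finset ℝ) (c : ℝ → ℕ) (l : ℝ × ℝ) : Finset (ℝ × ℝ) :=
  {p ∈ onLine B l ×ˢ onLine B l | p.1 ≠ p.2 ∧ c p.1 = c p.2 ∧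
    c (l.1 * p.1 + l.2) = c (l.1 * p.2 + l.2)}

open Finset in
lemma rich_line (B : Finset ℝ) (r : ℕ) (c : ℝ → ℕ) (hc : Monotone c)
    (hcr : ∀ x ∈ B, c x < r) (l : ℝ × ℝ) (hl : 0 < l.1) :
    #(onLine B l) ≤ 4 * r ∨ #(onLine B l) ^ 2 ≤ 4 * r * #(cellPairs B c l) := by
  classical
  set S := onLine B l with hS
  set u : ℝ → ℕ := fun x => c x + c (l.1 * x + l.2) with hu
  have hmaps : (S : Set ℝ).MapsTo u (range (2 * r)) := by
    intro x hx
    simp only [hS, onLine, coe_filter, Set.mem_ofPred_eq] at hx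
    have h1 := hcr _ hx.1
    have h2 := hcr _ hx.2
    simp only [hu, coe_range, Set.mem_Iio]
    omega
  have h1 := card_eq_sum_card_fiberwise hmaps
  have h2 := sq_sum_le_card_mul_sum_sq (s := range (2 * r)) (f := fun b => #{a ∈ S | u a = b})
  rw [← h1, card_range] at h2
  have h3 : ∑ b ∈ range (2 * r), #{a ∈ S | u a = b} ^ 2 ≤ #(cellPairs B c l) + #S := by
    have e1 : ∑ b ∈ range (2 * r), #{a ∈ S | u a = b} ^ 2
        = #((range (2 * r)).sigma fun b => {a ∈ S | u a = b} ×ˢ {a ∈ S | u a = b}) := by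
      rw [card_sigma]
      refine sum_congr rfl fun b _ => ?_
      rw [card_product, sq]
    rw [e1]
    have e2 : #((range (2 * r)).sigma fun b => {a ∈ S | u a = b} ×ˢ {a ∈ S | u a = b})
        ≤ #(cellPairs B c l ∪ S.image fun x => (x, x)) := by
      apply card_le_card_of_injOn (fun z => z.2)
      · rintro ⟨b, x, y⟩ hz
        simp only [coe_sigma, Set.mem_sigma_iff, mem_coe, mem_product, mem_filter] at hz
        obtain ⟨-, ⟨hx, hxb⟩, hy, hyb⟩ := hz
        simp only [mem_coe, mem_union, mem_image, cellPairs, mem_filter, mem_product]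
        by_cases hxy : x = y
        · right
          exact ⟨x, hx, by rw [hxy]⟩
        · left
          refine ⟨⟨hx, hy⟩, hxy, ?_⟩
          have hsum : c x + c (l.1 * x + l.2) = c y + c (l.1 * y + l.2) := hxb.trans hyb.symm
          rcases le_total x y with h | h
          · have a1 := hc h
            have a2 : c (l.1 * x + l.2) ≤ c (l.1 * y + l.2) := hc (by gcongr)
            omega
          · have a1 := hc h
            have a2 : c (l.1 * y + l.2) ≤ c (l.1 * x + l.2) := hc (by gcongr)
            omega
      · rintro ⟨b, x, y⟩ hz ⟨b', x', y'⟩ hz' h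
        simp only [coe_sigma, Set.mem_sigma_iff, mem_coe, mem_product, mem_filter] at hz hz'
        simp only [Prod.mk.injEq] at h
        obtain ⟨rfl, rfl⟩ := h
        have : b = b' := by rw [← hz.2.1.2, ← hz'.2.1.2]
        subst this
        rfl
    exact e2.trans ((card_union_le _ _).trans (Nat.add_le_add_left card_image_le _))
  by_cases hk : #S ≤ 4 * r
  · exact Or.inl hk
  · right
    push Not at hk
    simp only [Nat.cast_id] at h2
    have h4 : #S ^ 2 ≤ 2 * r * (#(cellPairs B c l) + #S) :=
      h2.trans (Nat.mul_le_mul_left _ h3)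
    nlinarith

open Finset in
lemma sum_cellPairs (B : Finset ℝ) (r : ℕ) (c : ℝ → ℕ)
    (hcB : ∀ x ∈ B, r * #{x' ∈ B | c x = c x'} ≤ 2 * #B) (L : Finset (ℝ × ℝ)) :
    r ^ 2 * ∑ l ∈ L, #(cellPairs B c l) ≤ 4 * #B ^ 4 := by
  classical
  set E : Finset (ℝ × ℝ) := {p ∈ B ×ˢ B | c p.1 = c p.2} with hE
  have h1 : r * #E ≤ 2 * #B ^ 2 := by
    have : #E = ∑ x ∈ B, #{x' ∈ B | c x = c x'} := by
      rw [hE, card_filter, sum_product]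
      simp only [card_filter]
    rw [this, mul_sum]
    calc _ ≤ ∑ x ∈ B, 2 * #B := sum_le_sum hcB
      _ = _ := by rw [sum_const, smul_eq_mul]; ring
  have h2 : ∑ l ∈ L, #(cellPairs B c l) ≤ #(E ×ˢ E) := by
    rw [← card_sigma]
    apply card_le_card_of_injOn
      (fun z => (z.2, (z.1.1 * z.2.1 + z.1.2, z.1.1 * z.2.2 + z.1.2)))
    · rintro ⟨⟨m, t⟩, x, y⟩ hz
      simp only [coe_sigma, Set.mem_sigma_iff, mem_coe, cellPairs, onLine, mem_product,
        mem_filter] at hz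
      simp only [mem_coe, hE, mem_product, mem_filter]
      tauto
    · rintro ⟨⟨m, t⟩, x, y⟩ hz ⟨⟨m', t'⟩, x', y'⟩ hz' h
      simp only [coe_sigma, Set.mem_sigma_iff, mem_coe, cellPairs, mem_filter] at hz hz'
      simp only [Prod.mk.injEq] at h
      obtain ⟨⟨rfl, rfl⟩, h3, h4⟩ := h
      have hne : x - y ≠ 0 := sub_ne_zero.2 hz.2.2.1
      have hm : m = m' := mul_right_cancel₀ hne (by linarith)
      subst hm
      have ht : t = t' := by linarith
      subst ht
      rfl
  rw [card_product] at h2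
  calc _ ≤ r ^ 2 * (#E * #E) := Nat.mul_le_mul_left _ h2
    _ = (r * #E) * (r * #E) := by ring
    _ ≤ (2 * #B ^ 2) * (2 * #B ^ 2) := Nat.mul_le_mul h1 h1
    _ = _ := by ring

open Finset in
lemma main_count (B₁ B₂ : Finset ℝ) (hcard : #B₁ = #B₂) (hn : 64 ≤ #B₁)
    (hlt : ∀ x ∈ B₁, ∀ y ∈ B₂, x < y) :
    ∃ p ∈ B₁ ×ˢ B₁, #B₁ ^ 2 ≤
      512 * #((B₂ ×ˢ B₂).image fun q : ℝ × ℝ => (q.2 - p.2) / (q.1 - p.1)) := by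
  classical
  obtain ⟨c₁, hc₁, hr₁, hf₁⟩ := cells_exist B₁ 64 (by norm_num) hn
  obtain ⟨c₂, hc₂, hr₂, hf₂⟩ := cells_exist B₂ 64 (by norm_num) (hcard ▸ hn)
  set n := #B₁ with hndef
  set PQ := (B₁ ×ˢ B₁) ×ˢ (B₂ ×ˢ B₂) with hPQ
  set line : (ℝ × ℝ) × (ℝ × ℝ) → ℝ × ℝ := fun z =>
    ((z.2.2 - z.1.2) / (z.2.1 - z.1.1),
      z.1.2 - (z.2.2 - z.1.2) / (z.2.1 - z.1.1) * z.1.1) with hline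
  set D : ℝ × ℝ → ℕ := fun p =>
    #((B₂ ×ˢ B₂).image fun q : ℝ × ℝ => (q.2 - p.2) / (q.1 - p.1)) with hD
  have hprop : ∀ z ∈ PQ, 0 < (line z).1 ∧ (line z).1 * z.1.1 + (line z).2 = z.1.2 ∧
      (line z).1 * z.2.1 + (line z).2 = z.2.2 := by
    rintro ⟨⟨a, b⟩, x, y⟩ hz
    simp only [hPQ, mem_product] at hz
    have h1 := hlt a hz.1.1 x hz.2.1
    have h2 := hlt b hz.1.2 y hz.2.2
    have h3 : x - a ≠ 0 := by linarith
    simp only [hline]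
    refine ⟨div_pos (by linarith) (by linarith), by ring, ?_⟩
    field_simp
    ring
  set L := PQ.image line with hL
  have hpos : ∀ l ∈ L, 0 < l.1 := by
    intro l hl
    obtain ⟨z, hz, rfl⟩ := mem_image.1 hl
    exact (hprop z hz).1
  have hN₁ := sum_cellPairs B₁ 64 c₁ hf₁ L
  have hN₂ := sum_cellPairs B₂ 64 c₂ hf₂ L
  rw [← hcard] at hN₂
  -- total number of pairs
  have htot : n ^ 4 ≤ ∑ l ∈ L, #(onLine B₁ l) * #(onLine B₂ l) := by
    have e : #PQ = n ^ 4 := by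
      simp only [hPQ, card_product, ← hcard]
      ring
    rw [← e, card_eq_sum_card_image line PQ]
    refine sum_le_sum fun l _ => ?_
    rw [← card_product]
    apply card_le_card_of_injOn (fun z => (z.1.1, z.2.1))
    · rintro z hz
      simp only [coe_filter, Set.mem_ofPred_eq] at hz
      obtain ⟨hz, rfl⟩ := hz
      obtain ⟨-, h1, h2⟩ := hprop z hz
      simp only [hPQ, mem_product] at hz
      simp only [mem_coe, mem_product, onLine, mem_filter, h1, h2]
      tauto
    · rintro z hz w hw h
      simp only [coe_filter, Set.mem_ofPred_eq] at hz hw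
      obtain ⟨hz, hzl⟩ := hz
      obtain ⟨hw, hwl⟩ := hw
      obtain ⟨-, h1, h2⟩ := hprop z hz
      obtain ⟨-, h3, h4⟩ := hprop w hw
      rw [hzl] at h1 h2
      rw [hwl] at h3 h4
      simp only [Prod.mk.injEq] at h
      rw [h.1] at h1
      rw [h.2] at h2
      exact Prod.ext (Prod.ext h.1 (h1.symm.trans h3)) (Prod.ext h.2 (h2.symm.trans h4))
  have hper : ∀ l ∈ L, #(onLine B₁ l) * #(onLine B₂ l) ≤
      256 * #(onLine B₁ l) + 256 * #(cellPairs B₁ c₁ l) + 256 * #(cellPairs B₂ c₂ l) := by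
    intro l hl
    have r1 := rich_line B₁ 64 c₁ hc₁ hr₁ l (hpos l hl)
    have r2 := rich_line B₂ 64 c₂ hc₂ hr₂ l (hpos l hl)
    norm_num at r1 r2
    generalize #(onLine B₁ l) = k₁ at *
    generalize #(onLine B₂ l) = k₂ at *
    by_cases h2 : k₂ ≤ 256
    · nlinarith
    · have r2' := r2.resolve_left h2
      rcases le_total k₁ k₂ with h | h
      · nlinarith
      · have r1' := r1.resolve_left (by omega)
        nlinarith
  have hinc : ∑ l ∈ L, #(onLine B₁ l) ≤ ∑ p ∈ B₁ ×ˢ B₁, D p := by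
    rw [← card_sigma, hD, ← card_sigma]
    apply card_le_card_of_injOn
      (fun z => (⟨(z.2, z.1.1 * z.2 + z.1.2), z.1.1⟩ : (_ : ℝ × ℝ) × ℝ))
    · rintro ⟨l, x⟩ hz
      simp only [coe_sigma, Set.mem_sigma_iff, mem_coe, onLine, mem_filter] at hz
      obtain ⟨hl, hx, hy⟩ := hz
      obtain ⟨z, hz, rfl⟩ := mem_image.1 hl
      obtain ⟨-, -, h2⟩ := hprop z hz
      simp only [hPQ, mem_product] at hz
      simp only [coe_sigma, Set.mem_sigma_iff, mem_coe, mem_product, mem_image]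
      refine ⟨⟨hx, hy⟩, z.2, hz.2, ?_⟩
      have hne : z.2.1 - x ≠ 0 := by linarith [hlt x hx _ hz.2.1]
      rw [div_eq_iff hne]
      linarith
    · rintro ⟨⟨m, t⟩, x⟩ _ ⟨⟨m', t'⟩, x'⟩ _ h
      simp only [Sigma.mk.injEq, Prod.mk.injEq, heq_eq_eq] at h
      obtain ⟨⟨rfl, h1⟩, rfl⟩ := h
      have : t = t' := by linarith
      subst this
      rfl
  have hsum := htot.trans (sum_le_sum hper)
  simp only [sum_add_distrib, ← mul_sum] at hsum
  have hfin : ∑ _p ∈ B₁ ×ˢ B₁, n ^ 2 ≤ ∑ p ∈ B₁ ×ˢ B₁, 512 * D p := by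
    rw [sum_const, card_product, smul_eq_mul, ← mul_sum]
    have : n * n * n ^ 2 = n ^ 4 := by ring
    rw [← hndef, this]
    clear_value n
    rw [← hndef] at hN₁
    linarith
  refine exists_le_of_sum_le ?_ hfin
  have : B₁.Nonempty := card_pos.1 (by omega)
  exact this.product this

/-- There are absolute constants `c > 0` and `N₀` such that if `B₁, B₂ ⊆ ℝ` are finite sets
with `|B₁| = |B₂| = n ≥ N₀` and every element of `B₁` is smaller than every element of `B₂`,
then there exist `a, b ∈ B₁` such that the ratio set `{(y - b)/(x - a) : x, y ∈ B₂}` has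
cardinality at least `c·n²`. -/
theorem point_with_many_directions :
    ∃ c : ℝ, 0 < c ∧ ∃ N₀ : ℕ,
      ∀ B₁ B₂ : Finset ℝ, B₁.card = B₂.card → N₀ ≤ B₁.card →
        (∀ x ∈ B₁, ∀ y ∈ B₂, x < y) →
        ∃ a ∈ B₁, ∃ b ∈ B₁,
          c * (B₁.card : ℝ) ^ 2 ≤
            ({s : ℝ | ∃ x ∈ B₂, ∃ y ∈ B₂, s = (y - b) / (x - a)}).ncard := by
  refine ⟨1 / 512, by norm_num, 64, ?_⟩
  intro B₁ B₂ hcard hn hlt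
  obtain ⟨⟨a, b⟩, hp, h⟩ := main_count B₁ B₂ hcard hn hlt
  rw [Finset.mem_product] at hp
  refine ⟨a, hp.1, b, hp.2, ?_⟩
  have hset : {s : ℝ | ∃ x ∈ B₂, ∃ y ∈ B₂, s = (y - b) / (x - a)} =
      (((B₂ ×ˢ B₂).image fun q : ℝ × ℝ => (q.2 - b) / (q.1 - a) : Finset ℝ) : Set ℝ) := by
    ext s
    simp only [Set.mem_ofPred_eq, Finset.coe_image, Set.mem_image, Finset.mem_coe,
      Finset.mem_product, Prod.exists]
    constructor
    · rintro ⟨x, hx, y, hy, rfl⟩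
      exact ⟨x, y, ⟨hx, hy⟩, rfl⟩
    · rintro ⟨x, y, ⟨hx, hy⟩, rfl⟩
      exact ⟨x, hx, y, hy, rfl⟩
  rw [hset, Set.ncard_coe_finset]
  have h' : ((B₁.card ^ 2 : ℕ) : ℝ) ≤ ((512 * ((B₂ ×ˢ B₂).image
      fun q : ℝ × ℝ => (q.2 - b) / (q.1 - a)).card : ℕ) : ℝ) := Nat.cast_le.2 h
  push_cast at h'
  linarith
end

section
/- There is an absolute constant C > 0 such that for every finite set S ⊂ ℝ² and every integer t ≥ 2, the number of lines containing at least t points of S satisfies |L_t(S)| ≤ C·( |S|²/t³ + |S|/t ), where L_t(S) := { ℓ a line in ℝ² : |ℓ ∩ S| ≥ t }. -/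
namespace ST

/-- An edge `((a, b), (l, r))`: the part of the line `y = a x + b` above `[l, r]`. -/
abbrev Edge := (ℝ × ℝ) × (ℝ × ℝ)

noncomputable def ht (e : Edge) (x : ℝ) : ℝ := e.1.1 * x + e.1.2
noncomputable def lp (e : Edge) : ℝ × ℝ := (e.2.1, ht e e.2.1)
noncomputable def rp (e : Edge) : ℝ × ℝ := (e.2.2, ht e e.2.2)

lemma cross_exists (e g : Edge) (u w : ℝ) (huw : u < w) (h1 : ht g u < ht e u)
    (h2 : ht e w < ht g w) : ∃ y, u < y ∧ y < w ∧ ht e y = ht g y := by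
  have hc : ContinuousOn (fun x => ht g x - ht e x) (Set.Icc u w) := by
    unfold ht; fun_prop
  have := intermediate_value_Ioo huw.le hc
  obtain ⟨y, hy, hy0⟩ := this (show (0:ℝ) ∈ Set.Ioo _ _ from ⟨by linarith, by linarith⟩)
  refine ⟨y, hy.1, hy.2, ?_⟩
  simp only at hy0
  linarith

lemma no_between (V : Finset (ℝ × ℝ)) (E : Finset Edge)
    (hl : ∀ e ∈ E, lp e ∈ V)
    (hv : ∀ e ∈ E, ∀ v ∈ V, e.2.1 < v.1 → v.1 < e.2.2 → v.2 ≠ ht e v.1)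
    (hc : ∀ e ∈ E, ∀ g ∈ E, ∀ x, e.2.1 < x → x < e.2.2 → g.2.1 < x → x < g.2.2 →
      ht e x = ht g x → e = g)
    (e e' : Edge) (he : e ∈ E) (he' : e' ∈ E) (hp : lp e' = lp e)
    (hnext : ∀ g ∈ E, lp g = lp e → e.1.1 < g.1.1 → e'.1.1 ≤ g.1.1)
    (X : ℝ) (hX : X ≤ e.2.2) (hX' : X ≤ e'.2.2)
    (hW : ∀ v ∈ V, e.2.1 < v.1 → v.1 < X → ht e v.1 ≤ v.2 → v.2 ≤ ht e' v.1 → False)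
    (g : Edge) (hg : g ∈ E) (x0 : ℝ) (h1 : g.2.1 < x0) (h2 : x0 ≤ g.2.2)
    (h3 : e.2.1 < x0) (h4 : x0 ≤ X) (h5 : ht e x0 < ht g x0) (h6 : ht g x0 < ht e' x0) :
    False := by
  have hpx : e'.2.1 = e.2.1 := (Prod.ext_iff.1 hp).1
  have hpy : ht e' e.2.1 = ht e e.2.1 := by
    have := congrArg Prod.snd hp
    simp only [lp] at this
    rwa [hpx] at this
  have c1 : ∀ u, e.2.1 ≤ u → g.2.1 ≤ u → u < x0 → ht g u < ht e u → False := by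
    intro u hu hu' hux hlt
    obtain ⟨y, hy1, hy2, hy3⟩ := cross_exists e g u x0 hux hlt h5
    have := hc e he g hg y (by linarith) (by linarith) (by linarith) (by linarith) hy3
    subst this
    linarith
  have c2 : ∀ u, e.2.1 ≤ u → g.2.1 ≤ u → u < x0 → ht e' u < ht g u → False := by
    intro u hu hu' hux hlt
    obtain ⟨y, hy1, hy2, hy3⟩ := cross_exists g e' u x0 hux hlt h6
    have := hc e' he' g hg y (by linarith) (by linarith) (by linarith) (by linarith) hy3.symm
    subst this
    linarith
  rcases lt_or_ge e.2.1 g.2.1 with h | h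
  · have h7 := c1 g.2.1 h.le le_rfl h1
    have h8 := c2 g.2.1 h.le le_rfl h1
    exact hW (lp g) (hl g hg) h (by simp only [lp]; linarith)
      (by simp only [lp]; by_contra hh; exact h7 (not_le.mp hh))
      (by simp only [lp]; by_contra hh; exact h8 (not_le.mp hh))
  · have h7 := c1 e.2.1 le_rfl h h3
    have h8 := c2 e.2.1 le_rfl h h3
    have h9 : ht g e.2.1 = ht e e.2.1 := by
      apply le_antisymm
      · rw [← hpy]; exact not_lt.mp h8
      · exact not_lt.mp h7
    rcases h.lt_or_eq with h' | h'
    · exact hv g hg (lp e) (hl e he) h' (by simp only [lp]; linarith) h9.symm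
    · have hlg : lp g = lp e := by
        simp only [lp]; rw [h', h9]
      have : e.1.1 < g.1.1 := by
        by_contra hh
        simp only [ht] at h9 h5
        nlinarith
      have := hnext g hg hlg this
      simp only [ht] at h9 h6 hpy
      nlinarith

lemma planar (V : Finset (ℝ × ℝ)) (E : Finset Edge) (hlr : ∀ e ∈ E, e.2.1 < e.2.2)
    (hl : ∀ e ∈ E, lp e ∈ V) (hr : ∀ e ∈ E, rp e ∈ V)
    (hv : ∀ e ∈ E, ∀ v ∈ V, e.2.1 < v.1 → v.1 < e.2.2 → v.2 ≠ ht e v.1)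
    (hc : ∀ e ∈ E, ∀ g ∈ E, ∀ x, e.2.1 < x → x < e.2.2 → g.2.1 < x → x < g.2.2 →
      ht e x = ht g x → e = g) : E.card ≤ 3 * V.card := by
  classical
  let E1 := E.filter (fun e => ∀ g ∈ E, lp g = lp e → g.1.1 ≤ e.1.1)
  let E2 := E.filter (fun e => ∀ g ∈ E, rp g = rp e → e.1.1 ≤ g.1.1)
  let P : Edge → ℝ × ℝ → Prop := fun e v => v ∈ V ∧ e.2.1 < v.1 ∧ v.1 < e.2.2 ∧ ht e v.1 < v.2 ∧
    ∀ g ∈ E, g.2.1 < v.1 → v.1 < g.2.2 → ht g v.1 < v.2 → ht g v.1 ≤ ht e v.1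
  let E3 := E.filter (fun e => ∃ v, P e v)
  have hE1 : E1.card ≤ V.card := by
    apply Finset.card_le_card_of_injOn lp
    · intro e he
      exact hl e (Finset.mem_filter.mp he).1
    · intro e he g hg heg
      obtain ⟨he1, he2⟩ := Finset.mem_filter.mp he
      obtain ⟨hg1, hg2⟩ := Finset.mem_filter.mp hg
      have ha : e.1.1 = g.1.1 := le_antisymm (hg2 e he1 heg) (he2 g hg1 heg.symm)
      have hx : e.2.1 = g.2.1 := (Prod.ext_iff.1 heg).1
      have hy : ht e e.2.1 = ht g g.2.1 := congrArg Prod.snd heg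
      have := hlr e he1
      have := hlr g hg1
      obtain ⟨x, hx1, hx2⟩ := exists_between (lt_min (hlr e he1) (hx ▸ hlr g hg1))
      rw [lt_min_iff] at hx2
      refine hc e he1 g hg1 x hx1 hx2.1 (by linarith) hx2.2 ?_
      simp only [ht] at hy ⊢
      rw [← hx, ha] at hy
      rw [ha]; linarith
  have hE2 : E2.card ≤ V.card := by
    apply Finset.card_le_card_of_injOn rp
    · intro e he
      exact hr e (Finset.mem_filter.mp he).1
    · intro e he g hg heg
      obtain ⟨he1, he2⟩ := Finset.mem_filter.mp he
      obtain ⟨hg1, hg2⟩ := Finset.mem_filter.mp hg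
      have ha : e.1.1 = g.1.1 := le_antisymm (he2 g hg1 heg.symm) (hg2 e he1 heg)
      have hx : e.2.2 = g.2.2 := congrArg Prod.fst heg
      have hy : ht e e.2.2 = ht g g.2.2 := congrArg Prod.snd heg
      obtain ⟨x, hx1, hx2⟩ := exists_between (max_lt (hlr e he1) (hx ▸ hlr g hg1))
      rw [max_lt_iff] at hx1
      refine hc e he1 g hg1 x hx1.1 hx2 hx1.2 (by linarith) ?_
      simp only [ht] at hy ⊢
      rw [← hx, ha] at hy
      rw [ha]; linarith
  have hE3 : E3.card ≤ V.card := by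
    have : ∀ e : Edge, ∃ v, e ∈ E3 → P e v := by
      intro e
      by_cases h : e ∈ E3
      · obtain ⟨v, hv⟩ := (Finset.mem_filter.mp h).2
        exact ⟨v, fun _ => hv⟩
      · exact ⟨0, fun h' => absurd h' h⟩
    choose f hf using this
    apply Finset.card_le_card_of_injOn f
    · intro e he
      exact (hf e he).1
    · intro e he g hg heg
      obtain ⟨-, h1, h2, h3, h4⟩ := hf e he
      obtain ⟨-, k1, k2, k3, k4⟩ := hf g hg
      have he1 := (Finset.mem_filter.mp he).1
      have hg1 := (Finset.mem_filter.mp hg).1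
      rw [← heg] at k1 k2 k3 k4
      exact hc e he1 g hg1 (f e).1 h1 h2 k1 k2 (le_antisymm (k4 e he1 h1 h2 h3) (h4 g hg1 k1 k2 k3))
  have hcov : E ⊆ E1 ∪ E2 ∪ E3 := by
    intro e he
    by_cases h1 : e ∈ E1
    · simp [h1]
    have hN : (E.filter (fun g => lp g = lp e ∧ e.1.1 < g.1.1)).Nonempty := by
      simp only [E1, Finset.mem_filter, not_and, not_forall, not_le] at h1
      obtain ⟨g, hg, hge, hlt⟩ := h1 he
      exact ⟨g, by simp [hg, hge, hlt]⟩
    obtain ⟨e', he'N, hmin⟩ := Finset.exists_min_image _ (fun g : Edge => g.1.1) hN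
    obtain ⟨he', hp, hae⟩ := Finset.mem_filter.mp he'N
    have hnext : ∀ g ∈ E, lp g = lp e → e.1.1 < g.1.1 → e'.1.1 ≤ g.1.1 := by
      intro g hg h h'
      exact hmin g (by simp [hg, h, h'])
    have hpx : e'.2.1 = e.2.1 := (Prod.ext_iff.1 hp).1
    have hpy : ht e' e.2.1 = ht e e.2.1 := by
      have := congrArg Prod.snd hp
      simp only [lp] at this
      rwa [hpx] at this
    have hlt : ∀ x, e.2.1 < x → ht e x < ht e' x := by
      intro x hx
      simp only [ht] at hpy ⊢
      nlinarith
    let W := V.filter (fun v => e.2.1 < v.1 ∧ v.1 ≤ e.2.2 ∧ v.1 ≤ e'.2.2 ∧ ht e v.1 ≤ v.2 ∧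
      v.2 ≤ ht e' v.1)
    have hWne : W.Nonempty := by
      rcases le_total e.2.2 e'.2.2 with h | h
      · refine ⟨rp e, Finset.mem_filter.mpr ⟨hr e he, hlr e he, le_rfl, h, le_rfl, ?_⟩⟩
        exact (hlt _ (hlr e he)).le
      · have h0 := hlr e' he'
        rw [hpx] at h0
        refine ⟨rp e', Finset.mem_filter.mpr ⟨hr e' he', h0, h, le_rfl, ?_, le_rfl⟩⟩
        exact (hlt _ h0).le
    obtain ⟨r, hrW, hrmin⟩ := Finset.exists_min_image W (fun v => v.1) hWne
    obtain ⟨hrV, r1, r2, r3, r4, r5⟩ := Finset.mem_filter.mp hrW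
    have key := no_between V E hl hv hc e e' he he' hp hnext r.1 r2 r3 (by
      intro v hv k1 k2 k3 k4
      have := hrmin v (Finset.mem_filter.mpr ⟨hv, k1, by linarith, by linarith, k3, k4⟩)
      linarith)
    rcases r2.lt_or_eq with hlt2 | heq
    · have : e ∈ E3 := by
        refine Finset.mem_filter.mpr ⟨he, r, hrV, r1, hlt2, ?_, ?_⟩
        · exact lt_of_le_of_ne r4 (fun h => hv e he r hrV r1 hlt2 h.symm)
        · intro g hg k1 k2 k3
          by_contra hh
          exact key g hg r.1 k1 k2.le r1 le_rfl (not_le.mp hh) (by linarith)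
      simp [this]
    · have : e ∈ E2 := by
        refine Finset.mem_filter.mpr ⟨he, ?_⟩
        intro g hg hgr
        by_contra hh
        push Not at hh
        have hx : g.2.2 = e.2.2 := congrArg Prod.fst hgr
        have hy : ht g e.2.2 = ht e e.2.2 := by
          have := congrArg Prod.snd hgr
          simp only [rp] at this
          rwa [hx] at this
        have hg' := hlr g hg
        have h9 : ht g e.2.2 < ht e' e.2.2 := by rw [hy]; exact hlt _ (hlr e he)
        -- find x0 slightly to the left
        have hcont : ∀ᶠ x in nhdsWithin e.2.2 (Set.Iio e.2.2), ht g x < ht e' x := by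
          have c1 : Continuous (ht g) := by unfold ht; fun_prop
          have c2 : Continuous (ht e') := by unfold ht; fun_prop
          exact nhdsWithin_le_nhds (c1.continuousAt.eventually_lt c2.continuousAt h9)
        have hI : ∀ᶠ x in nhdsWithin e.2.2 (Set.Iio e.2.2), x ∈ Set.Ioo (max e.2.1 g.2.1) e.2.2 :=
          Ioo_mem_nhdsLT (max_lt (hlr e he) (hx ▸ hg'))
        obtain ⟨x0, hx0, hx0'⟩ := (hcont.and hI).exists
        have hm := max_lt_iff.mp hx0'.1
        have hx2 := hx0'.2
        refine key g hg x0 hm.2 (by linarith) hm.1 (by linarith) ?_ hx0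
        simp only [ht] at hy ⊢
        nlinarith
      simp [this]
  calc E.card ≤ (E1 ∪ E2 ∪ E3).card := Finset.card_le_card hcov
    _ ≤ (E1 ∪ E2).card + E3.card := Finset.card_union_le _ _
    _ ≤ E1.card + E2.card + E3.card := by gcongr; exact Finset.card_union_le _ _
    _ ≤ 3 * V.card := by omega

/-- interior crossing -/
def Cr (p : Edge × Edge) : Prop := p.1 ≠ p.2 ∧ ∃ x, p.1.2.1 < x ∧ x < p.1.2.2 ∧ p.2.2.1 < x ∧
  x < p.2.2.2 ∧ ht p.1 x = ht p.2 x

open Classical in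
noncomputable def four (p : Edge × Edge) : Finset (ℝ × ℝ) := {lp p.1, rp p.1, lp p.2, rp p.2}

open Classical in
lemma weak_crossing (V : Finset (ℝ × ℝ)) (E : Finset Edge) (hlr : ∀ e ∈ E, e.2.1 < e.2.2)
    (hv : ∀ e ∈ E, ∀ v ∈ V, e.2.1 < v.1 → v.1 < e.2.2 → v.2 ≠ ht e v.1)
    (A : Finset (ℝ × ℝ)) (hA : A ⊆ V) :
    (E.filter (fun e => ({lp e, rp e} : Finset (ℝ × ℝ)) ⊆ A)).card ≤ 3 * A.card +
      (((E ×ˢ E).filter Cr).filter (fun p => four p ⊆ A)).card := by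
  set F := E.filter (fun e => ({lp e, rp e} : Finset (ℝ × ℝ)) ⊆ A) with hF
  set C := ((E ×ˢ E).filter Cr).filter (fun p => four p ⊆ A) with hC
  have hFm : ∀ e, e ∈ F ↔ e ∈ E ∧ lp e ∈ A ∧ rp e ∈ A := by
    intro e; simp [hF, Finset.insert_subset_iff]
  have h1 : (F \ C.image Prod.fst).card ≤ 3 * A.card := by
    apply planar
    · intro e he; exact hlr e ((hFm e).1 (Finset.mem_sdiff.1 he).1).1
    · intro e he; exact ((hFm e).1 (Finset.mem_sdiff.1 he).1).2.1
    · intro e he; exact ((hFm e).1 (Finset.mem_sdiff.1 he).1).2.2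
    · intro e he v hvA; exact hv e ((hFm e).1 (Finset.mem_sdiff.1 he).1).1 v (hA hvA)
    · intro e he g hg x h1 h2 h3 h4 h5
      by_contra hne
      obtain ⟨he1, he2⟩ := Finset.mem_sdiff.1 he
      obtain ⟨hg1, -⟩ := Finset.mem_sdiff.1 hg
      rw [hFm] at he1 hg1
      apply he2
      refine Finset.mem_image.2 ⟨(e, g), ?_, rfl⟩
      simp only [hC, Finset.mem_filter, Finset.mem_product, four, Finset.insert_subset_iff,
        Finset.singleton_subset_iff]
      exact ⟨⟨⟨he1.1, hg1.1⟩, hne, x, h1, h2, h3, h4, h5⟩, he1.2.1, he1.2.2, hg1.2.1, hg1.2.2⟩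
  have h2 : (C.image Prod.fst).card ≤ C.card := Finset.card_image_le
  have h3 := Finset.le_card_sdiff (C.image Prod.fst) F
  omega

open Classical in
lemma wsum {α : Type*} (V B : Finset α) (hB : B ⊆ V) (j : ℕ) :
    (∑ A ∈ V.powerset, if B ⊆ A then j ^ (V.card - A.card) else 0) * (j + 1) ^ B.card
      = (j + 1) ^ V.card := by
  have h : (∑ A ∈ V.powerset, if B ⊆ A then j ^ (V.card - A.card) else 0)
      = ∑ A ∈ (V \ B).powerset, 1 ^ A.card * j ^ ((V \ B).card - A.card) := by
    rw [← Finset.sum_filter]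
    symm
    refine Finset.sum_nbij' (fun A => B ∪ A) (fun A => A \ B) ?_ ?_ ?_ ?_ ?_
    · intro A hA
      rw [Finset.mem_powerset] at hA
      simp only [Finset.mem_filter, Finset.mem_powerset]
      exact ⟨Finset.union_subset hB (hA.trans Finset.sdiff_subset), Finset.subset_union_left⟩
    · intro A hA
      simp only [Finset.mem_filter, Finset.mem_powerset] at hA ⊢
      exact Finset.sdiff_subset_sdiff hA.1 le_rfl
    · intro A hA
      rw [Finset.mem_powerset] at hA
      have : Disjoint A B := Finset.disjoint_of_subset_left hA Finset.sdiff_disjoint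
      rw [Finset.union_sdiff_left]
      exact this.sdiff_eq_left
    · intro A hA
      simp only [Finset.mem_filter] at hA
      exact Finset.union_sdiff_of_subset hA.2
    · intro A hA
      rw [Finset.mem_powerset] at hA
      have : Disjoint A B := Finset.disjoint_of_subset_left hA Finset.sdiff_disjoint
      rw [Finset.card_union_of_disjoint this.symm, Finset.card_sdiff_of_subset hB, one_pow, one_mul,
        Nat.sub_sub]
  rw [h, Finset.sum_pow_mul_eq_add_pow, ← Finset.card_sdiff_add_card_eq_card hB, pow_add, add_comm 1 j]

open Classical in
lemma crossing (V : Finset (ℝ × ℝ)) (E : Finset Edge) (hlr : ∀ e ∈ E, e.2.1 < e.2.2)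
    (hl : ∀ e ∈ E, lp e ∈ V) (hr : ∀ e ∈ E, rp e ∈ V)
    (hv : ∀ e ∈ E, ∀ v ∈ V, e.2.1 < v.1 → v.1 < e.2.2 → v.2 ≠ ht e v.1)
    (h4 : ∀ p ∈ (E ×ˢ E).filter Cr, (four p).card = 4) (j : ℕ) :
    E.card * (j + 1) ^ 2 ≤ 3 * V.card * (j + 1) ^ 3 + ((E ×ˢ E).filter Cr).card := by
  set C := (E ×ˢ E).filter Cr with hC
  have gen : ∀ {β : Type} (T : Finset β) (f : β → Finset (ℝ × ℝ)) (d : ℕ), d ≤ 4 →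
      (∀ b ∈ T, f b ⊆ V) → (∀ b ∈ T, (f b).card = d) →
      (∑ A ∈ V.powerset, (T.filter (fun b => f b ⊆ A)).card * j ^ (V.card - A.card)) * (j + 1) ^ 4
        = T.card * (j + 1) ^ (4 - d) * (j + 1) ^ V.card := by
    intro β T f d hd hsub hcard
    have : ∀ A ∈ V.powerset, (T.filter (fun b => f b ⊆ A)).card * j ^ (V.card - A.card)
        = ∑ b ∈ T, if f b ⊆ A then j ^ (V.card - A.card) else 0 := by
      intro A _
      rw [Finset.card_filter, Finset.sum_mul]
      refine Finset.sum_congr rfl fun b _ => ?_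
      split_ifs <;> simp
    rw [Finset.sum_congr rfl this, Finset.sum_comm, Finset.sum_mul]
    have h2 : ∀ b ∈ T, (∑ A ∈ V.powerset, if f b ⊆ A then j ^ (V.card - A.card) else 0) *
        (j + 1) ^ 4 = (j + 1) ^ (4 - d) * (j + 1) ^ V.card := by
      intro b hb
      rw [← wsum V (f b) (hsub b hb) j, hcard b hb]
      have : (j + 1) ^ 4 = (j + 1) ^ (4 - d) * (j + 1) ^ d := by
        rw [← pow_add]; congr 1; omega
      rw [this]; ring
    rw [Finset.sum_congr rfl h2, Finset.sum_const, smul_eq_mul, mul_assoc]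
  have gE := gen E (fun e => {lp e, rp e}) 2 (by norm_num)
    (by intro e he; simp [Finset.insert_subset_iff, hl e he, hr e he])
    (by
      intro e he
      apply Finset.card_pair
      intro h
      have : e.2.1 = e.2.2 := congrArg (fun p : ℝ × ℝ => p.1) h
      exact (hlr e he).ne this)
  have gV := gen V (fun v => {v}) 1 (by norm_num) (by simp) (by simp)
  have gC := gen C four 4 le_rfl
    (by
      intro p hp
      have := Finset.mem_product.1 (Finset.mem_filter.1 hp).1
      simp [four, Finset.insert_subset_iff, hl _ this.1, hr _ this.1, hl _ this.2, hr _ this.2])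
    h4
  have hsum : (∑ A ∈ V.powerset, (E.filter (fun e => ({lp e, rp e} : Finset (ℝ × ℝ)) ⊆ A)).card *
        j ^ (V.card - A.card)) ≤
      3 * (∑ A ∈ V.powerset, (V.filter (fun v => ({v} : Finset (ℝ × ℝ)) ⊆ A)).card *
        j ^ (V.card - A.card)) +
      (∑ A ∈ V.powerset, (C.filter (fun p => four p ⊆ A)).card * j ^ (V.card - A.card)) := by
    rw [Finset.mul_sum, ← Finset.sum_add_distrib]
    refine Finset.sum_le_sum fun A hA => ?_
    have hA' := Finset.mem_powerset.1 hA
    have hVA : V.filter (fun v => ({v} : Finset (ℝ × ℝ)) ⊆ A) = A := by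
      ext v
      simp only [Finset.singleton_subset_iff, Finset.mem_filter]
      exact ⟨fun h => h.2, fun h => ⟨hA' h, h⟩⟩
    rw [hVA, ← mul_assoc, ← add_mul]
    exact Nat.mul_le_mul_right _ (weak_crossing V E hlr hv A hA')
  have hm := Nat.mul_le_mul_right ((j + 1) ^ 4) hsum
  rw [add_mul, mul_assoc 3, gE, gV, gC] at hm
  have hpos : 0 < (j + 1) ^ V.card := by positivity
  refine Nat.le_of_mul_le_mul_right ?_ hpos
  calc _ ≤ _ := hm
    _ = _ := by norm_num; ring

open Classical in
lemma rich (S L : Finset (ℝ × ℝ)) (t : ℕ)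
    (hL : ∀ l ∈ L, t ≤ (S.filter (fun p => p.2 = l.1 * p.1 + l.2)).card) (j : ℕ) :
    L.card * (t - 1) * (j + 1) ^ 2 ≤ 3 * S.card * (j + 1) ^ 3 + L.card ^ 2 := by
  let X := S.image Prod.fst
  let E : Finset Edge := (L ×ˢ (X ×ˢ X)).filter (fun e => e.2.1 < e.2.2 ∧ lp e ∈ S ∧ rp e ∈ S ∧
    ∀ v ∈ S, e.2.1 < v.1 → v.1 < e.2.2 → v.2 ≠ ht e v.1)
  have hE : ∀ e ∈ E, e.1 ∈ L ∧ e.2.1 < e.2.2 ∧ lp e ∈ S ∧ rp e ∈ S ∧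
    ∀ v ∈ S, e.2.1 < v.1 → v.1 < e.2.2 → v.2 ≠ ht e v.1 := by
    intro e he
    have := Finset.mem_filter.1 he
    exact ⟨(Finset.mem_product.1 this.1).1, this.2⟩
  -- two edges on the same line sharing an interior point coincide
  have same : ∀ e ∈ E, ∀ g ∈ E, e.1 = g.1 → ∀ x, e.2.1 < x → x < e.2.2 → g.2.1 < x → x < g.2.2 →
      e = g := by
    intro e he g hg heg x h1 h2 h3 h4
    have hht : ∀ y, ht e y = ht g y := by intro y; simp [ht, heg]
    obtain ⟨-, e1, e2, e3, e4⟩ := hE e he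
    obtain ⟨-, g1, g2, g3, g4⟩ := hE g hg
    have a1 : ¬ e.2.1 < g.2.1 := fun h => e4 (lp g) g2 h (by simp only [lp]; linarith) (hht _).symm
    have a2 : ¬ g.2.1 < e.2.1 := fun h => g4 (lp e) e2 h (by simp only [lp]; linarith) (hht _)
    have a3 : ¬ e.2.2 < g.2.2 := fun h => g4 (rp e) e3 (by simp only [rp]; linarith) h (hht _)
    have a4 : ¬ g.2.2 < e.2.2 := fun h => e4 (rp g) g3 (by simp only [rp]; linarith) h (hht _).symm
    refine Prod.ext heg (Prod.ext ?_ ?_) <;> apply le_antisymm <;> linarith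
  -- two points in common force the same line
  have two : ∀ e g : Edge, ∀ x y, x ≠ y → ht e x = ht g x → ht e y = ht g y → e.1 = g.1 := by
    intro e g x y hxy h1 h2
    simp only [ht] at h1 h2
    have : (e.1.1 - g.1.1) * (x - y) = 0 := by linarith
    have ha : e.1.1 = g.1.1 := by
      rcases mul_eq_zero.1 this with h | h
      · linarith
      · exact absurd (sub_eq_zero.1 h) hxy
    refine Prod.ext ha ?_
    rw [ha] at h1; linarith
  have hcross := crossing S E (fun e he => (hE e he).2.1) (fun e he => (hE e he).2.2.1)
    (fun e he => (hE e he).2.2.2.1) (fun e he => (hE e he).2.2.2.2) (by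
      rintro ⟨e, g⟩ hp
      obtain ⟨hp, hne, x, h1, h2, h3, h4, h5⟩ := Finset.mem_filter.1 hp
      obtain ⟨he, hg⟩ := Finset.mem_product.1 hp
      simp only at h1 h2 h3 h4 h5 he hg hne
      have hne1 : e.1 ≠ g.1 := fun h => hne (same e he g hg h x h1 h2 h3 h4)
      have hd : ∀ y z, y ≠ x → ((y, ht e y) : ℝ × ℝ) ≠ (z, ht g z) := by
        intro y z hy h
        obtain ⟨rfl, h'⟩ := Prod.mk.inj h
        exact hne1 (two e g y x hy h' h5)
      have q1 : lp e ≠ rp e := fun h => (hE e he).2.1.ne (congrArg (fun p : ℝ × ℝ => p.1) h)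
      have q2 : lp g ≠ rp g := fun h => (hE g hg).2.1.ne (congrArg (fun p : ℝ × ℝ => p.1) h)
      have q3 : lp e ≠ lp g := hd _ _ h1.ne
      have q4 : lp e ≠ rp g := hd _ _ h1.ne
      have q5 : rp e ≠ lp g := hd _ _ h2.ne'
      have q6 : rp e ≠ rp g := hd _ _ h2.ne'
      simp [four, q1, q2, q3, q4, q5, q6]) j
  have hCr : ((E ×ˢ E).filter Cr).card ≤ L.card ^ 2 := by
    rw [sq, ← Finset.card_product]
    apply Finset.card_le_card_of_injOn (fun p => (p.1.1, p.2.1))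
    · rintro ⟨e, g⟩ hp
      obtain ⟨he, hg⟩ := Finset.mem_product.1 (Finset.mem_filter.1 hp).1
      exact Finset.mem_product.2 ⟨(hE e he).1, (hE g hg).1⟩
    · rintro ⟨e, g⟩ hp ⟨e', g'⟩ hp' heq
      obtain ⟨hp, hne, x, h1, h2, h3, h4, h5⟩ := Finset.mem_filter.1 hp
      obtain ⟨he, hg⟩ := Finset.mem_product.1 hp
      obtain ⟨hp', hne', x', h1', h2', h3', h4', h5'⟩ := Finset.mem_filter.1 hp'
      obtain ⟨he', hg'⟩ := Finset.mem_product.1 hp'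
      simp only at h1 h2 h3 h4 h5 he hg hne h1' h2' h3' h4' h5' he' hg' hne'
      obtain ⟨k1, k2⟩ := Prod.mk.inj heq
      simp only at k1 k2
      have hne1 : e.1 ≠ g.1 := fun h => hne (same e he g hg h x h1 h2 h3 h4)
      have hx : x = x' := by
        by_contra hxx
        refine hne1 (two e g x x' hxx h5 ?_)
        simp only [ht] at h5' ⊢
        rw [k1, k2]; exact h5'
      subst hx
      rw [same e he e' he' k1 x h1 h2 h1' h2', same g hg g' hg' k2 x h3 h4 h3' h4']
  have hEc : L.card * (t - 1) ≤ E.card := by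
    have hmaps : ∀ e ∈ E, e.1 ∈ L := fun e he => (hE e he).1
    rw [Finset.card_eq_sum_card_fiberwise (f := Prod.fst) hmaps, ← smul_eq_mul]
    apply Finset.card_nsmul_le_sum
    intro l hl
    have ht' := hL l hl
    set T := (S.filter (fun p => p.2 = l.1 * p.1 + l.2)).image Prod.fst with hT
    have hTm : ∀ x, x ∈ T ↔ (x, l.1 * x + l.2) ∈ S := by
      intro x
      simp only [hT, Finset.mem_image, Finset.mem_filter]
      constructor
      · rintro ⟨⟨a, b⟩, ⟨h1, h2⟩, h3⟩
        simp only at h2 h3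
        subst h3 h2
        exact h1
      · intro h
        exact ⟨_, ⟨h, rfl⟩, rfl⟩
    have hTc : T.card = (S.filter (fun p => p.2 = l.1 * p.1 + l.2)).card := by
      apply Finset.card_image_of_injOn
      intro p hp q hq hpq
      have h1 := (Finset.mem_filter.1 hp).2
      have h2 := (Finset.mem_filter.1 hq).2
      refine Prod.ext hpq ?_
      rw [h1, h2, hpq]
    rw [← hTc] at ht'
    rcases T.eq_empty_or_nonempty with h0 | h0
    · rw [h0] at ht'; simp at ht'; subst ht'; simp
    have hsub : T.erase (T.max' h0) ⊆ (E.filter (fun e => e.1 = l)).image (fun e => e.2.1) := by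
      intro x hx
      obtain ⟨hx1, hx2⟩ := Finset.mem_erase.1 hx
      have hlt : x < T.max' h0 := lt_of_le_of_ne (T.le_max' x hx2) hx1
      have hN : (T.filter (fun y => x < y)).Nonempty :=
        ⟨T.max' h0, Finset.mem_filter.2 ⟨T.max'_mem h0, hlt⟩⟩
      obtain ⟨y, hy, hmin⟩ := Finset.exists_min_image _ id hN
      obtain ⟨hyT, hxy⟩ := Finset.mem_filter.1 hy
      rw [Finset.mem_image]
      refine ⟨(l, (x, y)), ?_, rfl⟩
      have hxS := (hTm x).1 hx2
      have hyS := (hTm y).1 hyT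
      refine Finset.mem_filter.2 ⟨Finset.mem_filter.2 ⟨?_, hxy, hxS, hyS, ?_⟩, rfl⟩
      · simp only [Finset.mem_product]
        exact ⟨hl, Finset.mem_image.2 ⟨_, hxS, rfl⟩, Finset.mem_image.2 ⟨_, hyS, rfl⟩⟩
      · rintro ⟨a, b⟩ hvS h1 h2 h3
        simp only [ht] at h1 h2 h3
        subst h3
        have := hmin a (Finset.mem_filter.2 ⟨(hTm a).2 hvS, h1⟩)
        simp only [id] at this
        linarith
    have h1 := Finset.card_le_card hsub
    have h2 : ((E.filter (fun e => e.1 = l)).image (fun e => e.2.1)).card ≤ _ :=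
      Finset.card_image_le
    rw [Finset.card_erase_of_mem (T.max'_mem h0)] at h1
    refine le_trans ?_ (h1.trans (h2.trans (le_of_eq ?_)))
    · omega
    · congr
  calc _ ≤ E.card * (j + 1) ^ 2 := Nat.mul_le_mul_right _ hEc
    _ ≤ _ := hcross
    _ ≤ _ := by gcongr

lemma arith (n L t : ℕ) (ht : 2 ≤ t)
    (h : ∀ j : ℕ, L * (t - 1) * (j + 1) ^ 2 ≤ 3 * n * (j + 1) ^ 3 + L ^ 2) (hn : 0 < n) :
    (L : ℝ) ≤ 2304 * ((n : ℝ) ^ 2 / (t : ℝ) ^ 3 + (n : ℝ) / (t : ℝ)) := by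
  have htR : (2 : ℝ) ≤ t := by exact_mod_cast ht
  have hnR : (0 : ℝ) < n := by exact_mod_cast hn
  have hLR : (0 : ℝ) ≤ L := by positivity
  have hcast : ((t - 1 : ℕ) : ℝ) = t - 1 := by
    rw [Nat.cast_sub (by omega)]; simp
  have hmt : (L : ℝ) * t / 2 ≤ L * (t - 1) := by nlinarith
  set m : ℝ := L * (t - 1) with hm
  by_cases hcase : m < 6 * n
  · have h1 : (L : ℝ) ≤ 12 * (n / t) := by
      rw [← mul_div_assoc, le_div_iff₀ (by linarith)]
      linarith
    have h2 : (0 : ℝ) ≤ (n : ℝ) ^ 2 / (t : ℝ) ^ 3 := by positivity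
    have h3 : (0 : ℝ) ≤ (n : ℝ) / t := by positivity
    linarith
  · push Not at hcase
    have hq : (1 : ℝ) ≤ m / (6 * n) := by rw [le_div_iff₀ (by positivity)]; linarith
    set q := m / (6 * n) with hqd
    have hmq : m = 6 * n * q := by rw [hqd]; field_simp
    obtain ⟨j, hj⟩ : ∃ j, ⌊q⌋₊ = j + 1 := Nat.exists_eq_succ_of_ne_zero (by
      have := Nat.le_floor (α := ℝ) (n := 1) (a := q) (by simpa using hq)
      omega)
    have hk1 : ((j + 1 : ℕ) : ℝ) ≤ q := hj ▸ Nat.floor_le (by linarith)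
    have hk2 : q < ((j + 1 : ℕ) : ℝ) + 1 := hj ▸ Nat.lt_floor_add_one q
    have hk3 : (1 : ℝ) ≤ ((j + 1 : ℕ) : ℝ) := by push_cast; linarith [(Nat.cast_nonneg j : (0:ℝ) ≤ j)]
    have hj' : (L : ℝ) * ((t - 1 : ℕ) : ℝ) * ((j + 1 : ℕ) : ℝ) ^ 2 ≤
        3 * n * ((j + 1 : ℕ) : ℝ) ^ 3 + (L : ℝ) ^ 2 := by exact_mod_cast h j
    rw [hcast, ← hm] at hj'
    generalize ((j + 1 : ℕ) : ℝ) = k at hk1 hk2 hk3 hj'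
    have hkq : q / 2 ≤ k := by linarith
    have h1 : m / 2 * k ^ 2 ≤ (L : ℝ) ^ 2 := by
      have : 3 * n * k ^ 3 ≤ m / 2 * k ^ 2 := by
        have : 3 * n * k ≤ m / 2 := by rw [hmq]; nlinarith
        nlinarith [sq_nonneg k]
      linarith
    have hm0 : 0 ≤ m := by rw [hmq]; positivity
    have h2 : m / 2 * (q / 2) ^ 2 ≤ (L : ℝ) ^ 2 := by
      refine le_trans ?_ h1
      gcongr
    have h3 : m ^ 3 ≤ 288 * n ^ 2 * (L : ℝ) ^ 2 := by
      have : m ^ 3 = 288 * n ^ 2 * (m / 2 * (q / 2) ^ 2) := by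
        rw [hqd]; field_simp; ring
      rw [this]; gcongr
    have h4 : ((L : ℝ) * t / 2) ^ 3 ≤ 288 * n ^ 2 * (L : ℝ) ^ 2 :=
      le_trans (by gcongr) h3
    have hLpos : (0 : ℝ) < L := by
      rcases hLR.lt_or_eq with h | h
      · exact h
      · rw [← h] at hm; simp at hm; rw [hm] at hcase; linarith
    have h5 : (L : ℝ) * t ^ 3 ≤ 2304 * n ^ 2 := by
      have : (L : ℝ) ^ 2 * (L * t ^ 3) ≤ L ^ 2 * (2304 * n ^ 2) := by nlinarith
      exact le_of_mul_le_mul_left this (by positivity)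
    have h6 : (L : ℝ) ≤ 2304 * ((n : ℝ) ^ 2 / (t : ℝ) ^ 3) := by
      rw [← mul_div_assoc, le_div_iff₀ (by positivity)]
      exact h5
    have h7 : (0 : ℝ) ≤ (n : ℝ) / t := by positivity
    linarith

abbrev Pl := EuclideanSpace ℝ (Fin 2)

lemma line_cases (p q : Pl) (hpq : p ≠ q) :
    (∃ c : ℝ, ∀ x : Pl, x ∈ affineSpan ℝ ({p, q} : Set Pl) ↔ x 0 = c) ∨
    (∃ l : ℝ × ℝ, ∀ x : Pl, x ∈ affineSpan ℝ ({p, q} : Set Pl) ↔ x 1 = l.1 * x 0 + l.2) := by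
  have hmem : ∀ x : Pl, x ∈ affineSpan ℝ ({p, q} : Set Pl) ↔
      ∃ r : ℝ, x 0 = p 0 + r * (q 0 - p 0) ∧ x 1 = p 1 + r * (q 1 - p 1) := by
    intro x
    have hx : x = (x - p) +ᵥ p := by simp
    rw [hx, _root_.vadd_left_mem_affineSpan_pair, ← hx]
    refine exists_congr fun r => ?_
    constructor
    · intro h
      have h0 := congrArg (fun v : Pl => v 0) h
      have h1 := congrArg (fun v : Pl => v 1) h
      simp at h0 h1
      constructor <;> linarith
    · rintro ⟨h0, h1⟩
      ext i
      fin_cases i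
      · simp [h0]
      · simp [h1]
  by_cases h : q 0 = p 0
  · left
    have h1 : q 1 - p 1 ≠ 0 := by
      intro h1
      apply hpq
      ext i
      fin_cases i
      · exact h.symm
      · simp; linarith
    refine ⟨p 0, fun x => ?_⟩
    rw [hmem]
    constructor
    · rintro ⟨r, h0, -⟩
      rw [h0, h]; ring
    · intro h0
      refine ⟨(x 1 - p 1) / (q 1 - p 1), ?_, ?_⟩
      · rw [h0, h]; ring
      · field_simp; ring
  · right
    have h1 : q 0 - p 0 ≠ 0 := sub_ne_zero.2 h
    refine ⟨((q 1 - p 1) / (q 0 - p 0), p 1 - (q 1 - p 1) / (q 0 - p 0) * p 0), fun x => ?_⟩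
    rw [hmem]
    constructor
    · rintro ⟨r, h0, h2⟩
      simp only
      rw [h0, h2]; field_simp; ring
    · intro h0
      refine ⟨(x 0 - p 0) / (q 0 - p 0), ?_, ?_⟩
      · field_simp; ring
      · rw [h0]; simp only; field_simp; ring

end ST

/-- Rich-lines corollary of the Szemerédi–Trotter theorem: there is an absolute constant
`C > 0` such that for every finite `S ⊆ ℝ²` and every integer `t ≥ 2`, the number of lines
containing at least `t` points of `S` is at most `C·(|S|²/t³ + |S|/t)`. -/
theorem szemeredi_trotter_rich_lines :
    ∃ C : ℝ, 0 < C ∧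
      ∀ (S : Finset (EuclideanSpace ℝ (Fin 2))) (t : ℕ), 2 ≤ t →
        (({ℓ : AffineSubspace ℝ (EuclideanSpace ℝ (Fin 2)) |
            (∃ p q : EuclideanSpace ℝ (Fin 2), p ≠ q ∧ ℓ = affineSpan ℝ ({p, q} : Set _)) ∧
            t ≤ ({x ∈ (S : Set (EuclideanSpace ℝ (Fin 2))) | x ∈ ℓ}).ncard}).ncard : ℝ) ≤
          C * ((S.card : ℝ) ^ 2 / (t : ℝ) ^ 3 + (S.card : ℝ) / (t : ℝ)) := by
  classical
  refine ⟨2305, by norm_num, ?_⟩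
  intro S t ht
  set 𝓛 := {ℓ : AffineSubspace ℝ (EuclideanSpace ℝ (Fin 2)) |
            (∃ p q : EuclideanSpace ℝ (Fin 2), p ≠ q ∧ ℓ = affineSpan ℝ ({p, q} : Set _)) ∧
            t ≤ ({x ∈ (S : Set (EuclideanSpace ℝ (Fin 2))) | x ∈ ℓ}).ncard} with h𝓛
  have htR : (2 : ℝ) ≤ t := by exact_mod_cast ht
  by_cases hfin : 𝓛.Finite
  swap
  · rw [Set.Infinite.ncard hfin]
    simp only [Nat.cast_zero]
    positivity
  let F := hfin.toFinset
  have hF : ∀ ℓ, ℓ ∈ F ↔ ℓ ∈ 𝓛 := fun ℓ => hfin.mem_toFinset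
  have hcard : 𝓛.ncard = F.card := Set.ncard_eq_toFinset_card 𝓛 hfin
  have hrich : ∀ ℓ ∈ F, t ≤ (S.filter (fun x => x ∈ ℓ)).card := by
    intro ℓ hℓ
    have := ((hF ℓ).1 hℓ).2
    rw [← Set.ncard_coe_finset]
    simpa using this
  rcases Nat.eq_zero_or_pos S.card with hS | hS
  · have : F = ∅ := by
      apply Finset.eq_empty_of_forall_notMem
      intro ℓ hℓ
      have h1 := hrich ℓ hℓ
      have h2 := Finset.card_filter_le S (fun x => x ∈ ℓ)
      omega
    rw [hcard, this]
    simp only [Finset.card_empty, Nat.cast_zero]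
    positivity
  let Vt : AffineSubspace ℝ ST.Pl → Prop := fun ℓ => ∃ c : ℝ, ∀ x : ST.Pl, x ∈ ℓ ↔ x 0 = c
  let FV := F.filter Vt
  let FN := F.filter (fun ℓ => ¬ Vt ℓ)
  have hsplit : FV.card + FN.card = F.card := Finset.card_filter_add_card_filter_not _
  -- vertical lines
  have hV : FV.card * t ≤ S.card := by
    have hex : ∀ ℓ : AffineSubspace ℝ ST.Pl, ∃ c : ℝ, ℓ ∈ FV → ∀ x : ST.Pl, x ∈ ℓ ↔ x 0 = c := by
      intro ℓ
      by_cases h : ℓ ∈ FV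
      · obtain ⟨c, hc⟩ := (Finset.mem_filter.1 h).2
        exact ⟨c, fun _ => hc⟩
      · exact ⟨0, fun h' => absurd h' h⟩
    choose c hc using hex
    have hinj : Set.InjOn c FV := by
      intro ℓ hℓ ℓ' hℓ' h
      ext x
      rw [hc ℓ hℓ, hc ℓ' hℓ', h]
    rw [← smul_eq_mul]
    calc FV.card • t ≤ ∑ ℓ ∈ FV, (S.filter (fun x => x ∈ ℓ)).card :=
          Finset.card_nsmul_le_sum _ _ _ (fun ℓ hℓ => hrich ℓ (Finset.mem_filter.1 hℓ).1)
      _ = (FV.biUnion (fun ℓ => S.filter (fun x => x ∈ ℓ))).card := by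
          rw [Finset.card_biUnion]
          intro ℓ hℓ ℓ' hℓ' hne
          change Disjoint (S.filter (fun x => x ∈ ℓ)) (S.filter (fun x => x ∈ ℓ'))
          rw [Finset.disjoint_left]
          intro x hx hx'
          apply hne
          apply hinj hℓ hℓ'
          rw [← (hc ℓ hℓ x).1 (Finset.mem_filter.1 hx).2, ← (hc ℓ' hℓ' x).1 (Finset.mem_filter.1 hx').2]
      _ ≤ S.card := by
          apply Finset.card_le_card
          intro x hx
          obtain ⟨ℓ, -, h⟩ := Finset.mem_biUnion.1 hx
          exact (Finset.mem_filter.1 h).1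
  -- non-vertical lines
  have hN : (FN.card : ℝ) ≤ 2304 * ((S.card : ℝ) ^ 2 / (t : ℝ) ^ 3 + (S.card : ℝ) / (t : ℝ)) := by
    have hex : ∀ ℓ : AffineSubspace ℝ ST.Pl, ∃ l : ℝ × ℝ, ℓ ∈ FN →
        ∀ x : ST.Pl, x ∈ ℓ ↔ x 1 = l.1 * x 0 + l.2 := by
      intro ℓ
      by_cases h : ℓ ∈ FN
      · obtain ⟨h1, h2⟩ := Finset.mem_filter.1 h
        obtain ⟨⟨p, q, hpq, rfl⟩, -⟩ := (hF ℓ).1 h1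
        rcases ST.line_cases p q hpq with h3 | ⟨l, hl⟩
        · exact absurd h3 h2
        · exact ⟨l, fun _ => hl⟩
      · exact ⟨0, fun h' => absurd h' h⟩
    choose c hc using hex
    have hinj : Set.InjOn c FN := by
      intro ℓ hℓ ℓ' hℓ' h
      ext x
      rw [hc ℓ hℓ, hc ℓ' hℓ', h]
    let φ : ST.Pl → ℝ × ℝ := fun x => (x 0, x 1)
    have hφ : Function.Injective φ := by
      intro x y h
      obtain ⟨h0, h1⟩ := Prod.mk.inj h
      ext i
      fin_cases i
      · exact h0
      · exact h1
    have hS' : (S.image φ).card = S.card := Finset.card_image_of_injective S hφ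
    have hL' : (FN.image c).card = FN.card := Finset.card_image_of_injOn hinj
    have := ST.rich (S.image φ) (FN.image c) t (by
      intro l hl
      obtain ⟨ℓ, hℓ, rfl⟩ := Finset.mem_image.1 hl
      refine (hrich ℓ (Finset.mem_filter.1 hℓ).1).trans ?_
      rw [← Finset.card_image_of_injective _ hφ]
      apply Finset.card_le_card
      intro y hy
      obtain ⟨x, hx, rfl⟩ := Finset.mem_image.1 hy
      obtain ⟨hx1, hx2⟩ := Finset.mem_filter.1 hx
      exact Finset.mem_filter.2 ⟨Finset.mem_image_of_mem _ hx1, (hc ℓ hℓ x).1 hx2⟩)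
    rw [hS', hL'] at this
    exact ST.arith S.card FN.card t ht this hS
  have hV' : (FV.card : ℝ) ≤ S.card / t := by
    rw [le_div_iff₀ (by linarith)]
    exact_mod_cast hV
  have hpos : (0 : ℝ) ≤ (S.card : ℝ) ^ 2 / (t : ℝ) ^ 3 := by positivity
  rw [hcard, ← hsplit]
  push_cast
  linarith
end
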